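/- arXiv:2503.04532 — 4 statements merged into one kernel-verified Lean document; each statement's English description precedes it below -/
import Mathlib

section
/- The family of symmetric products of closed non-orientable surfaces is LS-logarithmic: for every integer k ≥ 1 and all pairs of integers (n_1,g_1),…,(n_k,g_k) with n_j ≥ 1 and g_j ≥ 1, one has cat(SP^{n_1}(N_{g_1}) × ⋯ × SP^{n_k}(N_{g_k})) = Σ_{j=1}^k cat(SP^{n_j}(N_{g_j})). In particular, cat((SP^n(N_g))^m) = m·cat(SP^n(N_g)) = 2mn for all m, n, g ≥ 1. -/
open scoped unitInterval Topology
open MeasureTheory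
noncomputable section

/-- The `n`-th symmetric product relation on `X^n`: two tuples are related iff they
differ by a permutation of coordinates. -/
def spRel (n : ℕ) (X : Type*) (s t : Fin n → X) : Prop :=
  ∃ e : Equiv.Perm (Fin n), s ∘ e = t

/-- The `n`-th symmetric product of a topological space `X`: the quotient of the
product space `X^n` by the permutation action of the symmetric group `S_n`,
equipped with the quotient topology. -/
def SP (n : ℕ) (X : Type*) [TopologicalSpace X] : Type _ :=
  Quot (spRel n X)

instance (n : ℕ) (X : Type*) [TopologicalSpace X] : TopologicalSpace (SP n X) :=
  inferInstanceAs (TopologicalSpace (Quot (spRel n X)))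

/-- The inclusion of a subset, as a continuous map. -/
def inclMap {X : Type*} [TopologicalSpace X] (U : Set X) : C(U, X) :=
  ⟨Subtype.val, continuous_subtype_val⟩

/-- `catLE X r` : `X` is covered by `r+1` open sets, each of whose inclusion maps
into `X` is null-homotopic. -/
def catLE (X : Type*) [TopologicalSpace X] (r : ℕ) : Prop :=
  ∃ U : Fin (r + 1) → Set X, (∀ i, IsOpen (U i)) ∧ (⋃ i, U i) = Set.univ ∧
    ∀ i, (inclMap (U i)).Nullhomotopic

/-- The Lusternik–Schnirelmann category of `X`, valued in `ℕ∞`. -/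
def LScat (X : Type*) [TopologicalSpace X] : ℕ∞ :=
  sInf {c : ℕ∞ | ∃ r : ℕ, catLE X r ∧ c = r}

/-- The closed unit disc (a topological model for a polygon). -/
abbrev Disc : Type := {z : ℂ // ‖z‖ ≤ 1}

/-- The point at parameter `t ∈ [0,1]` on the `k`-th of the `N` boundary edges of an
`N`-gon, realized as the closed unit disc whose boundary circle is divided into `N` arcs. -/
def polyBP (N k : ℕ) (t : ℝ) : ℂ :=
  Complex.exp (2 * Real.pi * Complex.I * (((k : ℝ) + t) / (N : ℝ)))

/-- Boundary identifications of the `2g`-gon for the edge word `e₁²e₂²⋯e_g²` :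
the point at parameter `t` on edge `2j` is glued to the point at parameter `t`
on edge `2j+1`. -/
def nonorientRel (g : ℕ) (z w : Disc) : Prop :=
  ∃ j : Fin g, ∃ t : ℝ, 0 ≤ t ∧ t ≤ 1 ∧
    (z : ℂ) = polyBP (2 * g) (2 * (j : ℕ)) t ∧
    (w : ℂ) = polyBP (2 * g) (2 * (j : ℕ) + 1) t

/-- The closed non-orientable surface of genus `g ≥ 1` : the quotient of the `2g`-gon
by the boundary edge word `e₁²e₂²⋯e_g²`. -/
def Ng (g : ℕ) : Type := Quot (nonorientRel g)

instance (g : ℕ) : TopologicalSpace (Ng g) :=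
  inferInstanceAs (TopologicalSpace (Quot (nonorientRel g)))

section
/-- Polar coordinates on the disc. -/
def cylD (c : I × I) : Disc :=
  ⟨((c.1 : ℝ) : ℂ) * Complex.exp (((2 * Real.pi * (c.2 : ℝ) : ℝ) : ℂ) * Complex.I), by
    rw [norm_mul, Complex.norm_exp_ofReal_mul_I, mul_one, Complex.norm_real,
      Real.norm_of_nonneg c.1.2.1]
    exact c.1.2.2⟩

/-- Polar coordinates on the surface. -/
def qm (g : ℕ) (c : I × I) : Ng g := Quot.mk _ (cylD c)

lemma continuous_cylD : Continuous cylD := by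
  unfold cylD
  fun_prop

lemma continuous_qm (g : ℕ) : Continuous (qm g) :=
  continuous_quot_mk.comp continuous_cylD

lemma cylD_surj : Function.Surjective cylD := by
  intro z
  have hz : ‖(z : ℂ)‖ ≤ 1 := z.2
  set a := Complex.arg (z : ℂ) / (2 * Real.pi) with ha
  have hpi := Real.pi_pos
  refine ⟨(⟨‖(z : ℂ)‖, norm_nonneg _, hz⟩, ⟨Int.fract a, Int.fract_nonneg _, (Int.fract_lt_one _).le⟩), ?_⟩
  apply Subtype.ext
  simp only [cylD]
  have h1 : Complex.exp (((2 * Real.pi * Int.fract a : ℝ) : ℂ) * Complex.I)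
      = Complex.exp ((Complex.arg (z : ℂ) : ℂ) * Complex.I) := by
    rw [Complex.exp_eq_exp_iff_exists_int]
    refine ⟨-⌊a⌋, ?_⟩
    have h2 : (2 * Real.pi * Int.fract a : ℝ) = Complex.arg (z : ℂ) + (-⌊a⌋ : ℤ) * (2 * Real.pi) := by
      rw [Int.fract]
      have : Complex.arg (z : ℂ) = a * (2 * Real.pi) := by rw [ha]; field_simp
      rw [this]; push_cast; ring
    rw [h2]; push_cast; ring
  rw [h1, Complex.norm_mul_exp_arg_mul_I]

lemma qm_surj (g : ℕ) : Function.Surjective (qm g) := by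
  intro x
  obtain ⟨z, rfl⟩ := Quot.exists_rep x
  obtain ⟨c, rfl⟩ := cylD_surj z
  exact ⟨c, rfl⟩

lemma cylD_norm (c : I × I) : ‖(cylD c : ℂ)‖ = c.1 := by
  simp only [cylD]
  rw [norm_mul, Complex.norm_exp_ofReal_mul_I, mul_one, Complex.norm_real,
      Real.norm_of_nonneg c.1.2.1]

lemma exp_eq_int {x y : ℝ} (h : Complex.exp (((2 * Real.pi * x : ℝ) : ℂ) * Complex.I)
    = Complex.exp (((2 * Real.pi * y : ℝ) : ℂ) * Complex.I)) : ∃ n : ℤ, x = y + n := by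
  rw [Complex.exp_eq_exp_iff_exists_int] at h
  obtain ⟨n, hn⟩ := h
  refine ⟨n, ?_⟩
  have hI := Complex.I_ne_zero
  have h3 : ((2 * Real.pi * x : ℝ) : ℂ) = ((2 * Real.pi * (y + n) : ℝ) : ℂ) := by
    apply mul_right_cancel₀ hI
    rw [hn]; push_cast; ring
  have h4 := Complex.ofReal_injective h3
  have hpi := Real.pi_pos
  have : (2 * Real.pi) ≠ 0 := by positivity
  exact mul_left_cancel₀ this h4

lemma exp_int {x y : ℝ} (n : ℤ) (h : x = y + n) : Complex.exp (((2 * Real.pi * x : ℝ) : ℂ) * Complex.I)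
    = Complex.exp (((2 * Real.pi * y : ℝ) : ℂ) * Complex.I) := by
  rw [Complex.exp_eq_exp_iff_exists_int]
  exact ⟨n, by subst h; push_cast; ring⟩

lemma cylD_eq {c c' : I × I} (h : cylD c = cylD c') : c.1 = c'.1 ∧
    (c.1 = 0 ∨ c.2 = c'.2 ∨ (c.2 = 0 ∧ c'.2 = 1) ∨ (c.2 = 1 ∧ c'.2 = 0)) := by
  have h1 : c.1 = c'.1 := by
    apply Subtype.ext
    rw [← cylD_norm, ← cylD_norm, h]
  refine ⟨h1, ?_⟩
  by_cases h0 : c.1 = 0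
  · exact Or.inl h0
  right
  have h2 := congrArg Subtype.val h
  simp only [cylD] at h2
  rw [← h1] at h2
  have hne : ((c.1 : ℝ) : ℂ) ≠ 0 := by
    intro hh
    apply h0
    apply Subtype.ext
    exact_mod_cast hh
  obtain ⟨n, hn⟩ := exp_eq_int (mul_left_cancel₀ hne h2)
  have a1 := c.2.2.1
  have a2 := c.2.2.2
  have b1 := c'.2.2.1
  have b2 := c'.2.2.2
  have n1 : (n : ℝ) ≤ 1 := by linarith
  have n2 : (-1 : ℝ) ≤ n := by linarith
  have n1' : n ≤ 1 := by exact_mod_cast n1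
  have n2' : -1 ≤ n := by exact_mod_cast n2
  obtain rfl | rfl | rfl : n = -1 ∨ n = 0 ∨ n = 1 := by omega
  · right; left
    push_cast at hn
    constructor <;> apply Subtype.ext <;> simp only [Set.Icc.coe_zero, Set.Icc.coe_one] <;> linarith
  · left
    apply Subtype.ext
    simpa using hn
  · right; right
    push_cast at hn
    constructor <;> apply Subtype.ext <;> simp only [Set.Icc.coe_zero, Set.Icc.coe_one] <;> linarith

lemma qm_zero (g : ℕ) (s s' : I) : qm g (0, s) = qm g (0, s') := by
  unfold qm
  congr 1
  apply Subtype.ext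
  simp [cylD]

lemma qm_wrap (g : ℕ) (r : I) : qm g (r, 0) = qm g (r, 1) := by
  unfold qm
  congr 1
  apply Subtype.ext
  simp only [cylD]
  rw [exp_int (x := ((1 : I) : ℝ)) (y := ((0 : I) : ℝ)) 1 (by simp)]

lemma polyBP_eq (g k : ℕ) (hg : 1 ≤ g) (t : ℝ) (c : I × I) (h1 : c.1 = 1)
    (h2 : (c.2 : ℝ) * (2 * g) = k + t) : polyBP (2 * g) k t = (cylD c : ℂ) := by
  have hg' : (0 : ℝ) < g := by exact_mod_cast hg
  have h3 : (c.2 : ℝ) = (k + t) / (2 * g) := by field_simp; linarith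
  simp only [cylD, polyBP, h1, h3]
  push_cast
  rw [one_mul]
  congr 1
  ring

lemma qm_glue (g : ℕ) (j : ℕ) (hj : j < g) (t : ℝ) (h0 : 0 ≤ t) (h1 : t ≤ 1) (s s' : I)
    (hs : (s : ℝ) * (2 * g) = 2 * j + t) (hs' : (s' : ℝ) * (2 * g) = 2 * j + 1 + t) :
    qm g (1, s) = qm g (1, s') := by
  apply Quot.sound
  refine ⟨⟨j, hj⟩, t, h0, h1, ?_, ?_⟩
  · rw [polyBP_eq g (2 * j) (by omega) t (1, s) rfl (by push_cast; linarith)]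
  · rw [polyBP_eq g (2 * j + 1) (by omega) t (1, s') rfl (by push_cast; linarith)]

theorem qm_lift (g : ℕ) {Z : Type*} (f : I × I → Z)
    (f0 : ∀ s s', f (0, s) = f (0, s')) (fw : ∀ r, f (r, 0) = f (r, 1))
    (fg : ∀ (j : ℕ), j < g → ∀ (t : ℝ), 0 ≤ t → t ≤ 1 → ∀ s s' : I,
      (s : ℝ) * (2 * g) = 2 * j + t → (s' : ℝ) * (2 * g) = 2 * j + 1 + t →
      f (1, s) = f (1, s')) : ∃ F : Ng g → Z, ∀ c, F (qm g c) = f c := by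
  have key : ∀ c c', cylD c = cylD c' → f c = f c' := by
    rintro ⟨r, s⟩ ⟨r', s'⟩ h
    obtain ⟨h1, h2⟩ := cylD_eq h
    simp only at h1 h2
    subst h1
    rcases h2 with rfl | rfl | ⟨rfl, rfl⟩ | ⟨rfl, rfl⟩
    · exact f0 _ _
    · rfl
    · exact fw _
    · exact (fw _).symm
  let F0 : Disc → Z := fun z => f (cylD_surj z).choose
  have hF0 : ∀ c, F0 (cylD c) = f c := fun c => key _ _ (cylD_surj (cylD c)).choose_spec
  refine ⟨Quot.lift F0 ?_, fun c => hF0 c⟩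
  rintro z w ⟨j, t, h0, h1, hz, hw⟩
  have hg : 1 ≤ g := by have := j.2; omega
  have hg' : (0 : ℝ) < g := by exact_mod_cast hg
  have hjg : ((j : ℕ) : ℝ) + 1 ≤ g := by exact_mod_cast j.2
  have hj0 : (0 : ℝ) ≤ ((j : ℕ) : ℝ) := by positivity
  let s : I := ⟨(2 * (j : ℕ) + t) / (2 * g), by positivity, by
    rw [div_le_one (by positivity)]; linarith⟩
  let s' : I := ⟨(2 * (j : ℕ) + 1 + t) / (2 * g), by positivity, by
    rw [div_le_one (by positivity)]; linarith⟩
  have hs : (s : ℝ) * (2 * g) = 2 * (j : ℕ) + t := by simp only [s]; field_simp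
  have hs' : (s' : ℝ) * (2 * g) = 2 * (j : ℕ) + 1 + t := by simp only [s']; field_simp
  have ez : z = cylD (1, s) := by
    apply Subtype.ext
    rw [hz, polyBP_eq g (2 * j) hg t (1, s) rfl (by push_cast; linarith)]
  have ew : w = cylD (1, s') := by
    apply Subtype.ext
    rw [hw, polyBP_eq g (2 * j + 1) hg t (1, s') rfl (by push_cast; linarith)]
  rw [ez, ew, hF0, hF0]
  exact fg j j.2 t h0 h1 s s' hs hs'

end

section
open Topology

lemma qm_vertex (g : ℕ) (hg : 1 ≤ g) : ∀ (k : ℕ), k ≤ 2 * g → ∀ s : I, (s : ℝ) * (2 * g) = k →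
    qm g (1, s) = qm g (1, 0) := by
  have hg' : (0 : ℝ) < g := by exact_mod_cast hg
  intro k
  induction k with
  | zero =>
    intro _ s hs
    have : s = 0 := by
      apply Subtype.ext
      simp only [Set.Icc.coe_zero]
      push_cast at hs
      rcases mul_eq_zero.mp hs with h | h
      · exact h
      · linarith
    rw [this]
  | succ k ih =>
    intro hk s hs
    have hk' : (k : ℝ) + 1 ≤ 2 * g := by exact_mod_cast hk
    let s' : I := ⟨k / (2 * g), by positivity, by rw [div_le_one (by positivity)]; linarith⟩
    have hs' : (s' : ℝ) * (2 * g) = k := by simp only [s']; field_simp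
    rw [← ih (by omega) s' hs']
    symm
    rcases Nat.even_or_odd' k with ⟨j, rfl | rfl⟩
    · refine qm_glue g j (by omega) 0 le_rfl zero_le_one s' s ?_ ?_
      · rw [hs']; push_cast; ring
      · rw [hs]; push_cast; ring
    · refine qm_glue g j (by omega) 1 zero_le_one le_rfl s' s ?_ ?_
      · rw [hs']; push_cast; ring
      · rw [hs]; push_cast; ring

/-- clamping -/
def clampR (j : ℕ) (x : ℝ) : ℝ := max (2 * j) (min x (2 * j + 2))

/-- A separating family of functions. -/
def sepF (g : ℕ) (c : I × I) : ℝ × ℂ × (Fin g → ℂ) :=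
  ((c.1 : ℝ), ((1 - (c.1 : ℝ)) * (c.1 : ℝ) : ℝ) *
      Complex.exp (((2 * Real.pi * (c.2 : ℝ) : ℝ) : ℂ) * Complex.I),
    fun j => ((c.1 : ℝ) : ℂ) *
      (Complex.exp (((2 * Real.pi * clampR j ((c.2 : ℝ) * (2 * g)) : ℝ) : ℂ) * Complex.I) - 1))

lemma continuous_sepF (g : ℕ) : Continuous (sepF g) := by
  unfold sepF clampR
  fun_prop

lemma clampR_int (j : ℕ) (m : ℤ) : ∃ m' : ℤ, clampR j (m : ℝ) = m' :=
  ⟨max (2 * j) (min m (2 * j + 2)), by unfold clampR; push_cast; rfl⟩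

lemma exp_one_of_int {x : ℝ} (m : ℤ) (h : x = m) :
    Complex.exp (((2 * Real.pi * x : ℝ) : ℂ) * Complex.I) = 1 := by
  rw [exp_int (y := 0) m (by rw [h]; simp)]
  simp

lemma clampR_self {j : ℕ} {x : ℝ} (h1 : 2 * j ≤ x) (h2 : x ≤ 2 * j + 2) : clampR j x = x := by
  unfold clampR
  rw [min_eq_left h2, max_eq_right h1]

lemma exists_arc (g : ℕ) (hg : 1 ≤ g) (x : ℝ) (h0 : 0 ≤ x) (h1 : x ≤ 2 * g) :
    ∃ j : ℕ, j < g ∧ 2 * j ≤ x ∧ x ≤ 2 * j + 2 := by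
  by_cases h : x = 2 * g
  · refine ⟨g - 1, by omega, ?_, ?_⟩
    · rw [h]; push_cast [hg]; linarith
    · rw [h]; push_cast [hg]; linarith
  · have h1' : x < 2 * g := lt_of_le_of_ne h1 h
    refine ⟨⌊x / 2⌋₊, ?_, ?_, ?_⟩
    · rw [Nat.floor_lt (by positivity)]; linarith
    · have := Nat.floor_le (show 0 ≤ x / 2 by positivity); linarith
    · have := Nat.lt_floor_add_one (x / 2); linarith

lemma sepF_inj (g : ℕ) (hg : 1 ≤ g) (c c' : I × I) (h : sepF g c = sepF g c') :
    qm g c = qm g c' := by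
  have hg' : (0 : ℝ) < g := by exact_mod_cast hg
  obtain ⟨r, s⟩ := c
  obtain ⟨r', s'⟩ := c'
  simp only [sepF, Prod.mk.injEq] at h
  obtain ⟨h1, h2, h3⟩ := h
  have hr : r = r' := Subtype.ext h1
  subst hr
  by_cases r0 : r = 0
  · subst r0; exact qm_zero g _ _
  have r0' : (r : ℝ) ≠ 0 := fun hh => r0 (Subtype.ext hh)
  by_cases r1 : r = 1
  swap
  · have r1' : (r : ℝ) ≠ 1 := fun hh => r1 (Subtype.ext hh)
    have hne : (((1 - (r : ℝ)) * (r : ℝ) : ℝ) : ℂ) ≠ 0 := by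
      rw [Complex.ofReal_ne_zero]
      exact mul_ne_zero (sub_ne_zero.mpr r1'.symm) r0'
    have h4 := mul_left_cancel₀ hne h2
    unfold qm
    congr 1
    apply Subtype.ext
    simp only [cylD]
    rw [h4]
  subst r1
  set x := (s : ℝ) * (2 * g) with hx
  set x' := (s' : ℝ) * (2 * g) with hx'
  have x0 : 0 ≤ x := mul_nonneg s.2.1 (by positivity)
  have x0' : 0 ≤ x' := mul_nonneg s'.2.1 (by positivity)
  have x1 : x ≤ 2 * g := by
    have := s.2.2
    rw [hx]; nlinarith
  have x1' : x' ≤ 2 * g := by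
    have := s'.2.2
    rw [hx']; nlinarith
  have h5 : ∀ j : ℕ, j < g → ∃ n : ℤ, clampR j x = clampR j x' + n := by
    intro j hj
    have := congrFun h3 ⟨j, hj⟩
    simp only [Set.Icc.coe_one, Complex.ofReal_one, one_mul] at this
    exact exp_eq_int (sub_left_injective this)
  by_cases hxi : ∃ m : ℤ, x = m
  · obtain ⟨m, hm⟩ := hxi
    have : ∃ m' : ℤ, x' = m' := by
      obtain ⟨j, hj, ha, hb⟩ := exists_arc g hg x' x0' x1'
      obtain ⟨n, hn⟩ := h5 j hj
      rw [clampR_self ha hb, hm] at hn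
      obtain ⟨m', hm'⟩ := clampR_int j m
      refine ⟨m' - n, ?_⟩
      push_cast
      linarith
    obtain ⟨m', hm'⟩ := this
    have nat : ∀ (y : ℝ) (m : ℤ), 0 ≤ y → y ≤ 2 * g → y = m → ∃ k : ℕ, k ≤ 2 * g ∧ y = k := by
      intro y m hy0 hy1 hy
      have : 0 ≤ m := by rw [hy] at hy0; exact_mod_cast hy0
      lift m to ℕ using this
      refine ⟨m, ?_, by simpa using hy⟩
      rw [hy] at hy1; exact_mod_cast hy1
    obtain ⟨k, hk, hk'⟩ := nat x m x0 x1 hm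
    obtain ⟨l, hl, hl'⟩ := nat x' m' x0' x1' hm'
    rw [qm_vertex g hg k hk s (by rw [← hx, hk']), qm_vertex g hg l hl s' (by rw [← hx', hl'])]
  · obtain ⟨j, hj, ha, hb⟩ := exists_arc g hg x x0 x1
    obtain ⟨n, hn⟩ := h5 j hj
    rw [clampR_self ha hb] at hn
    have hni : ∀ m : ℤ, clampR j x' ≠ m := by
      intro m hm
      exact hxi ⟨m + n, by rw [hn, hm]; push_cast; ring⟩
    have e1 : 2 * (j : ℝ) < x' := by
      by_contra hc
      push Not at hc
      apply hni (2 * j)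
      unfold clampR
      rw [max_eq_left (le_trans (min_le_left _ _) hc)]
      push_cast; rfl
    have e2 : x' < 2 * j + 2 := by
      by_contra hc
      push Not at hc
      apply hni (2 * j + 2)
      unfold clampR
      rw [min_eq_right hc, max_eq_right (by linarith)]
      push_cast; rfl
    rw [clampR_self e1.le e2.le] at hn
    have f1 : 2 * (j : ℝ) < x := lt_of_le_of_ne ha (fun hh => hxi ⟨2 * j, by rw [← hh]; push_cast; rfl⟩)
    have f2 : x < 2 * (j : ℝ) + 2 := lt_of_le_of_ne hb (fun hh => hxi ⟨2 * j + 2, by rw [hh]; push_cast; rfl⟩)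
    have n1 : (n : ℝ) < 2 := by linarith
    have n2 : (-2 : ℝ) < n := by linarith
    have n1' : n < 2 := by exact_mod_cast n1
    have n2' : -2 < n := by exact_mod_cast n2
    obtain rfl | rfl | rfl : n = -1 ∨ n = 0 ∨ n = 1 := by omega
    · push_cast at hn
      exact qm_glue g j hj (x - 2 * j) (by linarith) (by linarith) s s' (by linarith) (by linarith)
    · have : s = s' := by
        apply Subtype.ext
        push_cast at hn
        rw [add_zero, hx, hx'] at hn
        exact mul_right_cancel₀ (by positivity) hn
      rw [this]
    · push_cast at hn
      exact (qm_glue g j hj (x' - 2 * j) (by linarith) (by linarith) s' s (by linarith) (by linarith)).symm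

lemma isQuotientMap_qm' (g : ℕ) : IsQuotientMap (qm g) := by
  refine IsQuotientMap.comp (g := Quot.mk (nonorientRel g)) isQuotientMap_quot_mk ?_
  exact IsClosedMap.isQuotientMap continuous_cylD.isClosedMap continuous_cylD cylD_surj

theorem t2_Ng (g : ℕ) (hg : 1 ≤ g) : T2Space (Ng g) := by
  have hg' : (0 : ℝ) < g := by exact_mod_cast hg
  obtain ⟨F, hF⟩ := qm_lift g (sepF g) (by intro s s'; simp [sepF])
    (by
      intro r
      simp only [sepF, Prod.mk.injEq, true_and]
      constructor
      · rw [exp_int (x := ((1 : I) : ℝ)) (y := ((0 : I) : ℝ)) 1 (by simp)]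
      · funext j
        obtain ⟨m, hm⟩ := clampR_int j 0
        obtain ⟨m', hm'⟩ := clampR_int j (2 * g)
        rw [exp_one_of_int m (by rw [← hm]; simp), exp_one_of_int m' (by rw [← hm']; simp)])
    (by
      intro j hj t h0 h1 s s' hs hs'
      have i1 : Complex.exp (((2 * Real.pi * (s : ℝ) : ℝ) : ℂ) * Complex.I) = Complex.exp (((2 * Real.pi * (s : ℝ) : ℝ) : ℂ) * Complex.I) := rfl
      simp only [sepF, Prod.mk.injEq, true_and]
      constructor
      · simp
      · funext i
        rw [hs, hs']
        congr 2
        rcases lt_trichotomy (i : ℕ) j with h | h | h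
        · have h' : ((i : ℕ) : ℝ) + 1 ≤ j := by exact_mod_cast h
          have e : ∀ y : ℝ, 2 * (j : ℝ) ≤ y → clampR i y = 2 * (i : ℕ) + 2 := by
            intro y hy
            unfold clampR
            rw [min_eq_right (by linarith), max_eq_right (by linarith)]
          rw [e _ (by linarith), e _ (by linarith)]
        · rw [h, clampR_self (by linarith) (by linarith), clampR_self (by linarith) (by linarith)]
          exact (exp_int 1 (by push_cast; ring)).symm
        · have h' : (j : ℝ) + 1 ≤ ((i : ℕ) : ℝ) := by exact_mod_cast h
          have e : ∀ y : ℝ, y ≤ 2 * (j : ℝ) + 2 → clampR i y = 2 * (i : ℕ) := by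
            intro y hy
            unfold clampR
            rw [max_eq_left]
            exact le_trans (min_le_left _ _) (by linarith)
          rw [e _ (by linarith), e _ (by linarith)])
  refine T2Space.of_injective_continuous (f := F) ?_ ?_
  · intro x y hxy
    obtain ⟨c, rfl⟩ := qm_surj g x
    obtain ⟨c', rfl⟩ := qm_surj g y
    rw [hF, hF] at hxy
    exact sepF_inj g hg c c' hxy
  · rw [(isQuotientMap_qm' g).continuous_iff]
    have : F ∘ qm g = sepF g := funext hF
    rw [this]
    exact continuous_sepF g

lemma spRel_equiv (n : ℕ) (X : Type*) : Equivalence (spRel n X) where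
  refl s := ⟨1, rfl⟩
  symm := by
    rintro s t ⟨e, rfl⟩
    refine ⟨e⁻¹, ?_⟩
    ext i
    simp
  trans := by
    rintro s t u ⟨e, rfl⟩ ⟨f, rfl⟩
    exact ⟨e * f, rfl⟩

lemma sp_mk_eq {n : ℕ} {X : Type*} [TopologicalSpace X] {s t : Fin n → X} :
    (Quot.mk (spRel n X) s : SP n X) = Quot.mk (spRel n X) t ↔ ∃ e : Equiv.Perm (Fin n), s ∘ e = t := by
  rw [Quot.eq, (spRel_equiv n X).eqvGen_iff]
  rfl

theorem t2_SP (n : ℕ) (X : Type*) [TopologicalSpace X] [T2Space X] : T2Space (SP n X) := by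
  let π : (Fin n → X) → SP n X := Quot.mk (spRel n X)
  have hq : IsQuotientMap π := isQuotientMap_quot_mk
  have ho : IsOpenMap π := by
    intro U hU
    rw [← hq.isOpen_preimage]
    have : π ⁻¹' (π '' U) = ⋃ e : Equiv.Perm (Fin n), (fun s : Fin n → X => s ∘ e) ⁻¹' U := by
      ext t
      simp only [Set.mem_preimage, Set.mem_image, Set.mem_iUnion]
      constructor
      · rintro ⟨s, hs, h⟩
        obtain ⟨e, he⟩ := sp_mk_eq.mp h.symm
        exact ⟨e, he ▸ hs⟩
      · rintro ⟨e, he⟩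
        exact ⟨_, he, (sp_mk_eq.mpr ⟨e, rfl⟩).symm⟩
    rw [this]
    refine isOpen_iUnion fun e => hU.preimage ?_
    exact continuous_pi fun i => continuous_apply _
  rw [t2Space_iff_of_isOpenQuotientMap ⟨hq.surjective, hq.continuous, ho⟩]
  have : {q : (Fin n → X) × (Fin n → X) | π q.1 = π q.2} =
      ⋃ e : Equiv.Perm (Fin n), {q | q.1 ∘ e = q.2} := by
    ext q
    simp only [Set.mem_ofPred_eq, Set.mem_iUnion]
    exact sp_mk_eq
  rw [this]
  refine isClosed_iUnion_of_finite fun e => ?_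
  refine isClosed_eq ?_ continuous_snd
  exact continuous_pi fun i => (continuous_apply _).comp continuous_fst

variable {k : ℕ}

/-- index set of all points -/
abbrev AIdx (n : Fin k → ℕ) : Type := Σ j : Fin k, Fin (n j)

/-- The big product. -/
abbrev XX (n g : Fin k → ℕ) : Type := ∀ j : Fin k, SP (n j) (Ng (g j))

/-- The projection from polar coordinates. -/
def pp (n g : Fin k → ℕ) (z : AIdx n → I × I) : XX n g :=
  fun j => Quot.mk _ (fun i => qm (g j) (z ⟨j, i⟩))

lemma continuous_pp (n g : Fin k → ℕ) : Continuous (pp n g) := by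
  refine continuous_pi fun j => ?_
  refine continuous_quot_mk.comp ?_
  exact continuous_pi fun i => (continuous_qm _).comp (continuous_apply _)

lemma pp_surj (n g : Fin k → ℕ) : Function.Surjective (pp n g) := by
  intro x
  choose s hs using fun j => Quot.exists_rep (x j)
  choose c hc using fun (a : AIdx n) => qm_surj (g a.1) (s a.1 a.2)
  refine ⟨c, ?_⟩
  funext j
  rw [← hs j]
  unfold pp
  congr 1
  funext i
  exact hc ⟨j, i⟩

lemma pp_eq {n g : Fin k → ℕ} {z z' : AIdx n → I × I} : pp n g z = pp n g z' ↔
    ∃ e : ∀ j, Equiv.Perm (Fin (n j)), ∀ j i, qm (g j) (z ⟨j, e j i⟩) = qm (g j) (z' ⟨j, i⟩) := by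
  constructor
  · intro h
    choose e he using fun j => sp_mk_eq.mp (congrFun h j)
    exact ⟨e, fun j i => congrFun (he j) i⟩
  · rintro ⟨e, he⟩
    exact funext fun j => sp_mk_eq.mpr ⟨e j, funext fun i => he j i⟩

theorem t2_XX (n g : Fin k → ℕ) (hg : ∀ j, 1 ≤ g j) : T2Space (XX n g) := by
  have : ∀ j, T2Space (SP (n j) (Ng (g j))) := fun j => by
    have := t2_Ng (g j) (hg j)
    exact t2_SP _ _
  infer_instance

lemma isQuotientMap_pp (n g : Fin k → ℕ) (hg : ∀ j, 1 ≤ g j) : IsQuotientMap (pp n g) := by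
  have := t2_XX n g hg
  exact (continuous_pp n g).isClosedMap.isQuotientMap (continuous_pp n g) (pp_surj n g)

lemma isQuotientMap_ppI (n g : Fin k → ℕ) (hg : ∀ j, 1 ≤ g j) :
    IsQuotientMap (fun x : I × (AIdx n → I × I) => (x.1, pp n g x.2)) := by
  have := t2_XX n g hg
  have hc : Continuous (fun x : I × (AIdx n → I × I) => (x.1, pp n g x.2)) :=
    continuous_fst.prodMk ((continuous_pp n g).comp continuous_snd)
  refine hc.isClosedMap.isQuotientMap hc ?_
  rintro ⟨t, x⟩
  obtain ⟨z, rfl⟩ := pp_surj n g x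
  exact ⟨(t, z), rfl⟩

end

section
open Topology

/-- distance to the boundary -/
def alF (c : I × I) : ℝ := 1 - c.1

/-- distance to the vertices -/
def wdF (g : ℕ) (c : I × I) : ℝ := ‖(((c.2 : ℝ) * (2 * g) : ℝ) : UnitAddCircle)‖

def beF (g : ℕ) (c : I × I) : ℝ := max (alF c) (wdF g c)

lemma continuous_alF : Continuous alF := by unfold alF; fun_prop

lemma continuous_wdF (g : ℕ) : Continuous (wdF g) := by
  unfold wdF
  refine continuous_norm.comp ?_
  refine (AddCircle.continuous_mk' (1 : ℝ)).comp ?_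
  fun_prop

lemma continuous_beF (g : ℕ) : Continuous (beF g) := continuous_alF.max (continuous_wdF g)

lemma uac_add_int (x : ℝ) (m : ℤ) : ((x + m : ℝ) : UnitAddCircle) = (x : UnitAddCircle) := by
  rw [AddCircle.coe_add]
  have : ((m : ℝ) : UnitAddCircle) = 0 := by
    rw [AddCircle.coe_eq_zero_iff]
    exact ⟨m, by simp⟩
  rw [this, add_zero]

lemma uac_int (m : ℤ) : ‖((m : ℝ) : UnitAddCircle)‖ = 0 := by
  have := uac_add_int 0 m
  rw [zero_add] at this
  rw [this]; simp

lemma uac_half : ‖((1 / 2 : ℝ) : UnitAddCircle)‖ = 1 / 2 := by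
  rw [UnitAddCircle.norm_eq]
  rw [round_eq]
  norm_num

lemma wdF_le (g : ℕ) (c : I × I) : wdF g c ≤ 1 / 2 := by
  unfold wdF
  rw [UnitAddCircle.norm_eq]
  exact abs_sub_round _

/-- The class of a point. -/
def dcl (g : ℕ) (τ : ℝ) (c : I × I) : ℕ := if τ < alF c then 2 else if τ < beF g c then 1 else 0

lemma dcl_anti (g : ℕ) {τ τ' : ℝ} (h : τ ≤ τ') (c : I × I) : dcl g τ' c ≤ dcl g τ c := by
  unfold dcl
  split_ifs <;> first | omega | linarith

lemma dcl_le (g : ℕ) (τ : ℝ) (c : I × I) : dcl g τ c ≤ 2 := by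
  unfold dcl
  split_ifs <;> omega

def rdF (κ : ℕ) (x : ℝ) : ℝ := ⌊x + 1 / 2 - κ / 2⌋ + (κ : ℝ) / 2

/-- The class-wise moves. -/
def mvc (g : ℕ) (κ : ℕ) (t : I) (c : I × I) : I × I :=
  if κ = 2 then (σ t * c.1, c.2) else
    (Set.projIcc 0 1 zero_le_one ((c.1 : ℝ) + t * (1 - c.1)),
      Set.projIcc 0 1 zero_le_one (((1 - t) * ((c.2 : ℝ) * (2 * g))
        + t * rdF κ ((c.2 : ℝ) * (2 * g))) / (2 * g)))

lemma mvc_zero (g : ℕ) (hg : 1 ≤ g) (κ : ℕ) (c : I × I) : mvc g κ 0 c = c := by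
  have hg' : (0 : ℝ) < g := by exact_mod_cast hg
  unfold mvc
  split_ifs
  · simp
  · have : ((c.2 : ℝ) * (2 * g)) / (2 * g) = c.2 := by field_simp
    ext <;> simp [this]

lemma mvc_one2 (g : ℕ) (c : I × I) : mvc g 2 1 c = (0, c.2) := by
  simp [mvc]

lemma mvc_one (g : ℕ) (κ : ℕ) (hκ : κ ≠ 2) (c : I × I) : mvc g κ 1 c =
    (1, Set.projIcc 0 1 zero_le_one (rdF κ ((c.2 : ℝ) * (2 * g)) / (2 * g))) := by
  simp [mvc, hκ]

lemma eventually_floor {x : ℝ} (h : ∀ m : ℤ, x ≠ m) : ∀ᶠ y in 𝓝 x, ⌊y⌋ = ⌊x⌋ := by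
  have h1 : (⌊x⌋ : ℝ) < x := lt_of_le_of_ne (Int.floor_le x) (h _).symm
  have h2 : x < ⌊x⌋ + 1 := Int.lt_floor_add_one x
  filter_upwards [Ioo_mem_nhds h1 h2] with y hy
  exact Int.floor_eq_iff.mpr ⟨hy.1.le, hy.2⟩

lemma nonint_of_class (g : ℕ) {τ : ℝ} (h0 : 0 < τ) (h1 : τ < 1 / 2) (c : I × I)
    (hκ : dcl g τ c ≠ 2) (m : ℤ) :
    ((c.2 : ℝ) * (2 * g)) + 1 / 2 - (dcl g τ c : ℝ) / 2 ≠ m := by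
  intro hm
  unfold dcl at hm hκ
  split_ifs at hm hκ with h2 h3
  · exact hκ rfl
  · have hx : ((c.2 : ℝ) * (2 * g)) = m := by push_cast at hm; linarith
    have : wdF g c = 0 := by unfold wdF; rw [hx, uac_int]
    unfold beF at h3
    rw [this] at h3
    rcases lt_max_iff.mp h3 with h | h <;> linarith
  · have hx : ((c.2 : ℝ) * (2 * g)) = 1 / 2 + (m - 1 : ℤ) := by push_cast at hm ⊢; linarith
    have : wdF g c = 1 / 2 := by unfold wdF; rw [hx, uac_add_int, uac_half]
    apply h3
    exact lt_of_lt_of_le (by rw [this]; exact h1) (le_max_right _ _)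

lemma eventually_rdF (g : ℕ) {τ : ℝ} (h0 : 0 < τ) (h1 : τ < 1 / 2) (c : I × I)
    (hκ : dcl g τ c ≠ 2) : ∀ᶠ c' in 𝓝 c, rdF (dcl g τ c) ((c'.2 : ℝ) * (2 * g))
      = rdF (dcl g τ c) ((c.2 : ℝ) * (2 * g)) := by
  have h := eventually_floor (nonint_of_class g h0 h1 c hκ)
  have hc : ContinuousAt (fun c' : I × I => ((c'.2 : ℝ) * (2 * g)) + 1 / 2 - (dcl g τ c : ℝ) / 2) c := by
    fun_prop
  filter_upwards [hc.eventually h] with c' hc'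
  unfold rdF
  rw [hc']

lemma continuousAt_mvc (g : ℕ) {τ : ℝ} (h0 : 0 < τ) (h1 : τ < 1 / 2) (c : I × I) (t : I) :
    ContinuousAt (fun y : I × (I × I) => mvc g (dcl g τ c) y.1 y.2) (t, c) := by
  by_cases hκ : dcl g τ c = 2
  · unfold mvc
    simp only [hκ, if_true]
    fun_prop
  · have he := eventually_rdF g h0 h1 c hκ
    have he' : ∀ᶠ y : I × (I × I) in 𝓝 (t, c), rdF (dcl g τ c) ((y.2.2 : ℝ) * (2 * g))
      = rdF (dcl g τ c) ((c.2 : ℝ) * (2 * g)) :=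
      (continuous_snd.continuousAt (x := (t, c))).eventually he
    have : (fun y : I × (I × I) => mvc g (dcl g τ c) y.1 y.2) =ᶠ[𝓝 (t, c)] fun y =>
       (Set.projIcc 0 1 zero_le_one ((y.2.1 : ℝ) + y.1 * (1 - y.2.1)),
      Set.projIcc 0 1 zero_le_one (((1 - y.1) * ((y.2.2 : ℝ) * (2 * g))
        + y.1 * rdF (dcl g τ c) ((c.2 : ℝ) * (2 * g))) / (2 * g))) := by
      filter_upwards [he'] with y hy
      simp only [mvc, hκ, if_false]
      rw [hy]
    refine ContinuousAt.congr ?_ this.symm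
    apply Continuous.continuousAt
    refine Continuous.prodMk ?_ ?_
    · exact continuous_projIcc.comp (by fun_prop)
    · exact continuous_projIcc.comp (by fun_prop)

lemma eventually_mvc_one (g : ℕ) {τ : ℝ} (h0 : 0 < τ) (h1 : τ < 1 / 2) (c : I × I) :
    ∀ᶠ c' in 𝓝 c, qm g (mvc g (dcl g τ c) 1 c') = qm g (mvc g (dcl g τ c) 1 c) := by
  by_cases hκ : dcl g τ c = 2
  · rw [hκ]
    refine Filter.Eventually.of_forall fun c' => ?_
    rw [mvc_one2, mvc_one2]
    exact qm_zero g _ _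
  · filter_upwards [eventually_rdF g h0 h1 c hκ] with c' hc'
    rw [mvc_one _ _ hκ, mvc_one _ _ hκ, hc']

lemma rdF_add (κ : ℕ) (x : ℝ) (m : ℤ) : rdF κ (x + m) = rdF κ x + m := by
  unfold rdF
  have : x + m + 1 / 2 - κ / 2 = x + 1 / 2 - κ / 2 + m := by ring
  rw [this, Int.floor_add_intCast]
  push_cast; ring

lemma alF_beF_desc (g : ℕ) : ∃ F : Ng g → ℝ × ℝ, ∀ c, F (qm g c) = (alF c, beF g c) := by
  apply qm_lift
  · intro s s'
    have : ∀ s, beF g (0, s) = 1 := fun s => by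
      unfold beF
      have := wdF_le g (0, s)
      rw [max_eq_left]
      · simp [alF]
      · simp only [alF, Set.Icc.coe_zero]; linarith
    simp [this, alF]
  · intro r
    have e : wdF g (r, 0) = wdF g (r, 1) := by
      have h1 := uac_int 0
      have h2 := uac_int (2 * g)
      unfold wdF
      rw [Int.cast_zero] at h1
      push_cast at h2
      simp only [Set.Icc.coe_zero, Set.Icc.coe_one, zero_mul, one_mul]
      rw [h1, h2]
    simp [beF, e, alF]
  · intro j hj t h0 h1 s s' hs hs'
    have e : wdF g (1, s) = wdF g (1, s') := by
      unfold wdF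
      simp only
      rw [hs, hs', ← uac_add_int (2 * j + t) 1]
      congr 2
      push_cast; ring
    simp [beF, e, alF]

lemma dcl_desc (g : ℕ) {c c' : I × I} (h : qm g c = qm g c') : alF c = alF c' ∧ beF g c = beF g c' := by
  obtain ⟨F, hF⟩ := alF_beF_desc g
  have := hF c
  rw [h, hF c'] at this
  simp only [Prod.mk.injEq] at this
  exact ⟨this.1.symm, this.2.symm⟩

lemma dcl_eq (g : ℕ) {τ : ℝ} {c c' : I × I} (h : qm g c = qm g c') : dcl g τ c = dcl g τ c' := by
  obtain ⟨h1, h2⟩ := dcl_desc g h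
  unfold dcl
  rw [h1, h2]

lemma rdF_mem {κ : ℕ} (hκ : κ = 0 ∨ κ = 1) {t : ℝ} (h0 : 0 ≤ t) (h1 : t ≤ 1)
    (h2 : κ = 1 → t ≠ 1) : 0 ≤ rdF κ t ∧ rdF κ t ≤ 1 := by
  unfold rdF
  rcases hκ with rfl | rfl
  · have a : 0 ≤ ⌊t + 1 / 2 - ((0 : ℕ) : ℝ) / 2⌋ := Int.floor_nonneg.mpr (by push_cast; linarith)
    have b : ⌊t + 1 / 2 - ((0 : ℕ) : ℝ) / 2⌋ < 2 := Int.floor_lt.mpr (by push_cast; linarith)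
    have a' : (0 : ℝ) ≤ ⌊t + 1 / 2 - ((0 : ℕ) : ℝ) / 2⌋ := by exact_mod_cast a
    have b' : (⌊t + 1 / 2 - ((0 : ℕ) : ℝ) / 2⌋ : ℝ) ≤ 1 := by
      have b2 := Int.lt_add_one_iff.mp (show _ < (1 : ℤ) + 1 from b)
      exact le_trans (Int.cast_le.mpr b2) (by simp)
    push_cast at a' b' ⊢
    constructor <;> linarith
  · have : ⌊t + 1 / 2 - ((1 : ℕ) : ℝ) / 2⌋ = 0 := by
      rw [Int.floor_eq_zero_iff]
      have := lt_of_le_of_ne h1 (h2 rfl)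
      constructor <;> push_cast <;> linarith
    rw [this]
    norm_num

theorem mv_desc (g : ℕ) (hg : 1 ≤ g) {τ : ℝ} (h0 : 0 < τ) (h1 : τ < 1 / 2) (t : I) {c c' : I × I}
    (h : qm g c = qm g c') :
    qm g (mvc g (dcl g τ c) t c) = qm g (mvc g (dcl g τ c') t c') := by
  have hg' : (0 : ℝ) < g := by exact_mod_cast hg
  have : ∃ F : Ng g → Ng g, ∀ c, F (qm g c) = qm g (mvc g (dcl g τ c) t c) := by
    apply qm_lift
    · intro s s'
      have : ∀ s, dcl g τ (0, s) = 2 := by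
        intro s
        unfold dcl alF
        rw [if_pos]
        simp only [Set.Icc.coe_zero]; linarith
      rw [this, this]
      simp only [mvc, if_true, mul_zero]
      exact qm_zero g _ _
    · intro r
      rw [← dcl_eq g (qm_wrap g r)]
      generalize hκ : dcl g τ (r, 0) = κ
      unfold mvc
      split_ifs with h2
      · exact qm_wrap g _
      · have hκ0 : κ = 0 := by
          have h3 := nonint_of_class g h0 h1 (r, 0) (by rw [hκ]; exact h2) 0
          have := dcl_le g τ (r, 0)
          rw [hκ] at h3 this
          interval_cases κ
          · rfl
          · simp at h3
          · simp at h2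
        subst hκ0
        have r0 : rdF 0 0 = 0 := by
          unfold rdF
          norm_num
        have r1 : rdF 0 (2 * g) = 2 * g := by
          have := rdF_add 0 0 (2 * g)
          rw [r0] at this
          push_cast at this
          simpa using this
        simp only [Set.Icc.coe_zero, Set.Icc.coe_one, zero_mul, one_mul, r0, r1]
        have e1 : ((1 - (t : ℝ)) * 0 + t * 0) / (2 * g) = 0 := by simp
        have e2 : ((1 - (t : ℝ)) * (2 * g) + t * (2 * g)) / (2 * g) = 1 := by field_simp; ring
        rw [e1, e2]
        simp only [Set.projIcc_left, Set.projIcc_right]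
        exact qm_wrap g _
    · intro j hj u hu0 hu1 s s' hs hs'
      rw [← dcl_eq g (qm_glue g j hj u hu0 hu1 s s' hs hs')]
      have hni := nonint_of_class g h0 h1 (1, s)
      have hle := dcl_le g τ (1, s)
      have hne : dcl g τ (1, s) ≠ 2 := by
        unfold dcl alF
        rw [if_neg (by simp; linarith)]
        split_ifs <;> simp
      generalize dcl g τ (1, s) = κ at hni hle hne
      by_cases h2 : κ = 2
      · exact absurd h2 hne
      · have hκ : κ = 0 ∨ κ = 1 := by omega
        have hrd := rdF_mem hκ hu0 hu1 (by
          rintro rfl rfl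
          apply hni (by norm_num) (2 * j + 1)
          simp only [hs]
          push_cast; ring)
        have a1 : rdF κ ((s : ℝ) * (2 * g)) = 2 * j + rdF κ u := by
          rw [hs]
          have := rdF_add κ u (2 * j)
          push_cast at this
          rw [add_comm (2 * (j : ℝ)) u, this]; ring
        have a2 : rdF κ ((s' : ℝ) * (2 * g)) = 2 * j + 1 + rdF κ u := by
          rw [hs']
          have := rdF_add κ u (2 * j + 1)
          push_cast at this
          rw [add_comm (2 * (j : ℝ) + 1) u, this]; ring
        simp only [mvc, h2, if_false, a1, a2]
        rw [hs, hs']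
        have e1 : Set.projIcc (0 : ℝ) 1 zero_le_one (((1 : I) : ℝ) + t * (1 - ((1 : I) : ℝ))) = 1 := by
          simp
        rw [e1]
        have ht0 := t.2.1
        have ht1 := t.2.2
        have hj' : (j : ℝ) + 1 ≤ g := by exact_mod_cast hj
        have m0 : 0 ≤ (1 - (t : ℝ)) * u + t * rdF κ u :=
          add_nonneg (mul_nonneg (by linarith) hu0) (mul_nonneg ht0 hrd.1)
        have m1 : (1 - (t : ℝ)) * u + t * rdF κ u ≤ 1 := by nlinarith
        have hj0 : (0 : ℝ) ≤ j := by positivity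
        refine qm_glue g j hj ((1 - (t : ℝ)) * u + t * rdF κ u) m0 m1 _ _ ?_ ?_
        · rw [Set.coe_projIcc, min_eq_right, max_eq_right]
          · field_simp; ring
          · apply div_nonneg _ (by positivity)
            linarith
          · rw [div_le_one (by positivity)]
            linarith
        · rw [Set.coe_projIcc, min_eq_right, max_eq_right]
          · field_simp; ring
          · apply div_nonneg _ (by positivity)
            linarith
          · rw [div_le_one (by positivity)]
            linarith
  obtain ⟨F, hF⟩ := this
  rw [← hF, ← hF, h]

end

section
open Topology

variable {k : ℕ}

/-- admissible threshold -/
def VV (n g : Fin k → ℕ) (m : ℕ) (τ : ℝ) (z : AIdx n → I × I) : Prop :=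
  0 < τ ∧ τ < 1 / 2 ∧ (∀ a, τ ≠ alF (z a) ∧ τ ≠ beF (g a.1) (z a)) ∧ ∑ a, dcl (g a.1) τ (z a) = m

lemma VV_desc {n g : Fin k → ℕ} {m : ℕ} {τ : ℝ} {z z' : AIdx n → I × I} (h : pp n g z = pp n g z')
    (hv : VV n g m τ z) : VV n g m τ z' := by
  obtain ⟨e, he⟩ := pp_eq.mp h
  obtain ⟨h0, h1, h2, h3⟩ := hv
  refine ⟨h0, h1, ?_, ?_⟩
  · rintro ⟨j, i⟩
    obtain ⟨ha, hb⟩ := dcl_desc _ (he j i)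
    have := h2 ⟨j, e j i⟩
    rw [← ha, ← hb]
    exact this
  · rw [← h3, Fintype.sum_sigma, Fintype.sum_sigma]
    refine Finset.sum_congr rfl fun j _ => ?_
    rw [← Equiv.sum_comp (e j) (fun i => dcl (g j) τ (z ⟨j, i⟩))]
    refine Finset.sum_congr rfl fun i _ => ?_
    exact (dcl_eq _ (he j i)).symm

lemma eventually_dcl (g : ℕ) {τ : ℝ} {c : I × I} (h : τ ≠ alF c ∧ τ ≠ beF g c) :
    ∀ᶠ c' in 𝓝 c, (τ ≠ alF c' ∧ τ ≠ beF g c') ∧ dcl g τ c' = dcl g τ c := by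
  have key : ∀ {f : I × I → ℝ}, Continuous f → τ ≠ f c → ∀ᶠ c' in 𝓝 c, τ ≠ f c' ∧ (τ < f c' ↔ τ < f c) := by
    intro f hf hne
    rcases lt_or_gt_of_ne hne with hl | hl
    · filter_upwards [hf.continuousAt.eventually (lt_mem_nhds hl)] with c' hc'
      exact ⟨hc'.ne, by simp [hc', hl]⟩
    · filter_upwards [hf.continuousAt.eventually (gt_mem_nhds hl)] with c' hc'
      exact ⟨hc'.ne', iff_of_false (not_lt.mpr (le_of_lt hc')) (not_lt.mpr (le_of_lt hl))⟩
  filter_upwards [key continuous_alF h.1, key (continuous_beF g) h.2] with c' h1 h2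
  refine ⟨⟨h1.1, h2.1⟩, ?_⟩
  unfold dcl
  simp only [h1.2, h2.2]

lemma eventually_VV {n g : Fin k → ℕ} {m : ℕ} {τ : ℝ} {z : AIdx n → I × I}
    (hv : VV n g m τ z) : ∀ᶠ z' in 𝓝 z, VV n g m τ z' ∧
      ∀ a, dcl (g a.1) τ (z' a) = dcl (g a.1) τ (z a) := by
  obtain ⟨h0, h1, h2, h3⟩ := hv
  have : ∀ᶠ z' in 𝓝 z, ∀ a : AIdx n, (τ ≠ alF (z' a) ∧ τ ≠ beF (g a.1) (z' a)) ∧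
      dcl (g a.1) τ (z' a) = dcl (g a.1) τ (z a) := by
    rw [Filter.eventually_all]
    intro a
    exact ((continuous_apply a).continuousAt (x := z)).eventually (eventually_dcl (g a.1) (h2 a))
  filter_upwards [this] with z' hz'
  refine ⟨⟨h0, h1, fun a => (hz' a).1, ?_⟩, fun a => (hz' a).2⟩
  rw [← h3]
  exact Finset.sum_congr rfl fun a _ => (hz' a).2

lemma VV_unique {n g : Fin k → ℕ} {m : ℕ} {τ τ' : ℝ} {z : AIdx n → I × I}
    (hv : VV n g m τ z) (hv' : VV n g m τ' z) (a : AIdx n) :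
    dcl (g a.1) τ (z a) = dcl (g a.1) τ' (z a) := by
  wlog h : τ ≤ τ' generalizing τ τ'
  · exact (this hv' hv (le_of_not_ge h)).symm
  have h1 := hv.2.2.2
  rw [← hv'.2.2.2] at h1
  have := (Finset.sum_eq_sum_iff_of_le (fun a _ => dcl_anti (g a.1) h (z a))).mp h1.symm a (Finset.mem_univ _)
  exact this.symm

lemma pathConnected_XX (n g : Fin k → ℕ) : PathConnectedSpace (XX n g) := by
  have hI : PathConnectedSpace I := isPathConnected_iff_pathConnectedSpace.mp
    ((convex_Icc (0 : ℝ) 1).isPathConnected ⟨0, by simp⟩)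
  have : PathConnectedSpace (AIdx n → I × I) :=
    ⟨⟨fun _ => (0, 0)⟩, fun x y => ⟨Path.pi fun i =>
      (PathConnectedSpace.somePath (x i).1 (y i).1).prod (PathConnectedSpace.somePath (x i).2 (y i).2)⟩⟩
  exact (pp_surj n g).pathConnectedSpace (continuous_pp n g)

/-- the move -/
def MV (n g : Fin k → ℕ) (τ : ℝ) (t : I) (z : AIdx n → I × I) : AIdx n → I × I :=
  fun a => mvc (g a.1) (dcl (g a.1) τ (z a)) t (z a)

lemma MV_desc {n g : Fin k → ℕ} (hg : ∀ j, 1 ≤ g j) {τ : ℝ} (h0 : 0 < τ) (h1 : τ < 1 / 2) (t : I)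
    {z z' : AIdx n → I × I} (h : pp n g z = pp n g z') :
    pp n g (MV n g τ t z) = pp n g (MV n g τ t z') := by
  obtain ⟨e, he⟩ := pp_eq.mp h
  exact pp_eq.mpr ⟨e, fun j i => mv_desc (g j) (hg j) h0 h1 t (he j i)⟩

theorem nullhomotopic_of_locConst {A Y : Type*} [TopologicalSpace A] [TopologicalSpace Y]
    [PathConnectedSpace Y] (f : C(A, Y)) (hf : IsLocallyConstant f) : f.Nullhomotopic := by
  obtain ⟨y⟩ := (inferInstance : Nonempty Y)
  refine ⟨y, ?_⟩
  let P : ∀ x : Y, Path x y := fun x => PathConnectedSpace.somePath x y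
  let Q : A → C(I, Y) := fun a => (P (f a)).toContinuousMap
  have hQ : IsLocallyConstant Q := hf.comp (fun x => (P x).toContinuousMap)
  have hc : Continuous (fun p : I × A => Q p.2 p.1) := by
    have := hQ.continuous
    exact ContinuousEval.continuous_eval.comp ((this.comp continuous_snd).prodMk continuous_fst)
  exact ⟨⟨⟨_, hc⟩, fun a => by simp [Q], fun a => by simp [Q]⟩⟩

lemma sum_dcl_le (n g : Fin k → ℕ) (τ : ℝ) (z : AIdx n → I × I) :
    ∑ a : AIdx n, dcl (g a.1) τ (z a) ≤ 2 * ∑ j, n j := by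
  have hcard : Fintype.card (AIdx n) = ∑ j, n j := by simp
  have h1 : ∑ a : AIdx n, dcl (g a.1) τ (z a) ≤ ∑ _a : AIdx n, 2 :=
    Finset.sum_le_sum fun a _ => dcl_le _ _ _
  have h2 : ∑ _a : AIdx n, 2 = 2 * ∑ j, n j := by
    rw [Finset.sum_const, Finset.card_univ, hcard, smul_eq_mul, mul_comm]
  omega

set_option maxHeartbeats 1000000 in
theorem upper (n g : Fin k → ℕ) (hg : ∀ j, 1 ≤ g j) : catLE (XX n g) (2 * ∑ j, n j) := by
  classical
  let U : ℕ → Set (XX n g) := fun m => {x | ∃ z τ, pp n g z = x ∧ VV n g m τ z}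
  have hpre : ∀ m, pp n g ⁻¹' (U m) = {z | ∃ τ, VV n g m τ z} := by
    intro m
    ext z
    constructor
    · rintro ⟨z', τ, h, hv⟩
      exact ⟨τ, VV_desc h hv⟩
    · rintro ⟨τ, hv⟩
      exact ⟨z, τ, rfl, hv⟩
  have hopen : ∀ m, IsOpen (U m) := by
    intro m
    rw [← (isQuotientMap_pp n g hg).isOpen_preimage, hpre]
    rw [isOpen_iff_mem_nhds]
    rintro z ⟨τ, hv⟩
    filter_upwards [eventually_VV hv] with z' hz'
    exact ⟨τ, hz'.1⟩
  refine ⟨fun i => U i, fun i => hopen i, ?_, fun i => ?_⟩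
  · rw [Set.eq_univ_iff_forall]
    intro x
    obtain ⟨z, rfl⟩ := pp_surj n g x
    let bad : Set ℝ := Set.range (fun a : AIdx n => alF (z a)) ∪ Set.range (fun a : AIdx n => beF (g a.1) (z a))
    have hbad : bad.Finite := (Set.finite_range _).union (Set.finite_range _)
    have hinf : (Set.Ioo (0 : ℝ) (1 / 2)).Infinite := Set.Ioo_infinite (by norm_num)
    obtain ⟨τ, hτ, hτ'⟩ := (hinf.sdiff hbad).nonempty
    have hle := sum_dcl_le n g τ z
    rw [Set.mem_iUnion]
    obtain ⟨M, hM⟩ : ∃ M : ℕ, ∑ a, dcl (g a.1) τ (z a) = M := ⟨_, rfl⟩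
    rw [hM] at hle
    suffices hV : VV n g M τ z from ⟨⟨M, Nat.lt_succ_of_le hle⟩, z, τ, rfl, hV⟩
    refine ⟨hτ.1, hτ.2, fun a => ⟨?_, ?_⟩, hM⟩
    · rintro h
      exact hτ' (Or.inl ⟨a, h.symm⟩)
    · rintro h
      exact hτ' (Or.inr ⟨a, h.symm⟩)
  · show (inclMap (U i)).Nullhomotopic
    generalize (i : ℕ) = m
    choose zc τc hzc hvc using fun x : U m => x.2
    let H : I × U m → XX n g := fun y => pp n g (MV n g (τc y.2) y.1 (zc y.2))
    -- formula
    have hH : ∀ (t : I) (z : AIdx n → I × I) (hz : pp n g z ∈ U m) (τ : ℝ), VV n g m τ z →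
        H (t, ⟨pp n g z, hz⟩) = pp n g (MV n g τ t z) := by
      intro t z hz τ hv
      have hv' := hvc ⟨pp n g z, hz⟩
      simp only [H]
      rw [MV_desc hg hv'.1 hv'.2.1 t (hzc ⟨pp n g z, hz⟩)]
      congr 1
      funext a
      unfold MV
      rw [VV_unique (VV_desc (hzc ⟨pp n g z, hz⟩) hv') hv a]
    have hq1 := (isQuotientMap_pp n g hg).restrictPreimage_isOpen (hopen m)
    have hq2 := (isQuotientMap_ppI n g hg).restrictPreimage_isOpen
      ((isOpen_univ (X := I)).prod (hopen m))
    -- continuity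
    have hc : Continuous H := by
      let H' : ((Set.univ : Set I) ×ˢ (U m) : Set (I × XX n g)) → XX n g :=
        fun y => H (y.1.1, ⟨y.1.2, y.2.2⟩)
      have hc' : Continuous H' := by
        rw [hq2.continuous_iff, continuous_iff_continuousAt]
        rintro ⟨⟨t, z⟩, hz⟩
        have hz' : z ∈ pp n g ⁻¹' (U m) := hz.2
        rw [hpre] at hz'
        obtain ⟨τ, hv⟩ := hz'
        have e1 : ∀ᶠ y : ((fun x : I × (AIdx n → I × I) => (x.1, pp n g x.2)) ⁻¹' ((Set.univ : Set I) ×ˢ (U m)) : Set _) in 𝓝 ⟨(t, z), hz⟩, VV n g m τ y.1.2 ∧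
            ∀ a, dcl (g a.1) τ (y.1.2 a) = dcl (g a.1) τ (z a) :=
          ((continuous_snd.comp continuous_subtype_val).continuousAt).eventually (eventually_VV hv)
        have e2 : (fun y : ((fun x : I × (AIdx n → I × I) => (x.1, pp n g x.2)) ⁻¹' ((Set.univ : Set I) ×ˢ (U m)) : Set _) =>
            pp n g (fun a => mvc (g a.1) (dcl (g a.1) τ (z a)) y.1.1 (y.1.2 a))) =ᶠ[𝓝 ⟨(t, z), hz⟩]
            H' ∘ Set.restrictPreimage _ (fun x : I × (AIdx n → I × I) => (x.1, pp n g x.2)) := by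
          filter_upwards [e1] with y hy
          have := hH y.1.1 y.1.2 y.2.2 τ hy.1
          refine Eq.trans ?_ this.symm
          congr 1
          funext a
          unfold MV
          rw [hy.2 a]
        refine ContinuousAt.congr ?_ e2
        refine (continuous_pp n g).continuousAt.comp ?_
        refine continuousAt_pi.mpr fun a => ?_
        have := continuousAt_mvc (g a.1) hv.1 hv.2.1 (z a) t
        refine ContinuousAt.comp (f := fun y : ((fun x : I × (AIdx n → I × I) => (x.1, pp n g x.2)) ⁻¹' ((Set.univ : Set I) ×ˢ (U m)) : Set _) => (y.1.1, y.1.2 a)) (x := ⟨(t, z), hz⟩) this ?_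
        apply Continuous.continuousAt
        fun_prop
      have : H = H' ∘ (fun y : I × U m => ⟨(y.1, y.2.1), trivial, y.2.2⟩) := rfl
      rw [this]
      refine hc'.comp ?_
      fun_prop
    -- final map
    let f1 : C(U m, XX n g) := ⟨fun x => H (1, x), hc.comp (by fun_prop)⟩
    have hloc : IsLocallyConstant f1 := by
      intro s
      rw [← hq1.isOpen_preimage, isOpen_iff_mem_nhds]
      rintro ⟨z, hz⟩ hzs
      have hz' : z ∈ pp n g ⁻¹' (U m) := hz
      rw [hpre] at hz'
      obtain ⟨τ, hv⟩ := hz'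
      have e1 : ∀ᶠ z' in 𝓝 z, ∀ a : AIdx n, qm (g a.1) (mvc (g a.1) (dcl (g a.1) τ (z a)) 1 (z' a)) =
          qm (g a.1) (mvc (g a.1) (dcl (g a.1) τ (z a)) 1 (z a)) := by
        rw [Filter.eventually_all]
        intro a
        exact ((continuous_apply a).continuousAt (x := z)).eventually
          (eventually_mvc_one (g a.1) hv.1 hv.2.1 (z a))
      have e2 : ∀ᶠ y : (pp n g ⁻¹' (U m)) in 𝓝 ⟨z, hz⟩, _ :=
        (continuous_subtype_val.continuousAt (x := (⟨z, hz⟩ : (pp n g ⁻¹' (U m))))).eventually (e1.and (eventually_VV hv))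
      filter_upwards [e2] with y hy
      have h1 : f1 ⟨pp n g z, hz⟩ ∈ s := hzs
      show f1 ⟨pp n g y.1, y.2⟩ ∈ s
      have h2 : f1 ⟨pp n g y.1, y.2⟩ = f1 ⟨pp n g z, hz⟩ := by
        refine (hH 1 y.1 y.2 τ hy.2.1).trans (Eq.trans ?_ (hH 1 z hz τ hv).symm)
        refine pp_eq.mpr ⟨fun _ => 1, fun j i => ?_⟩
        have := hy.1 ⟨j, i⟩
        have h3 := hy.2.2 ⟨j, i⟩
        simp only [MV, Equiv.Perm.coe_one, id]
        simp only at this h3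
        rw [h3, this]
      rw [h2]
      exact h1
    have := pathConnected_XX n g
    obtain ⟨y, hy⟩ := nullhomotopic_of_locConst f1 hloc
    refine ⟨y, ContinuousMap.Homotopic.trans ⟨⟨⟨H, hc⟩, ?_, ?_⟩⟩ hy⟩
    · rintro ⟨x, hx⟩
      obtain ⟨z, rfl⟩ := pp_surj n g x
      have hz' : z ∈ pp n g ⁻¹' (U m) := hx
      rw [hpre] at hz'
      obtain ⟨τ, hv⟩ := hz'
      refine (hH 0 z hx τ hv).trans ?_
      have : MV n g τ 0 z = z := funext fun a => mvc_zero _ (hg _) _ _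
      rw [this]
      rfl
    · intro x
      rfl

end

section
open Topology

/-- sign -/
def sgn2 (x : ZMod 2) : ℝ := if x = 0 then 1 else -1

lemma sgn2_add (x y : ZMod 2) : sgn2 (x + y) = sgn2 x * sgn2 y := by
  have h : ∀ x : ZMod 2, x = 0 ∨ x = 1 := by decide
  have h2 : (1 : ZMod 2) + 1 = 0 := by decide
  rcases h x with rfl | rfl <;> rcases h y with rfl | rfl <;> simp [sgn2, h2]

lemma sgn2_zero : sgn2 0 = 1 := by simp [sgn2]

lemma sgn2_ne (x : ZMod 2) : sgn2 x ≠ 0 := by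
  unfold sgn2; split_ifs <;> norm_num

lemma sgn2_one {x : ZMod 2} (h : sgn2 x = 1) : x = 0 := by
  unfold sgn2 at h
  split_ifs at h with h1
  · exact h1
  · norm_num at h

lemma sgn2_pos {x : ZMod 2} (h : 0 < sgn2 x) : x = 0 := by
  unfold sgn2 at h
  split_ifs at h with h1
  · exact h1
  · norm_num at h

/-- nonzero functions -/
abbrev EE : Type := {f : ℝ → ℝ // f ≠ 0}

instance : MulAction (Multiplicative (ZMod 2)) EE where
  smul u f := ⟨fun T => sgn2 u.toAdd * f.1 T, by
    intro h
    apply f.2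
    funext T
    have := congrFun h T
    simpa [sgn2_ne] using this⟩
  one_smul f := Subtype.ext (funext fun T => by
    show sgn2 0 * f.1 T = f.1 T
    rw [sgn2_zero, one_mul])
  mul_smul u v f := Subtype.ext (funext fun T => by
    show sgn2 (u.toAdd + v.toAdd) * f.1 T = sgn2 u.toAdd * (sgn2 v.toAdd * f.1 T)
    rw [sgn2_add, mul_assoc])

lemma EE_smul (u : Multiplicative (ZMod 2)) (f : EE) (T : ℝ) : (u • f).1 T = sgn2 u.toAdd * f.1 T := rfl

/-- quotient -/
abbrev EQ : Type := MulAction.orbitRel.Quotient (Multiplicative (ZMod 2)) EE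

instance : TopologicalSpace EQ := inferInstanceAs (TopologicalSpace (Quotient _))

def eqm : EE → EQ := Quotient.mk _

lemma eqm_eq {e f : EE} : eqm e = eqm f ↔ ∃ u : Multiplicative (ZMod 2), u • f = e := by
  unfold eqm
  rw [Quotient.eq]
  exact MulAction.orbitRel_apply

lemma continuous_smul_EE (u : Multiplicative (ZMod 2)) : Continuous (fun f : EE => u • f) := by
  refine Continuous.subtype_mk ?_ _
  refine continuous_pi fun T => ?_
  exact continuous_const.mul ((continuous_apply T).comp continuous_subtype_val)

lemma eqm_cov : IsCoveringMap eqm := by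
  suffices h : IsQuotientCoveringMap eqm (Multiplicative (ZMod 2)) from h.isCoveringMap
  refine { isQuotientMap_quotient_mk' with
    continuous_const_smul := continuous_smul_EE
    apply_eq_iff_mem_orbit := eqm_eq
    disjoint := ?_ }
  intro e
  obtain ⟨T, hT⟩ : ∃ T, e.1 T ≠ 0 := Function.ne_iff.mp e.2
  refine ⟨{f | 0 < f.1 T * e.1 T}, ?_, ?_⟩
  · have hc : Continuous (fun f : EE => f.1 T * e.1 T) :=
      ((continuous_apply T).comp continuous_subtype_val).mul continuous_const
    exact hc.continuousAt (lt_mem_nhds (mul_self_pos.mpr hT))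
  · rintro u ⟨f, ⟨f', hf', rfl⟩, hf⟩
    have hf'' : 0 < f'.1 T * e.1 T := hf'
    have h1 : 0 < sgn2 u.toAdd * f'.1 T * e.1 T := hf
    rw [mul_assoc] at h1
    have := sgn2_pos (pos_of_mul_pos_left h1 hf''.le)
    exact this

theorem exists_lift_null {X : Type*} [TopologicalSpace X] (U : Set X) (hU : (inclMap U).Nullhomotopic)
    (Φ : C(X, EQ)) : ∃ s : C(U, EE), ∀ x : U, eqm (s x) = Φ x := by
  obtain ⟨y, ⟨F⟩⟩ := hU
  obtain ⟨e, he⟩ : ∃ e, eqm e = Φ y := Quotient.exists_rep _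
  let H : C(I × U, EQ) := Φ.comp F.symm.toContinuousMap
  have H0 : ∀ a, H (0, a) = eqm (ContinuousMap.const U e a) := by
    intro a
    show Φ (F.symm (0, a)) = eqm e
    rw [F.symm.apply_zero, he]
    rfl
  let L := eqm_cov.liftHomotopy H (ContinuousMap.const U e) H0
  refine ⟨L.comp ⟨fun a => (1, a), by fun_prop⟩, fun x => ?_⟩
  have := congrFun (eqm_cov.liftHomotopy_lifts H (ContinuousMap.const U e) H0) (1, x)
  refine this.trans ?_
  show Φ (F.symm (1, x)) = Φ x
  rw [F.symm.apply_one]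
  rfl

/-- angle -/
def angF (g : ℕ) (c : I × I) : ℝ := Real.pi * min ((c.2 : ℝ) * (2 * g)) 2

/-- polynomial -/
def fpoly (g : ℕ) (c : I × I) : Polynomial ℝ :=
  Polynomial.C (1 - (c.1 : ℝ)) + Polynomial.C ((c.1 : ℝ) * Real.cos (angF g c)) * Polynomial.X
    + Polynomial.C ((c.1 : ℝ) * Real.sin (angF g c)) * Polynomial.X ^ 2

lemma fpoly_ne (g : ℕ) (c : I × I) : fpoly g c ≠ 0 := by
  intro h
  have h0 : (fpoly g c).eval 0 = 0 := by rw [h]; simp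
  have h1 : (fpoly g c).eval 1 = 0 := by rw [h]; simp
  have h2 : (fpoly g c).eval (-1) = 0 := by rw [h]; simp
  simp only [fpoly, Polynomial.eval_add, Polynomial.eval_mul, Polynomial.eval_C, Polynomial.eval_X,
    Polynomial.eval_pow] at h0 h1 h2
  have hc : (c.1 : ℝ) = 1 := by linarith
  rw [hc] at h1 h2
  have hcos : Real.cos (angF g c) = 0 := by linarith
  have hsin : Real.sin (angF g c) = 0 := by linarith
  have := Real.cos_sq_add_sin_sq (angF g c)
  rw [hcos, hsin] at this
  norm_num at this

/-- gauge -/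
def gaF (g : ℕ) (c : I × I) : ZMod 2 :=
  if c.1 = 1 ∧ 1 ≤ (c.2 : ℝ) * (2 * g) ∧ (c.2 : ℝ) * (2 * g) < 2 then 1 else 0

lemma gaF_desc (g : ℕ) (hg : 1 ≤ g) : ∃ F : Ng g → ℝ × ℝ × ℝ, ∀ c, F (qm g c) =
    (sgn2 (gaF g c) * (1 - (c.1 : ℝ)), sgn2 (gaF g c) * ((c.1 : ℝ) * Real.cos (angF g c)),
      sgn2 (gaF g c) * ((c.1 : ℝ) * Real.sin (angF g c))) := by
  have hg' : (1 : ℝ) ≤ g := by exact_mod_cast hg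
  apply qm_lift
  · intro s s'
    simp [gaF, sgn2]
  · intro r
    have e1 : gaF g (r, 0) = 0 := by simp [gaF]
    have e2 : gaF g (r, 1) = 0 := by
      simp only [gaF, Set.Icc.coe_one, one_mul]
      rw [if_neg]
      rintro ⟨_, _, h⟩
      linarith
    have a1 : angF g (r, 0) = 0 := by simp [angF]
    have a2 : angF g (r, 1) = 2 * Real.pi := by
      simp only [angF, Set.Icc.coe_one, one_mul]
      rw [min_eq_right (by linarith)]
      ring
    simp [e1, e2, a1, a2]
  · intro j hj t h0 h1 s s' hs hs'
    rcases Nat.eq_zero_or_pos j with rfl | hj0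
    · have x1 : (s : ℝ) * (2 * g) = t := by rw [hs]; simp
      have x2 : (s' : ℝ) * (2 * g) = 1 + t := by rw [hs']; simp
      have a1 : angF g (1, s) = Real.pi * t := by
        simp only [angF]; rw [x1, min_eq_left (by linarith)]
      have a2 : angF g (1, s') = Real.pi * t + Real.pi := by
        simp only [angF]; rw [x2, min_eq_left (by linarith)]; ring
      by_cases ht : t < 1
      · have e1 : gaF g (1, s) = 0 := by
          simp only [gaF, x1]; rw [if_neg]; rintro ⟨_, h, _⟩; linarith
        have e2 : gaF g (1, s') = 1 := by
          simp only [gaF, x2]; rw [if_pos]; exact ⟨trivial, by linarith, by linarith⟩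
        simp [e1, e2, a1, a2, sgn2]
      · have ht : t = 1 := le_antisymm h1 (not_lt.mp ht)
        have e1 : gaF g (1, s) = 1 := by
          simp only [gaF, x1]; rw [if_pos]; exact ⟨trivial, by linarith, by linarith⟩
        have e2 : gaF g (1, s') = 0 := by
          simp only [gaF, x2]; rw [if_neg]; rintro ⟨_, _, h⟩; linarith
        simp [e1, e2, a1, a2, sgn2]
    · have hj' : (1 : ℝ) ≤ j := by exact_mod_cast hj0
      have key : ∀ s : I, 2 ≤ (s : ℝ) * (2 * g) → gaF g (1, s) = 0 ∧ angF g (1, s) = Real.pi * 2 := by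
        intro s hs
        constructor
        · simp only [gaF]; rw [if_neg]; rintro ⟨_, _, h⟩; linarith
        · simp only [angF]; rw [min_eq_right hs]
      obtain ⟨e1, a1⟩ := key s (by rw [hs]; linarith)
      obtain ⟨e2, a2⟩ := key s' (by rw [hs']; linarith)
      simp [e1, e2, a1, a2]

lemma fpoly_desc (g : ℕ) (hg : 1 ≤ g) {c c' : I × I} (h : qm g c = qm g c') (T : ℝ) :
    sgn2 (gaF g c) * (fpoly g c).eval T = sgn2 (gaF g c') * (fpoly g c').eval T := by
  obtain ⟨F, hF⟩ := gaF_desc g hg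
  have := hF c
  rw [h, hF c'] at this
  simp only [Prod.mk.injEq] at this
  obtain ⟨h1, h2, h3⟩ := this
  simp only [fpoly, Polynomial.eval_add, Polynomial.eval_mul, Polynomial.eval_C, Polynomial.eval_X,
    Polynomial.eval_pow]
  linear_combination -h1 - T * h2 - T ^ 2 * h3

variable {k : ℕ}

/-- total gauge -/
def ggF (n g : Fin k → ℕ) (j : Fin k) (z : AIdx n → I × I) : ZMod 2 :=
  ∑ i, gaF (g j) (z ⟨j, i⟩)

def PPj (n g : Fin k → ℕ) (j : Fin k) (z : AIdx n → I × I) : EE :=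
  ⟨fun T => ∏ i, (fpoly (g j) (z ⟨j, i⟩)).eval T, by
    intro h
    have : ∏ i, fpoly (g j) (z ⟨j, i⟩) = 0 := by
      apply Polynomial.funext
      intro T
      rw [Polynomial.eval_prod]
      have := congrFun h T
      simpa using this
    rw [Finset.prod_eq_zero_iff] at this
    obtain ⟨i, _, hi⟩ := this
    exact fpoly_ne _ _ hi⟩

lemma continuous_PPj (n g : Fin k → ℕ) (j : Fin k) : Continuous (PPj n g j) := by
  refine Continuous.subtype_mk ?_ _
  refine continuous_pi fun T => ?_
  refine continuous_finsetProd _ fun i _ => ?_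
  simp only [fpoly, Polynomial.eval_add, Polynomial.eval_mul, Polynomial.eval_C, Polynomial.eval_X,
    Polynomial.eval_pow, angF]
  fun_prop

lemma sgn2_sum {ι : Type*} (s : Finset ι) (f : ι → ZMod 2) : sgn2 (∑ i ∈ s, f i) = ∏ i ∈ s, sgn2 (f i) := by
  classical
  induction s using Finset.induction_on with
  | empty => simp [sgn2]
  | insert a s ha ih => rw [Finset.sum_insert ha, Finset.prod_insert ha, sgn2_add, ih]

lemma PPj_desc {n g : Fin k → ℕ} (hg : ∀ j, 1 ≤ g j) (j : Fin k) {z z' : AIdx n → I × I}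
    (h : pp n g z = pp n g z') :
    Multiplicative.ofAdd (ggF n g j z) • PPj n g j z = Multiplicative.ofAdd (ggF n g j z') • PPj n g j z' := by
  obtain ⟨e, he⟩ := pp_eq.mp h
  apply Subtype.ext
  funext T
  rw [EE_smul, EE_smul]
  simp only [toAdd_ofAdd, ggF, PPj, sgn2_sum]
  rw [← Finset.prod_mul_distrib, ← Finset.prod_mul_distrib,
    ← Equiv.prod_comp (e j) (fun i => sgn2 (gaF (g j) (z ⟨j, i⟩)) * (fpoly (g j) (z ⟨j, i⟩)).eval T)]
  exact Finset.prod_congr rfl fun i _ => fpoly_desc (g j) (hg j) (he j i) T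

lemma smul_cancel_EE {u v : Multiplicative (ZMod 2)} {e : EE} (h : u • e = v • e) : u = v := by
  obtain ⟨T, hT⟩ : ∃ T, e.1 T ≠ 0 := Function.ne_iff.mp e.2
  have h1 : (u • e).1 T = (v • e).1 T := by rw [h]
  rw [EE_smul, EE_smul] at h1
  have h2 : sgn2 u.toAdd = sgn2 v.toAdd := mul_right_cancel₀ hT h1
  have h3 : sgn2 (u.toAdd + v.toAdd) = 1 := by
    rw [sgn2_add, h2]
    unfold sgn2; split_ifs <;> norm_num
  have h4 := sgn2_one h3
  have : u.toAdd = v.toAdd := by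
    have := CharTwo.add_eq_zero.mp h4
    exact this
  exact this

theorem L1 (n g : Fin k → ℕ) (hg : ∀ j, 1 ≤ g j) (j : Fin k) (U : Set (XX n g))
    (hU : (inclMap U).Nullhomotopic) : ∃ c : XX n g → ZMod 2, ∀ B : Set (AIdx n → I × I),
      IsPreconnected B → (∀ z ∈ B, pp n g z ∈ U) → ∀ z ∈ B, ∀ z' ∈ B,
        ggF n g j z + c (pp n g z) = ggF n g j z' + c (pp n g z') := by
  classical
  -- the map Φ
  choose zc hzc using pp_surj n g
  let S : XX n g → EE := fun x => Multiplicative.ofAdd (ggF n g j (zc x)) • PPj n g j (zc x)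
  have hS : ∀ z, S (pp n g z) = Multiplicative.ofAdd (ggF n g j z) • PPj n g j z :=
    fun z => PPj_desc hg j (hzc _)
  have hΦ : ∀ z, eqm (S (pp n g z)) = eqm (PPj n g j z) := fun z => by
    rw [hS]; exact eqm_eq.mpr ⟨_, rfl⟩
  let Φ : C(XX n g, EQ) := ⟨fun x => eqm (S x), by
    rw [(isQuotientMap_pp n g hg).continuous_iff]
    have : (fun x => eqm (S x)) ∘ pp n g = eqm ∘ PPj n g j := funext hΦ
    rw [this]
    exact eqm_cov.continuous.comp (continuous_PPj n g j)⟩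
  obtain ⟨s, hs⟩ := exists_lift_null U hU Φ
  have hu : ∀ x : U, ∃ u : Multiplicative (ZMod 2), u • S x = s x := fun x => eqm_eq.mp (hs x)
  choose u hu using hu
  refine ⟨fun x => if hx : x ∈ U then (u ⟨x, hx⟩).toAdd else 0, ?_⟩
  intro B hB hBU z hz z' hz'
  have : PreconnectedSpace B := isPreconnected_iff_preconnectedSpace.mp hB
  let s1 : B → EE := fun y => s ⟨pp n g y.1, hBU y.1 y.2⟩
  have hs1c : Continuous s1 := by
    refine s.continuous.comp ?_
    exact Continuous.subtype_mk ((continuous_pp n g).comp continuous_subtype_val) _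
  have hs1 : ∀ y : B, s1 y = (u ⟨pp n g y.1, hBU y.1 y.2⟩ * Multiplicative.ofAdd (ggF n g j y.1)) • PPj n g j y.1 := by
    intro y
    rw [mul_smul, ← hS, hu]
  let u0 := (u ⟨pp n g z, hBU z hz⟩ * Multiplicative.ofAdd (ggF n g j z))
  let s2 : B → EE := fun y => u0 • PPj n g j y.1
  have hs2c : Continuous s2 :=
    (continuous_smul_EE u0).comp ((continuous_PPj n g j).comp continuous_subtype_val)
  have heq : s1 = s2 := by
    refine eqm_cov.eq_of_comp_eq hs1c hs2c ?_ ⟨z, hz⟩ ?_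
    · funext y
      simp only [Function.comp]
      rw [hs1]
      have e : ∀ v : Multiplicative (ZMod 2), eqm (v • PPj n g j y.1) = eqm (PPj n g j y.1) :=
        fun v => eqm_eq.mpr ⟨v, rfl⟩
      rw [e, e]
    · rw [hs1]
  have h1 := hs1 ⟨z', hz'⟩
  rw [heq] at h1
  have h2 : u0 = _ := smul_cancel_EE h1
  have h3 := congrArg Multiplicative.toAdd h2
  simp only [u0, toAdd_mul, toAdd_ofAdd] at h3
  simp only [hBU z hz, hBU z' hz', dif_pos]
  rw [add_comm, h3, add_comm]

end

section
open Topology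

section absComb
variable {S : Type}

/-- edge difference -/
def DD (y : ℕ → S → ZMod 2) (b : ℕ) (w : S) : ZMod 2 := y b w + y (b + 1) w

structure GoodF (r : S → S → Prop) (ι : ℕ → S → S) (M : ℕ) (y : ℕ → S → ZMod 2) : Prop where
  inv : ∀ b w w', r w w' → y b w = y b w'
  face : ∀ l ≤ M, ∀ w, ∃ d, ∀ b ≤ M, b ≠ l → y b (ι l w) = y b w + d

structure ExactF (r : S → S → Prop) (ι : ℕ → S → S) (M : ℕ) (y : ℕ → S → ZMod 2) : Prop where
  inv : ∀ b w w', r w w' → y b w = y b w'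
  face : ∀ l ≤ M, ∀ w, ∀ b ≤ M, b ≠ l → y b (ι l w) = y b w

lemma ExactF.good {r : S → S → Prop} {ι : ℕ → S → S} {M : ℕ} {y : ℕ → S → ZMod 2}
    (h : ExactF r ι M y) : GoodF r ι M y :=
  ⟨h.inv, fun l hl w => ⟨0, fun b hb hbl => by rw [h.face l hl w b hb hbl, add_zero]⟩⟩

lemma GoodF.add {r : S → S → Prop} {ι : ℕ → S → S} {M : ℕ} {y z : ℕ → S → ZMod 2}
    (h : GoodF r ι M y) (h' : GoodF r ι M z) : GoodF r ι M (fun b w => y b w + z b w) := by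
  refine ⟨fun b w w' hr => by rw [h.inv b w w' hr, h'.inv b w w' hr], fun l hl w => ?_⟩
  obtain ⟨d, hd⟩ := h.face l hl w
  obtain ⟨d', hd'⟩ := h'.face l hl w
  exact ⟨d + d', fun b hb hbl => by rw [hd b hb hbl, hd' b hb hbl]; ring⟩

lemma two_zmod (x : ZMod 2) : x + x = 0 := CharTwo.add_self_eq_zero x

lemma GoodF.two {r : S → S → Prop} {ι : ℕ → S → S} {M : ℕ} {y : ℕ → S → ZMod 2}
    (h : GoodF r ι M y) {l : ℕ} (hl : l ≤ M) (w : S) {b b' : ℕ} (hb : b ≤ M) (hb' : b' ≤ M)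
    (hbl : b ≠ l) (hbl' : b' ≠ l) : y b (ι l w) + y b' (ι l w) = y b w + y b' w := by
  obtain ⟨d, hd⟩ := h.face l hl w
  rw [hd b hb hbl, hd b' hb' hbl']
  have := two_zmod d
  linear_combination this

lemma GoodF.DD {r : S → S → Prop} {ι : ℕ → S → S} {M : ℕ} {y : ℕ → S → ZMod 2}
    (h : GoodF r ι M y) {l : ℕ} (hl : l ≤ M) (w : S) {b : ℕ} (hb : b < M)
    (hbl : b ≠ l) (hbl' : b + 1 ≠ l) : DD y b (ι l w) = DD y b w :=
  h.two hl w hb.le hb hbl hbl'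

/-- partial products -/
def QQ (y : ℕ → ℕ → S → ZMod 2) (m l : ℕ) (w : S) : ZMod 2 :=
  (∏ t ∈ Finset.range l, DD (y t) t w) * ∏ t ∈ Finset.Ico l m, DD (y t) (t + 1) w

lemma QQ_step (y : ℕ → ℕ → S → ZMod 2) {m l : ℕ} (hl : l < m) (w : S) :
    QQ y m l w + QQ y m (l + 1) w = (∏ t ∈ Finset.range l, DD (y t) t w) *
      (y l l w + y l (l + 2) w) * ∏ t ∈ Finset.Ico (l + 1) m, DD (y t) (t + 1) w := by
  unfold QQ
  rw [Finset.prod_range_succ, Finset.prod_eq_prod_Ico_succ_bot hl]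
  unfold DD
  have := two_zmod (y l (l + 1) w)
  linear_combination ((∏ t ∈ Finset.range l, (y t t w + y t (t + 1) w)) *
    ∏ t ∈ Finset.Ico (l + 1) m, (y t (t + 1) w + y t (t + 1 + 1) w)) * this

variable {r : S → S → Prop} {ι : ℕ → S → S} {m : ℕ}

lemma QQ_inv {y : ℕ → ℕ → S → ZMod 2} (hy : ∀ t, GoodF r ι (m + 1) (y t)) (l : ℕ) (w w' : S)
    (h : r w w') : QQ y m l w = QQ y m l w' := by
  unfold QQ DD
  congr 1
  · exact Finset.prod_congr rfl fun t _ => by rw [(hy t).inv _ w w' h, (hy t).inv _ w w' h]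
  · exact Finset.prod_congr rfl fun t _ => by rw [(hy t).inv _ w w' h, (hy t).inv _ w w' h]

lemma T_step (T : (S → ZMod 2) →+ ZMod 2)
    (hT : ∀ l ≤ m + 1, ∀ F : S → ZMod 2, (∀ w w', r w w' → F w = F w') → (∀ w, F (ι l w) = F w) → T F = 0)
    {y : ℕ → ℕ → S → ZMod 2} (hy : ∀ t, GoodF r ι (m + 1) (y t))
    {c : ℕ → S → ZMod 2} (hc : ExactF r ι (m + 1) c) {l b : ℕ} (hl : l < m) (hb : b ≤ m + 1)
    (hbl : b ≠ l + 1) : T (fun w => c b w * QQ y m l w) + T (fun w => c b w * QQ y m (l + 1) w) = 0 := by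
  rw [← map_add]
  apply hT (l + 1) (by omega)
  · intro w w' h
    simp only [Pi.add_apply]
    rw [QQ_inv hy l w w' h, QQ_inv hy (l + 1) w w' h, hc.inv b w w' h]
  · intro w
    simp only [Pi.add_apply]
    rw [← mul_add, ← mul_add, QQ_step y hl, QQ_step y hl, hc.face (l + 1) (by omega) w b hb hbl]
    congr 2
    · congr 1
      · refine Finset.prod_congr rfl fun t ht => ?_
        have := Finset.mem_range.mp ht
        exact (hy t).DD (by omega) w (by omega) (by omega) (by omega)
      · exact (hy l).two (by omega) w (by omega) (by omega) (by omega) (by omega)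
    · refine Finset.prod_congr rfl fun t ht => ?_
      have := Finset.mem_Ico.mp ht
      exact (hy t).DD (by omega) w (by omega) (by omega) (by omega)

lemma T_claim1 (T : (S → ZMod 2) →+ ZMod 2)
    (hT : ∀ l ≤ m + 1, ∀ F : S → ZMod 2, (∀ w w', r w w' → F w = F w') → (∀ w, F (ι l w) = F w) → T F = 0)
    {y : ℕ → ℕ → S → ZMod 2} (hy : ∀ t, GoodF r ι (m + 1) (y t))
    {c : ℕ → S → ZMod 2} (hc : ExactF r ι (m + 1) c) {p : ℕ} :
    ∀ i l : ℕ, l + i = m → p ≤ l → T (fun w => c p w * QQ y m l w) = 0 := by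
  intro i
  induction i with
  | zero =>
    intro l hl hp
    obtain rfl : l = m := by omega
    apply hT (l + 1) le_rfl
    · intro w w' h
      rw [QQ_inv hy l w w' h, hc.inv p w w' h]
    · intro w
      rw [hc.face (l + 1) le_rfl w p (by omega) (by omega)]
      unfold QQ
      simp only [Finset.Ico_self, Finset.prod_empty, mul_one]
      congr 1
      refine Finset.prod_congr rfl fun t ht => ?_
      have := Finset.mem_range.mp ht
      exact (hy t).DD (by omega) w (by omega) (by omega) (by omega)
  | succ i ih =>
    intro l hl hp
    have h1 := T_step T hT hy hc (l := l) (b := p) (by omega) (by omega) (by omega)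
    rw [ih (l + 1) (by omega) (by omega), add_zero] at h1
    exact h1

lemma T_claim2 (T : (S → ZMod 2) →+ ZMod 2)
    (hT : ∀ l ≤ m + 1, ∀ F : S → ZMod 2, (∀ w w', r w w' → F w = F w') → (∀ w, F (ι l w) = F w) → T F = 0)
    {y : ℕ → ℕ → S → ZMod 2} (hy : ∀ t, GoodF r ι (m + 1) (y t))
    {c : ℕ → S → ZMod 2} (hc : ExactF r ι (m + 1) c) {p : ℕ} (hp : p ≤ m) :
    ∀ l : ℕ, l ≤ p → T (fun w => c (p + 1) w * QQ y m l w) = 0 := by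
  intro l
  induction l with
  | zero =>
    intro _
    apply hT 0 (by omega)
    · intro w w' h
      rw [QQ_inv hy 0 w w' h, hc.inv _ w w' h]
    · intro w
      rw [hc.face 0 (by omega) w (p + 1) (by omega) (by omega)]
      unfold QQ
      simp only [Finset.range_zero, Finset.prod_empty, one_mul]
      congr 1
      refine Finset.prod_congr rfl fun t ht => ?_
      have := Finset.mem_Ico.mp ht
      exact (hy t).DD (by omega) w (by omega) (by omega) (by omega)
  | succ l ih =>
    intro hl
    have h1 := T_step T hT hy hc (l := l) (b := p + 1) (by omega) (by omega) (by omega)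
    rw [ih (by omega), zero_add] at h1
    exact h1

lemma T_claim (T : (S → ZMod 2) →+ ZMod 2)
    (hT : ∀ l ≤ m + 1, ∀ F : S → ZMod 2, (∀ w w', r w w' → F w = F w') → (∀ w, F (ι l w) = F w) → T F = 0)
    {y : ℕ → ℕ → S → ZMod 2} (hy : ∀ t, GoodF r ι (m + 1) (y t))
    {c : ℕ → S → ZMod 2} (hc : ExactF r ι (m + 1) c) {p : ℕ} (hp : p ≤ m) :
    T (fun w => DD c p w * QQ y m p w) = 0 := by
  have h1 := T_claim1 T hT hy hc (p := p) (m - p) p (by omega) le_rfl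
  have h2 := T_claim2 T hT hy hc hp p le_rfl
  have : (fun w => DD c p w * QQ y m p w) = (fun w => c p w * QQ y m p w) + fun w => c (p + 1) w * QQ y m p w := by
    funext w
    simp only [Pi.add_apply, DD]
    ring
  rw [this, map_add, h1, h2, add_zero]

theorem T_exchange (T : (S → ZMod 2) →+ ZMod 2)
    (hT : ∀ l ≤ m + 1, ∀ F : S → ZMod 2, (∀ w w', r w w' → F w = F w') → (∀ w, F (ι l w) = F w) → T F = 0)
    {gs cs : ℕ → ℕ → S → ZMod 2} (hg : ∀ t, GoodF r ι (m + 1) (gs t))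
    (hc : ∀ t, ExactF r ι (m + 1) (cs t)) :
    T (fun w => ∏ t ∈ Finset.range (m + 1), DD (fun b w => gs t b w + cs t b w) t w) =
    T (fun w => ∏ t ∈ Finset.range (m + 1), DD (gs t) t w) := by
  let hs : ℕ → ℕ → S → ZMod 2 := fun t b w => gs t b w + cs t b w
  have hh : ∀ t, GoodF r ι (m + 1) (hs t) := fun t => (hg t).add (hc t).good
  have key : ∀ p ≤ m + 1, T (fun w => ∏ t ∈ Finset.range (m + 1), DD (hs t) t w) =
      T (fun w => (∏ t ∈ Finset.range p, DD (gs t) t w) * ∏ t ∈ Finset.Ico p (m + 1), DD (hs t) t w) := by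
    intro p
    induction p with
    | zero => intro _; simp only [Finset.range_zero, Finset.prod_empty, one_mul, Nat.Ico_zero_eq_range]
    | succ p ih =>
      intro hp
      rw [ih (by omega)]
      let y : ℕ → ℕ → S → ZMod 2 := fun t => if t < p then gs t else hs (t + 1)
      have hy : ∀ t, GoodF r ι (m + 1) (y t) := by
        intro t
        simp only [y]
        split_ifs
        · exact hg t
        · exact hh (t + 1)
      have hQ : ∀ w, QQ y m p w = (∏ t ∈ Finset.range p, DD (gs t) t w) *
          ∏ t ∈ Finset.Ico (p + 1) (m + 1), DD (hs t) t w := by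
        intro w
        unfold QQ
        rw [← Finset.prod_Ico_add' (fun t => DD (hs t) t w) p m 1]
        congr 1
        · refine Finset.prod_congr rfl fun t ht => ?_
          have := Finset.mem_range.mp ht
          simp only [y, this, if_true]
        · refine Finset.prod_congr rfl fun t ht => ?_
          have := Finset.mem_Ico.mp ht
          simp only [y, show ¬ t < p by omega, if_false]
      have h0 := T_claim T hT hy (hc p) (p := p) (by omega)
      have : (fun w => (∏ t ∈ Finset.range p, DD (gs t) t w) * ∏ t ∈ Finset.Ico p (m + 1), DD (hs t) t w)
        = (fun w => (∏ t ∈ Finset.range (p + 1), DD (gs t) t w) * ∏ t ∈ Finset.Ico (p + 1) (m + 1), DD (hs t) t w)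
          + (fun w => DD (cs p) p w * QQ y m p w) := by
        funext w
        simp only [Pi.add_apply]
        rw [hQ, Finset.prod_range_succ, Finset.prod_eq_prod_Ico_succ_bot (show p < m + 1 by omega)]
        simp only [DD, hs]
        ring
      rw [this, map_add, h0, add_zero]
  have := key (m + 1) le_rfl
  simpa using this

end absComb

end

section
open Topology

section concComb

/-- reflection of cells in odd vertices -/
def odf {L : ℕ} (i : Fin L) : Fin L :=
  ⟨if (i : ℕ) % 2 = 0 then (if (i : ℕ) + 1 < L then (i : ℕ) + 1 else i) else (i : ℕ) - 1, by
    have := i.2; split_ifs <;> omega⟩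

/-- reflection of cells in even vertices, cyclically -/
def evf {L : ℕ} (i : Fin L) : Fin L :=
  ⟨if (i : ℕ) % 2 = 0 then (if (i : ℕ) = 0 then L - 1 else (i : ℕ) - 1)
    else (if (i : ℕ) + 1 < L then (i : ℕ) + 1 else 0), by
    have := i.2; split_ifs <;> omega⟩

/-- gluing shift of cells -/
def shf {L : ℕ} (K : ℕ) (i : Fin L) : Fin L :=
  ⟨if ((i : ℕ) / K) % 2 = 0 then (if (i : ℕ) + K < L then (i : ℕ) + K else i) else (i : ℕ) - K, by
    have := i.2; split_ifs <;> omega⟩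

def oddE (i : ℕ) : ℕ := if i % 2 = 1 then i else i + 1
def evenE (i : ℕ) : ℕ := if i % 2 = 0 then i else i + 1

lemma odf_odf {L : ℕ} (hL : L % 2 = 0) (i : Fin L) : odf (odf i) = i := by
  have := i.2
  apply Fin.ext
  simp only [odf]
  split_ifs <;> omega

lemma odf_ne {L : ℕ} (hL : L % 2 = 0) (i : Fin L) : odf i ≠ i := by
  have := i.2
  intro h
  have := congrArg Fin.val h
  simp only [odf] at this
  split_ifs at this <;> omega

lemma oddE_odf {L : ℕ} (hL : L % 2 = 0) (i : Fin L) : oddE (odf i : Fin L) = oddE i := by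
  have := i.2
  simp only [odf, oddE]
  split_ifs <;> omega

lemma evf_val {L : ℕ} (i : Fin L) : ((i : ℕ) = 0 ∧ ((evf i : Fin L) : ℕ) = L - 1) ∨
    ((i : ℕ) % 2 = 0 ∧ (i : ℕ) ≠ 0 ∧ ((evf i : Fin L) : ℕ) = i - 1) ∨
    ((i : ℕ) % 2 = 1 ∧ (i : ℕ) + 1 < L ∧ ((evf i : Fin L) : ℕ) = i + 1) ∨
    ((i : ℕ) % 2 = 1 ∧ (i : ℕ) + 1 = L ∧ ((evf i : Fin L) : ℕ) = 0) := by
  have := i.2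
  simp only [evf]
  split_ifs <;> omega

lemma evf_evf {L : ℕ} (hL : L % 2 = 0) (i : Fin L) : evf (evf i) = i := by
  have := i.2
  apply Fin.ext
  have h1 := evf_val i
  have h2 := evf_val (evf i)
  omega

lemma evf_ne {L : ℕ} (hL : L % 2 = 0) (i : Fin L) : evf i ≠ i := by
  have := i.2
  intro h
  have := congrArg Fin.val h
  simp only [evf] at this
  split_ifs at this <;> omega

lemma evf_mid {L : ℕ} (hL : L % 2 = 0) (i : Fin L) (h0 : (i : ℕ) ≠ 0) (h1 : (i : ℕ) + 1 ≠ L) :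
    ((evf i : Fin L) : ℕ) ≠ 0 ∧ ((evf i : Fin L) : ℕ) + 1 ≠ L ∧ evenE (evf i : Fin L) = evenE i := by
  have := i.2
  simp only [evf, evenE]
  split_ifs <;> omega

lemma evf_end {L : ℕ} (hL : L % 2 = 0) (i : Fin L) (h0 : (i : ℕ) = 0 ∨ (i : ℕ) + 1 = L) :
    (evenE i = 0 ∧ evenE (evf i : Fin L) = L) ∨ (evenE i = L ∧ evenE (evf i : Fin L) = 0) := by
  have := i.2
  simp only [evf, evenE]
  split_ifs <;> omega

lemma shf_cases {L K g : ℕ} (hK : K % 2 = 0) (hL : K * (2 * g) = L) (i : Fin L) :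
    ∃ p < g, (2 * p * K ≤ i ∧ (i : ℕ) < (2 * p + 1) * K ∧ ((shf K i : Fin L) : ℕ) = i + K) ∨
      (2 * p * K ≤ (shf K i : Fin L) ∧ ((shf K i : Fin L) : ℕ) < (2 * p + 1) * K ∧ (i : ℕ) = (shf K i : Fin L) + K) := by
  have hi := i.2
  have hK0 : 0 < K := by
    rcases Nat.eq_zero_or_pos K with h | h
    · subst h; omega
    · exact h
  have h1 := Nat.div_add_mod (i : ℕ) K
  have h2 := Nat.mod_lt (i : ℕ) hK0
  have hq : (i : ℕ) / K < 2 * g := by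
    rw [Nat.div_lt_iff_lt_mul hK0]; nlinarith
  set q := (i : ℕ) / K with hqd
  obtain ⟨p, hp | hp⟩ : ∃ p, q = 2 * p ∨ q = 2 * p + 1 := ⟨q / 2, by omega⟩
  · refine ⟨p, by omega, Or.inl ?_⟩
    rw [hp] at h1
    have h3 : K * (2 * p + 2) ≤ K * (2 * g) := Nat.mul_le_mul_left _ (by omega)
    have h4 : (i : ℕ) + K < L := by nlinarith
    have h5 : K * (2 * p) = 2 * p * K := by ring
    refine ⟨by omega, by nlinarith, ?_⟩
    simp only [shf]
    rw [← hqd, if_pos (by omega), if_pos h4]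
  · refine ⟨p, by omega, Or.inr ?_⟩
    rw [hp] at h1
    have h5 : K * (2 * p + 1) = 2 * p * K + K := by ring
    have : ((shf K i : Fin L) : ℕ) = i - K := by
      simp only [shf]
      rw [← hqd, if_neg (by omega)]
    rw [this]
    have h6 : (2 * p + 1) * K = 2 * p * K + K := by ring
    omega

lemma div_between {K p i : ℕ} (_ : 0 < K) (h1 : p * K ≤ i) (h2 : i < (p + 1) * K) : i / K = p :=
  Nat.div_eq_of_lt_le h1 h2

lemma shf_shf {L K g : ℕ} (hK : K % 2 = 0) (hL : K * (2 * g) = L) (i : Fin L) :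
    shf K (shf K i) = i := by
  have hi := i.2
  have hK0 : 0 < K := by
    rcases Nat.eq_zero_or_pos K with h | h
    · subst h; omega
    · exact h
  obtain ⟨p, hp, ⟨h1, h2, h3⟩ | ⟨h1, h2, h3⟩⟩ := shf_cases hK hL i
  · obtain ⟨p', hp', ⟨h1', h2', h3'⟩ | ⟨h1', h2', h3'⟩⟩ := shf_cases hK hL (shf K i)
    · exfalso
      have e1 : (2 * p + 1) = 2 * p' := by
        rw [← div_between hK0 (p := 2 * p + 1) (i := (shf K i : Fin L)) (by nlinarith) (by nlinarith),
          div_between hK0 (p := 2 * p') h1' h2']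
      omega
    · apply Fin.ext; omega
  · obtain ⟨p', hp', ⟨h1', h2', h3'⟩ | ⟨h1', h2', h3'⟩⟩ := shf_cases hK hL (shf K i)
    · apply Fin.ext; omega
    · exfalso
      have e1 : 2 * p = (2 * p' + 1) := by
        rw [← div_between hK0 (p := 2 * p) h1 h2,
          div_between hK0 (p := 2 * p' + 1) (i := (shf K i : Fin L)) (by nlinarith) (by nlinarith)]
      omega

lemma shf_ne {L K g : ℕ} (hK : K % 2 = 0) (hL : K * (2 * g) = L) (i : Fin L) : shf K i ≠ i := by
  have hi := i.2
  have hK0 : 0 < K := by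
    rcases Nat.eq_zero_or_pos K with h | h
    · subst h; omega
    · exact h
  intro h
  obtain ⟨p, hp, ⟨h1, h2, h3⟩ | ⟨h1, h2, h3⟩⟩ := shf_cases hK hL i <;> rw [h] at h3 <;> omega

end concComb

end

section
open Topology

section simp1
variable {A C : Type} {L M : ℕ}

/-- cells together with an ordering of the coordinates -/
abbrev Smp (A : Type) (L M : ℕ) : Type := (A × Bool → Fin L) × (A × Bool ≃ Fin M)

def hatP (f : Equiv.Perm A) : Equiv.Perm (A × Bool) := Equiv.prodCongr f (Equiv.refl Bool)

@[simp] lemma hatP_apply (f : Equiv.Perm A) (x : A × Bool) : hatP f x = (f x.1, x.2) := rfl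

def actS (f : Equiv.Perm A) (w : Smp A L M) : Smp A L M := (w.1 ∘ hatP f, (hatP f).trans w.2)

@[simp] lemma actS_fst (f : Equiv.Perm A) (w : Smp A L M) (x : A × Bool) :
    (actS f w).1 x = w.1 (f x.1, x.2) := rfl
@[simp] lemma actS_snd (f : Equiv.Perm A) (w : Smp A L M) (x : A × Bool) :
    (actS f w).2 x = w.2 (f x.1, x.2) := rfl

lemma smp_ext {w w' : Smp A L M} (h1 : ∀ x, w.1 x = w'.1 x) (h2 : ∀ x, w.2 x = w'.2 x) : w = w' :=
  Prod.ext (funext h1) (Equiv.ext h2)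

def relS (col : A → C) (w w' : Smp A L M) : Prop :=
  ∃ f : Equiv.Perm A, (∀ a, col (f a) = col a) ∧ w' = actS f w

lemma relS_equiv (col : A → C) : Equivalence (relS (L := L) (M := M) col) where
  refl w := ⟨Equiv.refl A, fun _ => rfl, smp_ext (fun _ => rfl) fun _ => rfl⟩
  symm := by
    rintro w w' ⟨f, hf, rfl⟩
    refine ⟨f.symm, fun a => ?_, smp_ext (fun x => ?_) fun x => ?_⟩
    · rw [← hf (f.symm a), Equiv.apply_symm_apply]
    · simp
    · simp
  trans := by
    rintro w w' w'' ⟨f, hf, rfl⟩ ⟨f', hf', rfl⟩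
    refine ⟨f'.trans f, fun a => ?_, smp_ext (fun x => ?_) fun x => ?_⟩
    · simp [hf, hf']
    · simp
    · simp

def stS (A : Type) (L M : ℕ) (col : A → C) : Setoid (Smp A L M) := ⟨relS col, relS_equiv col⟩

section
variable [Fintype A]

instance (col : A → C) : Fintype (Quotient (stS A L M col)) := Fintype.ofFinite _

def TT (L M : ℕ) (col : A → C) : (Smp A L M → ZMod 2) →+ ZMod 2 where
  toFun F := ∑ q : Quotient (stS A L M col), F q.out
  map_zero' := by simp
  map_add' F G := by simp [Finset.sum_add_distrib]

lemma TT_zero {col : A → C} {F : Smp A L M → ZMod 2} {i : Smp A L M → Smp A L M}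
    (hF : ∀ w w', relS col w w' → F w = F w') (hFi : ∀ w, F (i w) = F w)
    (hi : ∀ f w, (∀ a, col (f a) = col a) → i (actS f w) = actS f (i w)) (hii : ∀ w, i (i w) = w)
    (hne : ∀ w f, (∀ a, col (f a) = col a) → i w ≠ actS f w) : TT L M col F = 0 := by
  let J : Quotient (stS A L M col) → Quotient (stS A L M col) := Quotient.map i (by
    rintro w w' ⟨f, hf, rfl⟩
    exact ⟨f, hf, hi f w hf⟩)
  have hout : ∀ w, F (Quotient.out (Quotient.mk (stS A L M col) w)) = F w := fun w =>
    hF _ _ (Quotient.exact (Quotient.out_eq (Quotient.mk (stS A L M col) w)))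
  have hJ : ∀ q : Quotient (stS A L M col), F (J q).out = F q.out := by
    intro q
    induction q using Quotient.inductionOn with
    | _ w => 
    show F (Quotient.out (Quotient.mk (stS A L M col) (i w))) = _
    rw [hout, hout, hFi]
  show ∑ q : Quotient (stS A L M col), F q.out = 0
  refine Finset.sum_involution (fun q _ => J q) ?_ ?_ ?_ ?_
  · intro q _
    rw [hJ]; exact two_zmod _
  · intro q _ _ 
    induction q using Quotient.inductionOn with
    | _ w => 
    intro h
    obtain ⟨f, hf, h'⟩ : relS col w (i w) := Quotient.exact (s := stS A L M col) (Eq.symm h)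
    exact hne w f hf h'
  · intro q _; exact Finset.mem_univ _
  · intro q _
    induction q using Quotient.inductionOn with
    | _ w => 
    show Quotient.mk _ (i (i w)) = _
    rw [hii]

end

/-- vertices -/
def vtx (w : Smp A L M) (b : ℕ) (x : A × Bool) : ℕ :=
  if (w.2 x : ℕ) < b then oddE (w.1 x) else evenE (w.1 x)

lemma vtx_act (f : Equiv.Perm A) (w : Smp A L M) (b : ℕ) : vtx (actS f w) b = vtx w b ∘ hatP f := rfl

def io0 (w : Smp A L M) : Smp A L M := (fun x => if (w.2 x : ℕ) = 0 then odf (w.1 x) else w.1 x, w.2)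

def ioS (l : ℕ) (w : Smp A L M) : Smp A L M :=
  if h : 0 < l ∧ l < M then (w.1, w.2.trans (Equiv.swap ⟨l - 1, by omega⟩ ⟨l, h.2⟩)) else w

def ioM (col : A → C) (K : C → ℕ) (w : Smp A L M) : Smp A L M :=
  (fun x =>
    if (w.2 x : ℕ) + 1 = M ∧ ¬ (x.2 = true ∧ ((w.1 x : ℕ) = 0 ∨ (w.1 x : ℕ) + 1 = L)) then evf (w.1 x)
    else if x.2 = false ∧ (w.2 (x.1, true) : ℕ) + 1 = M ∧ (w.1 (x.1, true) : ℕ) = 0 then odf (w.1 x)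
    else if x.2 = false ∧ (w.2 (x.1, true) : ℕ) + 1 = M ∧ (w.1 (x.1, true) : ℕ) + 1 = L then
      shf (K (col x.1)) (w.1 x)
    else w.1 x, w.2)

def io (col : A → C) (K : C → ℕ) (l : ℕ) : Smp A L M → Smp A L M :=
  if l = 0 then io0 else if l < M then ioS l else ioM col K


lemma upd_ne {w w' : Smp A L M} (h2 : w'.2 = w.2) (h1 : ∃ x, w'.1 x ≠ w.1 x) (f : Equiv.Perm A) :
    w' ≠ actS f w := by
  intro h
  obtain ⟨x, hx⟩ := h1
  have e : x = (f x.1, x.2) := by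
    apply w.2.injective
    rw [← actS_snd f w x, ← h, h2]
  apply hx
  rw [h, actS_fst, ← e]

lemma io0_act (f : Equiv.Perm A) (w : Smp A L M) : io0 (actS f w) = actS f (io0 w) := rfl

lemma io0_io0 (hL : L % 2 = 0) (w : Smp A L M) : io0 (io0 w) = w := by
  refine smp_ext (fun x => ?_) fun x => rfl
  simp only [io0]
  split_ifs
  · exact odf_odf hL _
  · rfl

lemma io0_ne (hL : L % 2 = 0) (hM : 0 < M) (w : Smp A L M) (f : Equiv.Perm A) : io0 w ≠ actS f w := by
  refine upd_ne (w' := io0 w) (w := w) rfl ⟨w.2.symm ⟨0, hM⟩, ?_⟩ f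
  simp only [io0, Equiv.apply_symm_apply, if_true]
  exact odf_ne hL _

lemma ioS_act {l : ℕ} (f : Equiv.Perm A) (w : Smp A L M) : ioS l (actS f w) = actS f (ioS l w) := by
  unfold ioS
  split_ifs <;> rfl

lemma ioS_fst (l : ℕ) (w : Smp A L M) (x : A × Bool) : (ioS l w).1 x = w.1 x := by
  unfold ioS
  split_ifs <;> rfl

lemma ioS_snd {l : ℕ} (h0 : 0 < l) (h1 : l < M) (w : Smp A L M) (x : A × Bool) :
    ((ioS l w).2 x : ℕ) = if (w.2 x : ℕ) = l - 1 then l else if (w.2 x : ℕ) = l then l - 1 else w.2 x := by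
  unfold ioS
  rw [dif_pos ⟨h0, h1⟩]
  simp only [Equiv.trans_apply, Equiv.swap_apply_def, Fin.ext_iff]
  split_ifs <;> rfl

lemma ioS_ioS {l : ℕ} (h0 : 0 < l) (h1 : l < M) (w : Smp A L M) : ioS l (ioS l w) = w := by
  refine smp_ext (fun x => by rw [ioS_fst, ioS_fst]) fun x => Fin.ext ?_
  have a := ioS_snd h0 h1 (ioS l w) x
  have b := ioS_snd h0 h1 w x
  split_ifs at a b <;> omega

lemma ioS_ne {l : ℕ} (h0 : 0 < l) (h1 : l < M) (w : Smp A L M) (f : Equiv.Perm A) :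
    ioS l w ≠ actS f w := by
  intro h
  obtain ⟨⟨a, b⟩, hx⟩ : ∃ x, (w.2 x : ℕ) = l - 1 := ⟨w.2.symm ⟨l - 1, by omega⟩, by simp⟩
  have key : ∀ x, (w.2 (f x.1, x.2) : ℕ) =
      if (w.2 x : ℕ) = l - 1 then l else if (w.2 x : ℕ) = l then l - 1 else w.2 x := fun x => by
    rw [← ioS_snd h0 h1, h, actS_snd]
  have h2 := key (a, b)
  have h3 := key (a, !b)
  rw [if_pos hx] at h2
  have hne : (w.2 (a, !b) : ℕ) ≠ l - 1 := by
    rw [← hx]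
    intro h
    have := w.2.injective (Fin.ext h)
    simp at this
  rw [if_neg hne] at h3
  split_ifs at h3 with h4
  · have := w.2.injective (Fin.ext (h4.trans h2.symm))
    simp at this
  · have := w.2.injective (Fin.ext h3)
    simp only [Prod.mk.injEq, and_true] at this
    simp only [this] at h2
    omega

lemma ioM_act {col : A → C} {K : C → ℕ} (f : Equiv.Perm A) (hf : ∀ a, col (f a) = col a)
    (w : Smp A L M) : ioM col K (actS f w) = actS f (ioM col K w) := by
  refine smp_ext (fun x => ?_) fun x => rfl
  simp only [ioM, actS_fst, actS_snd, hf]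
  rfl

lemma snd_inj {w : Smp A L M} {x y : A × Bool} {t : ℕ} (hx : (w.2 x : ℕ) = t) (hy : (w.2 y : ℕ) = t) :
    x = y := w.2.injective (Fin.ext (hx.trans hy.symm))

/-- trichotomy for the last face -/
lemma ioM_cases (col : A → C) (K : C → ℕ) (hM : 0 < M) (w : Smp A L M) :
    (∃ x, (w.2 x : ℕ) + 1 = M ∧ ¬ (x.2 = true ∧ ((w.1 x : ℕ) = 0 ∨ (w.1 x : ℕ) + 1 = L)) ∧
      (ioM col K w).1 x = evf (w.1 x) ∧ ∀ y, y ≠ x → (ioM col K w).1 y = w.1 y) ∨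
    (∃ a, (w.2 (a, true) : ℕ) + 1 = M ∧ (w.1 (a, true) : ℕ) = 0 ∧
      (ioM col K w).1 (a, false) = odf (w.1 (a, false)) ∧ ∀ y, y ≠ (a, false) → (ioM col K w).1 y = w.1 y) ∨
    (∃ a, (w.2 (a, true) : ℕ) + 1 = M ∧ (w.1 (a, true) : ℕ) + 1 = L ∧ (w.1 (a, true) : ℕ) ≠ 0 ∧
      (ioM col K w).1 (a, false) = shf (K (col a)) (w.1 (a, false)) ∧
        ∀ y, y ≠ (a, false) → (ioM col K w).1 y = w.1 y) := by
  obtain ⟨x, hx⟩ : ∃ x, (w.2 x : ℕ) + 1 = M := ⟨w.2.symm ⟨M - 1, by omega⟩, by simp; omega⟩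
  have huniq : ∀ y, (w.2 y : ℕ) + 1 = M → y = x := fun y hy => w.2.injective (Fin.ext (by omega))
  by_cases h : x.2 = true ∧ ((w.1 x : ℕ) = 0 ∨ (w.1 x : ℕ) + 1 = L)
  · obtain ⟨⟨a, b⟩, rfl⟩ : ∃ y, y = x := ⟨x, rfl⟩
    obtain ⟨h1, h2⟩ := h
    dsimp only at h1
    subst h1
    have hf : ¬ ((w.2 (a, false) : ℕ) + 1 = M) := fun h => by simpa using huniq _ h
    have hoff : ∀ y, y ≠ (a, false) → (ioM col K w).1 y = w.1 y := by
      rintro ⟨a', b'⟩ hy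
      simp only [ioM]
      rw [if_neg, if_neg, if_neg]
      · rintro ⟨h3, h4, -⟩
        subst h3
        have := huniq _ h4
        simp only [Prod.mk.injEq, and_true] at this
        exact hy (by rw [this])
      · rintro ⟨h3, h4, -⟩
        subst h3
        have := huniq _ h4
        simp only [Prod.mk.injEq, and_true] at this
        exact hy (by rw [this])
      · rintro ⟨h3, h4⟩
        have := huniq _ h3
        rw [this] at h4
        obtain ⟨-, rfl⟩ := Prod.ext_iff.mp this
        exact h4 ⟨rfl, h2⟩
    by_cases h0 : (w.1 (a, true) : ℕ) = 0
    · refine Or.inr (Or.inl ⟨a, hx, h0, ?_, hoff⟩)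
      simp only [ioM]
      rw [if_neg (fun h => hf h.1), if_pos ⟨trivial, hx, h0⟩]
    · refine Or.inr (Or.inr ⟨a, hx, h2.resolve_left h0, h0, ?_, hoff⟩)
      simp only [ioM]
      rw [if_neg (fun h => hf h.1), if_neg (fun h => h0 h.2.2), if_pos ⟨trivial, hx, h2.resolve_left h0⟩]
  · refine Or.inl ⟨x, hx, h, ?_, ?_⟩
    · simp only [ioM]
      rw [if_pos ⟨hx, h⟩]
    · intro y hy
      simp only [ioM]
      rw [if_neg, if_neg, if_neg]
      · rintro ⟨h3, h4, h5⟩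
        have e := huniq _ h4
        rw [← e] at h
        exact h ⟨rfl, Or.inr h5⟩
      · rintro ⟨h3, h4, h5⟩
        have e := huniq _ h4
        rw [← e] at h
        exact h ⟨rfl, Or.inl h5⟩
      · rintro ⟨h3, -⟩
        exact hy (huniq _ h3)

lemma ioM_snd (col : A → C) (K : C → ℕ) (w : Smp A L M) : (ioM col K w).2 = w.2 := rfl

lemma ioM_ne {col : A → C} {K g : C → ℕ} (hL : L % 2 = 0) (hK : ∀ c, K c % 2 = 0)
    (hKg : ∀ c, K c * (2 * g c) = L) (hM : 0 < M) (w : Smp A L M) (f : Equiv.Perm A) :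
    ioM col K w ≠ actS f w := by
  refine upd_ne (w' := ioM col K w) (w := w) rfl ?_ f
  rcases ioM_cases col K hM w with ⟨x, -, -, h, -⟩ | ⟨a, -, -, h, -⟩ | ⟨a, -, -, -, h, -⟩
  · exact ⟨x, by rw [h]; exact evf_ne hL _⟩
  · exact ⟨_, by rw [h]; exact odf_ne hL _⟩
  · exact ⟨_, by rw [h]; exact shf_ne (hK _) (hKg _) _⟩

lemma ioM_ioM {col : A → C} {K g : C → ℕ} (hL : L % 2 = 0) (hK : ∀ c, K c % 2 = 0)
    (hKg : ∀ c, K c * (2 * g c) = L) (hM : 0 < M) (w : Smp A L M) :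
    ioM col K (ioM col K w) = w := by
  set w' := ioM col K w with hw'
  have e2 : w'.2 = w.2 := rfl
  refine smp_ext (fun x => ?_) fun x => rfl
  have huniq : ∀ x y, (w.2 y : ℕ) + 1 = M → (w.2 x : ℕ) + 1 = M → y = x :=
    fun x y hy hx => w.2.injective (Fin.ext (by omega))
  rcases ioM_cases col K hM w with ⟨y, h1, h2, h3, h4⟩ | ⟨a, h1, h2, h3, h4⟩ | ⟨a, h1, h2, h2', h3, h4⟩ <;>
  rcases ioM_cases col K hM w' with ⟨z, k1, k2, k3, k4⟩ | ⟨b, k1, k2, k3, k4⟩ | ⟨b, k1, k2, k2', k3, k4⟩ <;>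
  rw [e2] at k1 <;> have := huniq _ _ h1 k1 <;> rw [← hw'] at h3 h4
  · subst this
    by_cases hx : x = y
    · subst hx; rw [k3, h3, evf_evf hL]
    · rw [k4 _ hx, h4 _ hx]
  · subst this
    exfalso
    rw [h3] at k2
    apply h2
    refine ⟨rfl, ?_⟩
    by_contra hc
    push Not at hc
    exact (evf_mid hL _ hc.1 hc.2).1 k2
  · subst this
    exfalso
    rw [h3] at k2
    apply h2
    refine ⟨rfl, ?_⟩
    by_contra hc
    push Not at hc
    exact (evf_mid hL _ hc.1 hc.2).2.1 k2
  · subst this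
    exfalso
    rw [h4 _ (by simp)] at k2
    exact k2 ⟨rfl, Or.inl h2⟩
  · simp only [Prod.mk.injEq, and_true] at this
    subst this
    by_cases hx : x = (a, false)
    · subst hx; rw [k3, h3, odf_odf hL]
    · rw [k4 _ hx, h4 _ hx]
  · simp only [Prod.mk.injEq, and_true] at this
    subst this
    rw [h4 _ (by simp)] at k2'
    exact absurd h2 k2'
  · subst this
    exfalso
    rw [h4 _ (by simp)] at k2
    exact k2 ⟨rfl, Or.inr h2⟩
  · simp only [Prod.mk.injEq, and_true] at this
    subst this
    rw [h4 _ (by simp)] at k2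
    exact absurd k2 h2'
  · simp only [Prod.mk.injEq, and_true] at this
    subst this
    by_cases hx : x = (a, false)
    · subst hx; rw [k3, h3, shf_shf (hK _) (hKg _)]
    · rw [k4 _ hx, h4 _ hx]

/-- the hypothesis of the exchange lemma -/
lemma TT_hT [Fintype A] {col : A → C} {K g : C → ℕ} (hL : L % 2 = 0) (hK : ∀ c, K c % 2 = 0)
    (hKg : ∀ c, K c * (2 * g c) = L) (hM : 0 < M) : ∀ l ≤ M, ∀ F : Smp A L M → ZMod 2,
      (∀ w w', relS col w w' → F w = F w') → (∀ w, F (io col K l w) = F w) → TT L M col F = 0 := by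
  intro l hl F hF hFi
  refine TT_zero hF hFi ?_ ?_ ?_
  · intro f w hf
    unfold io
    split_ifs
    · exact io0_act f w
    · exact ioS_act f w
    · exact ioM_act f hf w
  · intro w
    unfold io
    split_ifs with h1 h2
    · exact io0_io0 hL w
    · exact ioS_ioS (by omega) h2 w
    · exact ioM_ioM hL hK hKg hM w
  · intro w f _
    unfold io
    split_ifs with h1 h2
    · exact io0_ne hL hM w f
    · exact ioS_ne (by omega) h2 w f
    · exact ioM_ne hL hK hKg hM w f

end simp1

end

section
open Topology

section faces
variable {A C : Type} {L M : ℕ}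

/-- wrap-around or collapse identification of grid points -/
def Rw3 (L : ℕ) (x x' : A × Bool → ℕ) : Prop :=
  ∃ a, (∀ y, y ≠ (a, false) → x' y = x y) ∧ ((x (a, false) = 0 ∧ x' (a, false) = L) ∨ x (a, true) = 0)

/-- edge gluing of grid points -/
def Rw4 (L : ℕ) (col : A → C) (K : C → ℕ) (a : A) (p : ℕ) (x x' : A × Bool → ℕ) : Prop :=
  (∀ y, y ≠ (a, false) → x' y = x y) ∧ x (a, true) = L ∧ 2 * p * K (col a) ≤ x (a, false) ∧
    x (a, false) ≤ (2 * p + 1) * K (col a) ∧ x' (a, false) = x (a, false) + K (col a)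

lemma vtx_shift {K p i : ℕ} (hK : K % 2 = 0) (h1 : 2 * p * K ≤ i) (h2 : i < (2 * p + 1) * K) :
    (oddE (i + K) = oddE i + K ∧ 2 * p * K ≤ oddE i ∧ oddE i ≤ (2 * p + 1) * K) ∧
    (evenE (i + K) = evenE i + K ∧ 2 * p * K ≤ evenE i ∧ evenE i ≤ (2 * p + 1) * K) := by
  simp only [oddE, evenE]
  split_ifs <;> omega

lemma vtx_le (hL : L % 2 = 0) (w : Smp A L M) (b : ℕ) (x : A × Bool) : vtx w b x ≤ L := by
  have := (w.1 x).2
  simp only [vtx, oddE, evenE]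
  split_ifs <;> omega

lemma face_lem (col : A → C) (K g : C → ℕ) (hL : L % 2 = 0) (hK : ∀ c, K c % 2 = 0)
    (hKg : ∀ c, K c * (2 * g c) = L) (hM : 0 < M) (l : ℕ) (hl : l ≤ M) (w : Smp A L M) :
    (∀ b ≤ M, b ≠ l → vtx (io col K l w) b = vtx w b ∨ Rw3 L (vtx w b) (vtx (io col K l w) b) ∨
      Rw3 L (vtx (io col K l w) b) (vtx w b)) ∨
    (∃ a, ∃ p < g (col a), ∀ b ≤ M, b ≠ l → Rw4 L col K a p (vtx w b) (vtx (io col K l w) b)) ∨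
    (∃ a, ∃ p < g (col a), ∀ b ≤ M, b ≠ l → Rw4 L col K a p (vtx (io col K l w) b) (vtx w b)) := by
  unfold io
  split_ifs with h1 h2
  · left
    intro b hb hbl
    left
    funext x
    show (if (w.2 x : ℕ) < b then oddE ((if (w.2 x : ℕ) = 0 then odf (w.1 x) else w.1 x : Fin L) : ℕ) else evenE ((if (w.2 x : ℕ) = 0 then odf (w.1 x) else w.1 x : Fin L) : ℕ)) = if (w.2 x : ℕ) < b then oddE (w.1 x) else evenE (w.1 x)
    by_cases h3 : (w.2 x : ℕ) < b
    · rw [if_pos h3, if_pos h3]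
      split_ifs
      · exact oddE_odf hL _
      · rfl
    · rw [if_neg h3, if_neg h3, if_neg (by omega)]
  · left
    intro b hb hbl
    left
    funext x
    have := ioS_snd (by omega) h2 w x
    simp only [vtx, ioS_fst]
    rw [this]
    congr 1
    apply propext
    split_ifs <;> omega
  · obtain rfl : l = M := by omega
    have hoff : ∀ b y, (ioM col K w).1 y = w.1 y → vtx (ioM col K w) b y = vtx w b y := by
      intro b y h
      simp only [vtx, h, ioM_snd]
    rcases ioM_cases col K hM w with ⟨x, h1, h2, h3, h4⟩ | ⟨a, h1, h2, h3, h4⟩ | ⟨a, h1, h2, h2', h3, h4⟩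
    · left
      intro b hb hbl
      have hx : vtx w b x = evenE (w.1 x) := by
        simp only [vtx]; rw [if_neg (by omega)]
      have hx' : vtx (ioM col K w) b x = evenE (evf (w.1 x) : Fin L) := by
        simp only [vtx]; rw [if_neg (by rw [ioM_snd]; omega), h3]
      by_cases hm : (w.1 x : ℕ) = 0 ∨ (w.1 x : ℕ) + 1 = L
      · obtain ⟨a, b'⟩ := x
        have : b' = false := by
          cases b'
          · rfl
          · exact absurd ⟨rfl, hm⟩ h2
        subst this
        right
        rcases evf_end hL _ hm with ⟨e1, e2⟩ | ⟨e1, e2⟩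
        · left
          exact ⟨a, fun y hy => hoff b y (h4 y hy), Or.inl ⟨hx.trans e1, hx'.trans e2⟩⟩
        · right
          exact ⟨a, fun y hy => (hoff b y (h4 y hy)).symm, Or.inl ⟨hx'.trans e2, hx.trans e1⟩⟩
      · left
        push Not at hm
        funext y
        by_cases hy : y = x
        · subst hy
          rw [hx, hx', (evf_mid hL _ hm.1 hm.2).2.2]
        · exact hoff b y (h4 y hy)
    · left
      intro b hb hbl
      right; left
      refine ⟨a, fun y hy => hoff b y (h4 y hy), Or.inr ?_⟩
      simp only [vtx]
      rw [if_neg (by omega), h2]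
      rfl
    · right
      have hLL : ∀ b ≤ l, b ≠ l → vtx w b (a, true) = L := by
        intro b hb hbl
        simp only [vtx]
        rw [if_neg (by omega)]
        simp only [evenE]
        rw [if_neg (by omega)]
        omega
      obtain ⟨p, hp, ⟨e1, e2, e3⟩ | ⟨e1, e2, e3⟩⟩ := shf_cases (hK (col a)) (hKg (col a)) (w.1 (a, false))
      · left
        refine ⟨a, p, hp, fun b hb hbl => ⟨fun y hy => hoff b y (h4 y hy), hLL b hb hbl, ?_⟩⟩
        have := vtx_shift (hK (col a)) e1 e2
        simp only [vtx, ioM_snd, h3, e3]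
        split_ifs
        · exact ⟨this.1.2.1, this.1.2.2, this.1.1⟩
        · exact ⟨this.2.2.1, this.2.2.2, this.2.1⟩
      · right
        refine ⟨a, p, hp, fun b hb hbl => ⟨fun y hy => (hoff b y (h4 y hy)).symm, ?_, ?_⟩⟩
        · rw [hoff b _ (h4 _ (by simp)), hLL b hb hbl]
        have := vtx_shift (hK (col a)) e1 e2
        simp only [vtx, ioM_snd, h3]
        rw [← e3] at this
        split_ifs
        · exact ⟨this.1.2.1, this.1.2.2, this.1.1⟩
        · exact ⟨this.2.2.1, this.2.2.2, this.2.1⟩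

lemma exact_of (col : A → C) (K g : C → ℕ) (hL : L % 2 = 0) (hK : ∀ c, K c % 2 = 0)
    (hKg : ∀ c, K c * (2 * g c) = L) (hM : 0 < M) (c : (A × Bool → ℕ) → ZMod 2)
    (c1 : ∀ (f : Equiv.Perm A) x, (∀ a, col (f a) = col a) → c (x ∘ hatP f) = c x)
    (c2 : ∀ x x', (∀ y, x y ≤ L) → (∀ y, x' y ≤ L) → Rw3 L x x' → c x' = c x)
    (c3 : ∀ x x' a, ∀ p < g (col a), (∀ y, x y ≤ L) → (∀ y, x' y ≤ L) → Rw4 L col K a p x x' → c x' = c x) :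
    ExactF (relS col) (io col K) M (fun b (w : Smp A L M) => c (vtx w b)) where
  inv := by
    rintro b w w' ⟨f, hf, rfl⟩
    show _ = c _
    rw [vtx_act, c1 f _ hf]
  face := by
    intro l hl w b hb hbl
    rcases face_lem col K g hL hK hKg hM l hl w with h | ⟨a, p, hp, h⟩ | ⟨a, p, hp, h⟩
    · rcases h b hb hbl with h | h | h
      · simp only [h]
      · exact c2 _ _ (vtx_le hL w b) (vtx_le hL _ b) h
      · exact (c2 _ _ (vtx_le hL _ b) (vtx_le hL w b) h).symm
    · exact c3 _ _ a p hp (vtx_le hL w b) (vtx_le hL _ b) (h b hb hbl)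
    · exact (c3 _ _ a p hp (vtx_le hL _ b) (vtx_le hL w b) (h b hb hbl)).symm

/-- gauge function -/
def ga (L K u r : ℕ) : ZMod 2 := if r = L ∧ K ≤ u ∧ u < 2 * K then 1 else 0

variable [Fintype A] [DecidableEq C]

def gg (L : ℕ) (col : A → C) (K : C → ℕ) (j : C) (x : A × Bool → ℕ) : ZMod 2 :=
  ∑ a, if col a = j then ga L (K j) (x (a, false)) (x (a, true)) else 0

lemma gg_diff (col : A → C) (K : C → ℕ) (j : C) (a : A) {x x' : A × Bool → ℕ}
    (h : ∀ y : A × Bool, y.1 ≠ a → x' y = x y) :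
    gg L col K j x' + gg L col K j x = if col a = j then
      ga L (K j) (x' (a, false)) (x' (a, true)) + ga L (K j) (x (a, false)) (x (a, true)) else 0 := by
  unfold gg
  rw [← Finset.sum_add_distrib, Finset.sum_eq_single a]
  · split_ifs <;> simp
  · intro b _ hb
    rw [h (b, false) hb, h (b, true) hb]
    exact two_zmod _
  · simp

lemma eq_of_add_zero {a b : ZMod 2} (h : a + b = 0) : a = b := by
  have := two_zmod b
  linear_combination h - this

lemma gg_Rw3 (col : A → C) (K g : C → ℕ) (hg : ∀ c, 1 ≤ g c)
    (hKg : ∀ c, K c * (2 * g c) = L) (hL0 : 0 < L) (j : C) {x x' : A × Bool → ℕ} (h : Rw3 L x x') :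
    gg L col K j x' = gg L col K j x := by
  obtain ⟨a, h1, h2⟩ := h
  apply eq_of_add_zero
  rw [gg_diff col K j a (fun y hy => h1 y (by rintro rfl; exact hy rfl))]
  split_ifs with hc
  · have hr : x' (a, true) = x (a, true) := h1 _ (by simp)
    rw [hr]
    rcases h2 with ⟨h2, h3⟩ | h2
    · rw [h2, h3]
      have : 2 * K j ≤ L := by
        rw [← hKg j]; nlinarith [hg j]
      unfold ga
      rw [if_neg (by omega), if_neg (by omega), add_zero]
    · unfold ga
      rw [if_neg (by omega), if_neg (by omega), add_zero]
  · rfl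

lemma gg_Rw4 (col : A → C) (K : C → ℕ) (j : C) (hK0 : 0 < K j) {a : A} {p : ℕ} {x x' : A × Bool → ℕ}
    (h : Rw4 L col K a p x x') :
    gg L col K j x' + gg L col K j x = if col a = j ∧ p = 0 then 1 else 0 := by
  obtain ⟨h1, h2, h3, h4, h5⟩ := h
  rw [gg_diff col K j a (fun y hy => h1 y (by rintro rfl; exact hy rfl))]
  by_cases hc : col a = j
  · subst hc
    have hr : x' (a, true) = x (a, true) := h1 _ (by simp)
    simp only [true_and, if_true]
    rw [hr, h2, h5]
    unfold ga
    rcases Nat.eq_zero_or_pos p with rfl | hp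
    · rw [if_pos rfl]
      simp only [mul_zero, zero_mul, zero_add, one_mul, true_and] at h3 h4 ⊢
      rcases Nat.lt_or_ge (x (a, false)) (K (col a)) with h | h
      · rw [if_pos (by omega), if_neg (by omega), add_zero]
      · rw [if_neg (by omega), if_pos (by omega), zero_add]
    · have : 2 * K (col a) ≤ 2 * p * K (col a) := by nlinarith
      rw [if_neg (by omega), if_neg (by omega), if_neg (by omega), add_zero]
  · rw [if_neg hc, if_neg (fun h => hc h.1)]

lemma good_gg (col : A → C) (K g : C → ℕ) (hg : ∀ c, 1 ≤ g c) (hL0 : 0 < L) (hL : L % 2 = 0) (hK : ∀ c, K c % 2 = 0)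
    (hKg : ∀ c, K c * (2 * g c) = L) (hM : 0 < M) (j : C) :
    GoodF (relS col) (io col K) M (fun b (w : Smp A L M) => gg L col K j (vtx w b)) where
  inv := by
    rintro b w w' ⟨f, hf, rfl⟩
    show _ = gg _ _ _ _ _
    rw [vtx_act]
    unfold gg
    rw [← Equiv.sum_comp f]
    refine Finset.sum_congr rfl fun a _ => ?_
    rw [hf]; rfl
  face := by
    intro l hl w
    have hK0 : 0 < K j := by
      rcases Nat.eq_zero_or_pos (K j) with h | h
      · have := hKg j
        rw [h] at this
        omega
      · exact h
    rcases face_lem col K g hL hK hKg hM l hl w with h | ⟨a, p, hp, h⟩ | ⟨a, p, hp, h⟩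
    · refine ⟨0, fun b hb hbl => ?_⟩
      rw [add_zero]
      rcases h b hb hbl with h | h | h
      · simp only [h]
      · exact gg_Rw3 col K g hg hKg hL0 j h
      · exact (gg_Rw3 col K g hg hKg hL0 j h).symm
    · refine ⟨if col a = j ∧ p = 0 then 1 else 0, fun b hb hbl => ?_⟩
      rw [← gg_Rw4 col K j hK0 (h b hb hbl)]
      linear_combination - two_zmod (gg L col K j (vtx w b))
    · refine ⟨if col a = j ∧ p = 0 then 1 else 0, fun b hb hbl => ?_⟩
      rw [← gg_Rw4 col K j hK0 (h b hb hbl)]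
      linear_combination - two_zmod (gg L col K j (vtx w b))

end faces

end

section
open Topology

section count
set_option linter.unusedSectionVars false
variable {A C : Type} {L M : ℕ}

lemma term_lem {L K u v s r : ℕ} (hL : L % 2 = 0) (hK : K % 2 = 0) (hsr : s ≠ r) :
    (ga L K (evenE u) (if r < s then oddE v else evenE v) + ga L K (oddE u) (if r < s then oddE v else evenE v)) *
    (ga L K (if s < r then oddE u else evenE u) (evenE v) + ga L K (if s < r then oddE u else evenE u) (oddE v))
     = if s < r ∧ evenE v = L ∧ u + 1 = 2 * K then 1 else 0 := by
  have hodd : ∀ v, oddE v ≠ L := by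
    intro v; unfold oddE; split_ifs <;> omega
  have hga : ∀ u, ga L K u (oddE v) = 0 := by
    intro u; unfold ga; rw [if_neg (fun h => hodd v h.1)]
  rcases lt_or_gt_of_ne hsr with h | h
  · rw [if_neg (by omega), if_pos h, hga, add_zero]
    by_cases hv : evenE v = L
    · rw [hv]
      unfold ga evenE oddE
      simp only [h, true_and]
      split_ifs <;> first | omega | rfl
    · unfold ga
      simp [hv]
  · rw [if_pos h, hga, hga, add_zero, zero_mul, if_neg (by omega)]

variable [Fintype A] [DecidableEq C]

def goodS (col : A → C) (K : C → ℕ) (jj : ℕ → C) (w : Smp A L M) : Prop :=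
  ∀ a, (col a = jj (w.2 (a, false)) ∧ col a = jj (w.2 (a, true))) ∧
    (w.2 (a, false) : ℕ) < w.2 (a, true) ∧ evenE (w.1 (a, true)) = L ∧ (w.1 (a, false) : ℕ) + 1 = 2 * K (col a)

lemma DD_gg (col : A → C) (K : C → ℕ) (j : C) (w : Smp A L M) (x : A × Bool) :
    DD (fun b (w : Smp A L M) => gg L col K j (vtx w b)) (w.2 x) w = if col x.1 = j then
      ga L (K j) (vtx w (w.2 x) (x.1, false)) (vtx w (w.2 x) (x.1, true)) +
      ga L (K j) (vtx w (w.2 x + 1) (x.1, false)) (vtx w (w.2 x + 1) (x.1, true)) else 0 := by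
  unfold DD
  refine gg_diff col K j x.1 fun y hy => ?_
  have : (w.2 x : ℕ) ≠ w.2 y := fun h => hy (by rw [w.2.injective (Fin.ext h)])
  unfold vtx
  congr 1
  apply propext
  omega

open Classical in
lemma prod_good (col : A → C) (K : C → ℕ) (jj : ℕ → C) (hL : L % 2 = 0) (hK : ∀ c, K c % 2 = 0)
    (w : Smp A L M) :
    ∏ t ∈ Finset.range M, DD (fun b (w : Smp A L M) => gg L col K (jj t) (vtx w b)) t w =
      if goodS col K jj w then 1 else 0 := by
  rw [Finset.prod_range, ← Equiv.prod_comp w.2, Fintype.prod_prod_type]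
  have : ∀ a : A, ∏ y : Bool, DD (fun b (w' : Smp A L M) => gg L col K (jj (w.2 (a, y))) (vtx w' b)) (w.2 (a, y)) w =
      if ((col a = jj (w.2 (a, false)) ∧ col a = jj (w.2 (a, true))) ∧
    (w.2 (a, false) : ℕ) < w.2 (a, true) ∧ evenE (w.1 (a, true)) = L ∧ (w.1 (a, false) : ℕ) + 1 = 2 * K (col a))
      then 1 else 0 := by
    intro a
    rw [Fintype.prod_bool, mul_comm, DD_gg, DD_gg]
    dsimp only
    by_cases h1 : col a = jj (w.2 (a, false)) ∧ col a = jj (w.2 (a, true))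
    · have hsr : (w.2 (a, false) : ℕ) ≠ w.2 (a, true) := fun h => by
        simpa using w.2.injective (Fin.ext h)
      rw [if_pos h1.1, if_pos h1.2, ← h1.1, ← h1.2]
      have key := term_lem (u := w.1 (a, false)) (v := w.1 (a, true)) hL (hK (col a)) hsr
      simp only [true_and]
      rw [← key]
      simp only [vtx, lt_irrefl, Nat.lt_succ_self, if_true, if_false]
      have e1 : ((w.2 (a, true) : ℕ) < w.2 (a, false) + 1) = ((w.2 (a, true) : ℕ) < w.2 (a, false)) :=
        propext (by omega)
      have e2 : ((w.2 (a, false) : ℕ) < w.2 (a, true) + 1) = ((w.2 (a, false) : ℕ) < w.2 (a, true)) :=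
        propext (by omega)
      simp only [e1, e2]
    · rw [if_neg (fun h : (col a = jj (w.2 (a, false)) ∧ col a = jj (w.2 (a, true))) ∧ _ => h1 h.1)]
      by_cases h2 : col a = jj (w.2 (a, false))
      · rw [if_neg (fun h => h1 ⟨h2, h⟩), mul_zero]
      · rw [if_neg h2, zero_mul]
  rw [Finset.prod_congr rfl fun a _ => this a, Finset.prod_ite_zero]
  simp [goodS]

/-- position pairs occupied by the same point -/
def Bm (m : ℕ) (w : Smp A L M) : Prop :=
  ∀ x y, (w.2 x : ℕ) = 2 * m → (w.2 y : ℕ) = 2 * m + 1 → x.1 = y.1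

lemma goodS_act {col : A → C} {K : C → ℕ} {jj : ℕ → C} {w w' : Smp A L M} (h : relS col w w')
    (hw : goodS col K jj w) : goodS col K jj w' := by
  obtain ⟨f, hf, rfl⟩ := h
  intro a
  have := hw (f a)
  rw [hf] at this
  exact this

lemma Bm_act {col : A → C} {m : ℕ} {w w' : Smp A L M} (h : relS col w w')
    (hw : Bm m w) : Bm m w' := by
  obtain ⟨f, hf, rfl⟩ := h
  intro x y hx hy
  exact f.injective (hw (f x.1, x.2) (f y.1, y.2) hx hy)

lemma H_swap {col : A → C} {K : C → ℕ} {jj : ℕ → C} (hjj : ∀ m, jj (2 * m + 1) = jj (2 * m)) {m : ℕ}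
    (hm : 2 * m + 1 < M) {w : Smp A L M} (h : goodS col K jj w ∧ (∀ i < m, Bm i w) ∧ ¬ Bm m w) :
    goodS col K jj (ioS (2 * m + 1) w) ∧ (∀ i < m, Bm i (ioS (2 * m + 1) w)) ∧ ¬ Bm m (ioS (2 * m + 1) w) := by
  obtain ⟨h1, h2, h3⟩ := h
  have hp := ioS_snd (show 0 < 2 * m + 1 by omega) hm w
  simp only [Nat.add_sub_cancel] at hp
  have hj : ∀ x, jj ((ioS (2 * m + 1) w).2 x) = jj (w.2 x) := by
    intro x
    rw [hp]
    split_ifs with e1 e2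
    · rw [e1, hjj]
    · rw [e2, hjj]
    · rfl
  refine ⟨fun a => ?_, fun i hi x y hx hy => ?_, fun hB => ?_⟩
  · obtain ⟨⟨k1, k2⟩, k3, k4⟩ := h1 a
    refine ⟨⟨by rw [hj, ← k1], by rw [hj, ← k2]⟩, ?_, by simpa only [ioS_fst] using k4⟩
    rw [hp, hp]
    by_cases hc : (w.2 (a, false) : ℕ) = 2 * m ∧ (w.2 (a, true) : ℕ) = 2 * m + 1
    · exfalso
      apply h3
      intro x y hx hy
      rw [snd_inj hx hc.1, snd_inj hy hc.2]
    · split_ifs <;> omega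
  · rw [hp] at hx hy
    refine h2 i hi x y ?_ ?_
    · split_ifs at hx <;> omega
    · split_ifs at hy <;> omega
  · apply h3
    intro x y hx hy
    refine (hB y x ?_ ?_).symm
    · rw [hp, if_neg (by omega), if_pos hy]
    · rw [hp, if_pos hx]

open Classical in
lemma TT_drop {col : A → C} {K g : C → ℕ} {jj : ℕ → C} (hL : L % 2 = 0) (hK : ∀ c, K c % 2 = 0)
    (hKg : ∀ c, K c * (2 * g c) = L)
    (hjj : ∀ m, jj (2 * m + 1) = jj (2 * m)) (m : ℕ) (hm : 2 * m ≤ M) :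
    TT L M col (fun w => if goodS col K jj w then 1 else 0) =
    TT L M col (fun w => if goodS col K jj w ∧ ∀ i < m, Bm i w then 1 else 0) := by
  induction m with
  | zero => simp
  | succ m ih =>
    rw [ih (by omega)]
    apply eq_of_add_zero
    rw [← map_add]
    have e : (fun w : Smp A L M => if goodS col K jj w ∧ ∀ i < m, Bm i w then (1 : ZMod 2) else 0) +
        (fun w => if goodS col K jj w ∧ ∀ i < m + 1, Bm i w then 1 else 0) =
        fun w => if goodS col K jj w ∧ (∀ i < m, Bm i w) ∧ ¬ Bm m w then 1 else 0 := by
      funext w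
      simp only [Pi.add_apply, Nat.forall_lt_succ_right]
      by_cases hA : goodS col K jj w ∧ ∀ i < m, Bm i w
      · rw [if_pos hA]
        by_cases h3 : Bm m w
        · rw [if_pos ⟨hA.1, hA.2, h3⟩, if_neg (fun h => h.2.2 h3)]
          rfl
        · rw [if_neg (fun h => h3 h.2.2), if_pos ⟨hA.1, hA.2, h3⟩, add_zero]
      · rw [if_neg hA, if_neg (fun h => hA ⟨h.1, h.2.1⟩), if_neg (fun h => hA ⟨h.1, h.2.1⟩), add_zero]
    rw [e]
    have hlM : 2 * m + 1 < M := by omega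
    refine TT_hT (col := col) hL hK hKg (by omega) (2 * m + 1) (by omega) _ ?_ ?_
    · have hh : ∀ w w' : Smp A L M, relS col w w' → (goodS col K jj w ∧ (∀ i < m, Bm i w) ∧ ¬ Bm m w) →
          goodS col K jj w' ∧ (∀ i < m, Bm i w') ∧ ¬ Bm m w' := fun w w' h hw =>
        ⟨goodS_act h hw.1, fun i hi => Bm_act h (hw.2.1 i hi), fun h' => hw.2.2 (Bm_act ((relS_equiv col).symm h) h')⟩
      intro w w' h
      congr 1
      exact propext ⟨hh w w' h, hh w' w ((relS_equiv col).symm h)⟩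
    · intro w
      have : io col K (2 * m + 1) w = ioS (2 * m + 1) w := by
        unfold io
        rw [if_neg (by omega), if_pos hlM]
      rw [this]
      congr 1
      refine propext ⟨fun h => ?_, H_swap hjj hlM⟩
      have := H_swap hjj hlM h
      rwa [ioS_ioS (by omega) hlM] at this

lemma matched {col : A → C} {K : C → ℕ} {jj : ℕ → C} {N : ℕ} (hMN : M = N * 2) {w : Smp A L M}
    (hg : goodS col K jj w) (hB : ∀ i < N, Bm i w) (a : A) :
    (w.2 (a, false) : ℕ) % 2 = 0 ∧ (w.2 (a, true) : ℕ) = w.2 (a, false) + 1 := by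
  have hlt := (w.2 (a, false)).2
  obtain ⟨i, hi | hi⟩ : ∃ i, (w.2 (a, false) : ℕ) = 2 * i ∨ (w.2 (a, false) : ℕ) = 2 * i + 1 :=
    ⟨(w.2 (a, false) : ℕ) / 2, by omega⟩
  · obtain ⟨y, hy⟩ : ∃ y, (w.2 y : ℕ) = 2 * i + 1 := ⟨w.2.symm ⟨2 * i + 1, by omega⟩, by simp⟩
    have h1 := hB i (by omega) _ _ hi hy
    obtain ⟨b, c⟩ := y
    dsimp only at h1
    subst h1
    cases c
    · omega
    · omega
  · obtain ⟨y, hy⟩ : ∃ y, (w.2 y : ℕ) = 2 * i := ⟨w.2.symm ⟨2 * i, by omega⟩, by simp⟩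
    have h1 := hB i (by omega) _ _ hy hi
    obtain ⟨b, c⟩ := y
    dsimp only at h1
    subst h1
    cases c
    · omega
    · have := (hg b).2.1
      omega

lemma matched_rel {col : A → C} {K : C → ℕ} {jj : ℕ → C} {N : ℕ} (hMN : M = N * 2) {w w' : Smp A L M}
    (hg : goodS col K jj w) (hB : ∀ i < N, Bm i w) (hg' : goodS col K jj w') (hB' : ∀ i < N, Bm i w') :
    relS col w w' := by
  have h1 := matched hMN hg hB
  have h2 := matched hMN hg' hB'
  have hf : ∀ a, ∃ b, w.2 (b, false) = w'.2 (a, false) := by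
    intro a
    obtain ⟨⟨b, c⟩, hx⟩ := w.2.surjective (w'.2 (a, false))
    cases c
    · exact ⟨b, hx⟩
    · exfalso
      have := congrArg Fin.val hx
      have := h1 b
      have := h2 a
      omega
  choose f hf using hf
  have hinj : Function.Injective f := by
    intro a a' h
    have := hf a
    rw [h, hf a'] at this
    simpa using (w'.2.injective this).symm
  have hbij : Function.Bijective f := Finite.injective_iff_bijective.mp hinj
  have hcol : ∀ a, col (f a) = col a := fun a => by
    rw [(hg' a).1.1, (hg (f a)).1.1, hf]
  have hf' : ∀ a, w.2 (f a, true) = w'.2 (a, true) := fun a => Fin.ext (by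
    rw [(h1 (f a)).2, (h2 a).2, hf])
  refine ⟨Equiv.ofBijective f hbij, hcol, smp_ext ?_ ?_⟩
  · rintro ⟨a, c⟩
    simp only [actS_fst, Equiv.ofBijective_apply]
    apply Fin.ext
    cases c
    · have e1 := (hg (f a)).2.2.2
      have e2 := (hg' a).2.2.2
      rw [hcol] at e1
      omega
    · have e1 := (hg (f a)).2.2.1
      have e2 := (hg' a).2.2.1
      have l1 := (w.1 (f a, true)).2
      have l2 := (w'.1 (a, true)).2
      simp only [evenE] at e1 e2
      split_ifs at e1 e2 <;> omega
  · rintro ⟨a, c⟩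
    simp only [actS_snd, Equiv.ofBijective_apply]
    cases c
    · exact (hf a).symm
    · exact (hf' a).symm

lemma matched_ex {N : ℕ} {col : A → C} {K g : C → ℕ} {jj : ℕ → C} (o : A ≃ Fin N)
    (hL : L % 2 = 0) (hL0 : 0 < L) (hg : ∀ c, 1 ≤ g c) (hKg : ∀ c, K c * (2 * g c) = L)
    (hjj : ∀ m, jj (2 * m + 1) = jj (2 * m)) (hjo : ∀ a, jj (2 * o a) = col a) :
    ∃ w : Smp A L (N * 2), goodS col K jj w ∧ ∀ i < N, Bm i w := by
  have hK2 : ∀ c, 2 * K c ≤ L ∧ 0 < K c := by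
    intro c
    have h2 := hg c
    have := hKg c
    constructor
    · nlinarith
    · rcases Nat.eq_zero_or_pos (K c) with h | h
      · rw [h] at this; omega
      · exact h
  let e : A × Bool ≃ Fin (N * 2) := (Equiv.prodCongr o finTwoEquiv.symm).trans finProdFinEquiv
  have he0 : ∀ a, (e (a, false) : ℕ) = 2 * o a := by
    intro a; simp [e, finProdFinEquiv, finTwoEquiv]
  have he1 : ∀ a, (e (a, true) : ℕ) = 2 * o a + 1 := by
    intro a; simp [e, finProdFinEquiv, finTwoEquiv]; omega
  refine ⟨(fun x => ⟨if x.2 then L - 1 else 2 * K (col x.1) - 1, ?_⟩, e), fun a => ⟨⟨?_, ?_⟩, ?_, ?_, ?_⟩, ?_⟩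
  · have := hK2 (col x.1)
    split_ifs <;> omega
  · rw [he0, hjo]
  · rw [he1, hjj, hjo]
  · simp only [he0, he1]; omega
  · simp only [evenE, if_true]
    split_ifs <;> omega
  · have := hK2 (col a)
    simp
    omega
  · rintro i hi ⟨a, c⟩ ⟨b, d⟩ hx hy
    dsimp only at hx hy ⊢
    have : (o a : ℕ) = o b := by
      cases c <;> cases d <;> simp only [he0, he1] at hx hy <;> omega
    exact o.injective (Fin.ext this)

open Classical in
theorem TT_count {N : ℕ} {col : A → C} {K g : C → ℕ} {jj : ℕ → C} (o : A ≃ Fin N)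
    (hL : L % 2 = 0) (hL0 : 0 < L) (hK : ∀ c, K c % 2 = 0) (hg : ∀ c, 1 ≤ g c) (hKg : ∀ c, K c * (2 * g c) = L)
    (hjj : ∀ m, jj (2 * m + 1) = jj (2 * m)) (hjo : ∀ a, jj (2 * o a) = col a) :
    TT L (N * 2) col (fun w => ∏ t ∈ Finset.range (N * 2),
      DD (fun b (w : Smp A L (N * 2)) => gg L col K (jj t) (vtx w b)) t w) = 1 := by
  have e : (fun w : Smp A L (N * 2) => ∏ t ∈ Finset.range (N * 2),
      DD (fun b (w : Smp A L (N * 2)) => gg L col K (jj t) (vtx w b)) t w) =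
      fun w => if goodS col K jj w then 1 else 0 := funext fun w => prod_good col K jj hL hK w
  rw [e, TT_drop hL hK hKg hjj N (by omega)]
  obtain ⟨w0, h0, h0'⟩ := matched_ex (col := col) (K := K) o hL hL0 hg hKg hjj hjo
  show ∑ q : Quotient (stS A L (N * 2) col), _ = (1 : ZMod 2)
  have hrel : relS col w0 (Quotient.mk (stS A L (N * 2) col) w0).out :=
    (relS_equiv col).symm (Quotient.exact (Quotient.out_eq (Quotient.mk (stS A L (N * 2) col) w0)))
  rw [Finset.sum_eq_single (Quotient.mk (stS A L (N * 2) col) w0)]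
  · dsimp only
    rw [if_pos]
    exact ⟨goodS_act hrel h0, fun i hi => Bm_act hrel (h0' i hi)⟩
  · intro q _ hq
    dsimp only
    rw [if_neg]
    rintro ⟨h1, h2⟩
    apply hq
    rw [← Quotient.out_eq q]
    exact Quotient.sound (s := stS A L (N * 2) col) (matched_rel rfl h1 h2 h0 h0')
  · simp

/-- combinatorial lower bound -/
theorem L2 {N : ℕ} (hN : 0 < N) {col : A → C} {K g : C → ℕ} {jj : ℕ → C} (o : A ≃ Fin N)
    (hL : L % 2 = 0) (hL0 : 0 < L) (hK : ∀ c, K c % 2 = 0) (hg : ∀ c, 1 ≤ g c) (hKg : ∀ c, K c * (2 * g c) = L)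
    (hjj : ∀ m, jj (2 * m + 1) = jj (2 * m)) (hjo : ∀ a, jj (2 * o a) = col a)
    (c : ℕ → (A × Bool → ℕ) → ZMod 2)
    (c1 : ∀ t (f : Equiv.Perm A) x, (∀ a, col (f a) = col a) → c t (x ∘ hatP f) = c t x)
    (c2 : ∀ t x x', (∀ y, x y ≤ L) → (∀ y, x' y ≤ L) → Rw3 L x x' → c t x' = c t x)
    (c3 : ∀ t x x' a, ∀ p < g (col a), (∀ y, x y ≤ L) → (∀ y, x' y ≤ L) → Rw4 L col K a p x x' →
      c t x' = c t x) :
    ∃ w : Smp A L (N * 2), ∀ t < N * 2,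
      gg L col K (jj t) (vtx w t) + c t (vtx w t) ≠ gg L col K (jj t) (vtx w (t + 1)) + c t (vtx w (t + 1)) := by
  by_contra hcon
  push Not at hcon
  have hM : 0 < N * 2 := by omega
  obtain ⟨m, hm⟩ : ∃ m, N * 2 = m + 1 := ⟨N * 2 - 1, by omega⟩
  have h1 := TT_count (L := L) (col := col) (K := K) o hL hL0 hK hg hKg hjj hjo
  have hTT := TT_hT (A := A) (col := col) hL hK hKg hM
  have hgood := fun t => good_gg (M := N * 2) col K g hg hL0 hL hK hKg hM (jj t)
  have hex := fun t => exact_of (M := N * 2) col K g hL hK hKg hM (c t) (c1 t) (c2 t) (c3 t)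
  generalize N * 2 = M at *
  subst hm
  have := T_exchange (m := m) (TT L (m + 1) col) hTT hgood hex
  rw [h1] at this
  apply zero_ne_one (α := ZMod 2)
  rw [← this]
  symm
  have e : (fun w : Smp A L (m + 1) => ∏ t ∈ Finset.range (m + 1),
    DD (fun b w => gg L col K (jj t) (vtx w b) + c t (vtx w b)) t w) = 0 := by
    funext w
    obtain ⟨t, ht, he⟩ := hcon w
    refine Finset.prod_eq_zero (Finset.mem_range.mpr ht) ?_
    unfold DD
    dsimp only
    rw [he]
    exact two_zmod _
  rw [e, map_zero]

end count

end

section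
open Topology

section geom
variable {k : ℕ}

def emb (n : Fin k → ℕ) (L : ℕ) (y : AIdx n × Bool → ℝ) : AIdx n → I × I := fun a =>
  (Set.projIcc 0 1 zero_le_one (y (a, true) / L), Set.projIcc 0 1 zero_le_one (y (a, false) / L))

lemma continuous_emb (n : Fin k → ℕ) (L : ℕ) : Continuous (emb n L) := by
  unfold emb
  refine continuous_pi fun a => Continuous.prodMk ?_ ?_
  · exact continuous_projIcc.comp ((continuous_apply _).div_const _)
  · exact continuous_projIcc.comp ((continuous_apply _).div_const _)

lemma dist_emb (n : Fin k → ℕ) (L : ℕ) (hL : 0 < L) (y y' : AIdx n × Bool → ℝ) :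
    dist (emb n L y) (emb n L y') ≤ dist y y' / L := by
  have hL' : (0 : ℝ) < L := by exact_mod_cast hL
  have key : ∀ x, dist (Set.projIcc (0 : ℝ) 1 zero_le_one (y x / L)) (Set.projIcc 0 1 zero_le_one (y' x / L))
      ≤ dist y y' / L := by
    intro x
    refine ((LipschitzWith.projIcc (zero_le_one : (0 : ℝ) ≤ 1)).dist_le_mul _ _).trans ?_
    rw [NNReal.coe_one, one_mul, Real.dist_eq, ← sub_div, abs_div, abs_of_pos hL', ← Real.dist_eq]
    gcongr
    exact dist_le_pi_dist y y' x
  rw [dist_pi_le_iff (by positivity)]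
  intro a
  rw [Prod.dist_eq]
  exact max_le (key _) (key _)

def embN (n : Fin k → ℕ) (L : ℕ) (x : AIdx n × Bool → ℕ) : AIdx n → I × I := emb n L fun y => (x y : ℝ)

lemma proj_val {L u : ℕ} (hL : 0 < L) (h : u ≤ L) :
    ((Set.projIcc (0 : ℝ) 1 zero_le_one ((u : ℝ) / L) : I) : ℝ) = u / L := by
  have hL' : (0 : ℝ) < L := by exact_mod_cast hL
  have : ((u : ℝ) / L) ∈ I := ⟨by positivity, by rw [div_le_one hL']; exact_mod_cast h⟩
  rw [Set.projIcc_of_mem _ this]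

lemma proj_zero {L : ℕ} : (Set.projIcc (0 : ℝ) 1 zero_le_one (((0 : ℕ) : ℝ) / L) : I) = 0 := by
  simp

lemma proj_one {L : ℕ} (hL : 0 < L) : (Set.projIcc (0 : ℝ) 1 zero_le_one ((L : ℝ) / L) : I) = 1 := by
  have hL' : (L : ℝ) ≠ 0 := by exact_mod_cast hL.ne'
  rw [div_self hL']; simp

lemma pp_embN_perm (n g : Fin k → ℕ) (L : ℕ) (f : Equiv.Perm (AIdx n)) (hf : ∀ a, (f a).1 = a.1)
    (x : AIdx n × Bool → ℕ) : pp n g (embN n L (x ∘ hatP f)) = pp n g (embN n L x) := by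
  symm
  rw [pp_eq]
  have h1 : ∀ j (i : Fin (n j)), ∃ i' : Fin (n j), f ⟨j, i⟩ = ⟨j, i'⟩ := by
    intro j i
    have := hf ⟨j, i⟩
    rcases hh : f ⟨j, i⟩ with ⟨j', i'⟩
    rw [hh] at this
    dsimp only at this
    subst this
    exact ⟨i', rfl⟩
  choose e he using h1
  have hinj : ∀ j, Function.Injective (e j) := by
    intro j i i' h
    have := he j i
    rw [h, ← he j i'] at this
    simpa using f.injective this
  refine ⟨fun j => Equiv.ofBijective (e j) (Finite.injective_iff_bijective.mp (hinj j)), fun j i => ?_⟩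
  rw [Equiv.ofBijective_apply, ← he]
  rfl

lemma pp_congr (n g : Fin k → ℕ) {z z' : AIdx n → I × I} (h : ∀ a, qm (g a.1) (z a) = qm (g a.1) (z' a)) :
    pp n g z = pp n g z' := by
  rw [pp_eq]
  exact ⟨fun _ => Equiv.refl _, fun j i => h ⟨j, i⟩⟩

lemma embN_off (n : Fin k → ℕ) (L : ℕ) {a : AIdx n} {x x' : AIdx n × Bool → ℕ}
    (h : ∀ y, y ≠ (a, false) → x' y = x y) {b : AIdx n} (hb : b ≠ a) : embN n L x' b = embN n L x b := by
  simp only [embN, emb]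
  rw [h (b, true) (by simp), h (b, false) (by simpa using hb)]

lemma pp_Rw3 (n g : Fin k → ℕ) {L : ℕ} (hL : 0 < L) {x x' : AIdx n × Bool → ℕ} (h : Rw3 L x x') :
    pp n g (embN n L x') = pp n g (embN n L x) := by
  obtain ⟨a, h1, h2⟩ := h
  refine pp_congr n g fun b => ?_
  by_cases hb : b = a
  · subst hb
    have hr : x' (b, true) = x (b, true) := h1 _ (by simp)
    simp only [embN, emb]
    rw [hr]
    rcases h2 with ⟨h2, h3⟩ | h2
    · rw [h2, h3, proj_zero, proj_one hL]
      exact (qm_wrap _ _).symm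
    · rw [h2, proj_zero]
      exact qm_zero _ _ _
  · rw [embN_off n L h1 hb]

lemma pp_Rw4 (n g : Fin k → ℕ) {L : ℕ} (hL : 0 < L) {K : Fin k → ℕ} (hKg : ∀ c, K c * (2 * g c) = L)
    {x x' : AIdx n × Bool → ℕ} (hx : ∀ y, x y ≤ L) (hx' : ∀ y, x' y ≤ L) {a : AIdx n} {p : ℕ} (hp : p < g a.1)
    (h : Rw4 L (Sigma.fst : AIdx n → Fin k) K a p x x') :
    pp n g (embN n L x') = pp n g (embN n L x) := by
  obtain ⟨h1, h2, h3, h4, h5⟩ := h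
  refine pp_congr n g fun b => ?_
  by_cases hb : b = a
  · subst hb
    have hr : x' (b, true) = x (b, true) := h1 _ (by simp)
    simp only [embN, emb]
    rw [hr, h2, proj_one hL]
    have e0 := hKg b.1
    have hK0 : 0 < K b.1 := by
      rcases Nat.eq_zero_or_pos (K b.1) with h | h
      · rw [h] at e0; omega
      · exact h
    have hKr : (0 : ℝ) < K b.1 := by exact_mod_cast hK0
    have hgr : (0 : ℝ) < g b.1 := by
      have : 0 < g b.1 := by omega
      exact_mod_cast this
    have eL : (L : ℝ) = K b.1 * (2 * g b.1) := by rw [← e0]; push_cast; ring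
    have q3 : (2 * p * K b.1 : ℝ) ≤ x (b, false) := by exact_mod_cast h3
    have q4 : (x (b, false) : ℝ) ≤ (2 * p + 1) * K b.1 := by exact_mod_cast h4
    have q5 : (x' (b, false) : ℝ) = x (b, false) + K b.1 := by exact_mod_cast h5
    symm
    refine qm_glue (g b.1) p hp ((x (b, false) : ℝ) / K b.1 - 2 * p) ?_ ?_ _ _ ?_ ?_
    · rw [sub_nonneg, le_div_iff₀ hKr]; exact q3
    · rw [sub_le_iff_le_add, div_le_iff₀ hKr]; linarith
    · rw [proj_val hL (hx _), eL]
      field_simp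
      ring
    · rw [proj_val hL (hx' _), eL, q5]
      field_simp
      ring
  · rw [embN_off n L h1 hb]

lemma ggF_embN (n g : Fin k → ℕ) {L : ℕ} (hL : 0 < L) {K : Fin k → ℕ} (hKg : ∀ c, K c * (2 * g c) = L)
    {x : AIdx n × Bool → ℕ} (hx : ∀ y, x y ≤ L) (j : Fin k) :
    ggF n g j (embN n L x) = gg L (Sigma.fst : AIdx n → Fin k) K j x := by
  unfold ggF gg
  rw [Fintype.sum_sigma, Finset.sum_eq_single j]
  · refine Finset.sum_congr rfl fun i _ => ?_
    simp only [if_true]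
    unfold gaF ga
    have e0 := hKg j
    have hK0 : 0 < K j := by
      rcases Nat.eq_zero_or_pos (K j) with h | h
      · rw [h] at e0; omega
      · exact h
    have hg0 : 0 < g j := by
      rcases Nat.eq_zero_or_pos (g j) with h | h
      · rw [h] at e0; omega
      · exact h
    have hKr : (0 : ℝ) < K j := by exact_mod_cast hK0
    have hgr : (0 : ℝ) < g j := by exact_mod_cast hg0
    have eL : (L : ℝ) = K j * (2 * g j) := by rw [← e0]; push_cast; ring
    have hLr : (L : ℝ) ≠ 0 := by exact_mod_cast hL.ne'
    congr 1
    apply propext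
    simp only [embN, emb]
    rw [proj_val hL (hx _)]
    have e1 : ((x (⟨j, i⟩, false) : ℕ) : ℝ) / L * (2 * g j) = x (⟨j, i⟩, false) / K j := by
      rw [eL]; field_simp
    rw [e1, le_div_iff₀ hKr, div_lt_iff₀ hKr, one_mul]
    refine and_congr ?_ (and_congr (by norm_cast) (by norm_cast))
    rw [Subtype.ext_iff, proj_val hL (hx _), Set.Icc.coe_one, div_eq_one_iff_eq hLr]
    norm_cast
  · intro j' _ hj'
    simp [hj']
  · simp

theorem lower (n g : Fin k → ℕ) (hg : ∀ j, 1 ≤ g j) (r : ℕ) (h : catLE (XX n g) r) : 2 * ∑ j, n j ≤ r := by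
  by_contra hr
  push Not at hr
  set N := ∑ j, n j with hN
  have hN0 : 0 < N := by omega
  obtain ⟨U, hUo, hUc, hUn⟩ := h
  have o : AIdx n ≃ Fin N := Fintype.equivFinOfCardEq (by
    unfold AIdx
    simp [hN])
  let jj : ℕ → Fin k := fun t => if h : t / 2 < N then (o.symm ⟨t / 2, h⟩).1 else (o.symm ⟨0, hN0⟩).1
  have hjj : ∀ m, jj (2 * m + 1) = jj (2 * m) := by
    intro m
    simp only [jj, show (2 * m + 1) / 2 = m by omega, show 2 * m / 2 = m by omega]
  have hjo : ∀ a, jj (2 * o a) = a.1 := by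
    intro a
    simp only [jj, show 2 * (o a : ℕ) / 2 = o a by omega]
    rw [dif_pos (o a).2]
    simp
  choose ct hct using fun t : ℕ => L1 n g hg (jj t) (U ⟨min t r, by omega⟩) (hUn _)
  obtain ⟨δ, hδ, hball⟩ := lebesgue_number_lemma_of_metric (isCompact_univ (X := AIdx n → I × I))
    (c := fun i => pp n g ⁻¹' U i) (fun i => (hUo i).preimage (continuous_pp n g)) (by
      intro z _
      have : pp n g z ∈ ⋃ i, U i := by rw [hUc]; trivial
      simpa using this)
  obtain ⟨m, hm⟩ := exists_nat_one_div_lt hδ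
  let L := 4 * (m + 1) * ∏ j, g j
  have hq : ∀ j, ∃ q, ∏ j, g j = g j * q := fun j => Finset.dvd_prod_of_mem g (Finset.mem_univ j)
  choose q hq using hq
  let K : Fin k → ℕ := fun j => 2 * (m + 1) * q j
  have hKg : ∀ c, K c * (2 * g c) = L := by
    intro c
    simp only [K, L]
    rw [hq c]; ring
  have hP : 0 < ∏ j, g j := Finset.prod_pos fun j _ => hg j
  have hL0 : 0 < L := by positivity
  have hLm : m + 1 ≤ L := by
    simp only [L]; nlinarith
  have hL2 : L % 2 = 0 := by
    simp only [L]
    rw [show 4 * (m + 1) * ∏ j, g j = 2 * (2 * (m + 1) * ∏ j, g j) by ring]; omega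
  have hK2 : ∀ c, K c % 2 = 0 := by
    intro c
    simp only [K]
    rw [mul_assoc]; omega
  obtain ⟨w, hw⟩ := L2 (L := L) hN0 (col := (Sigma.fst : AIdx n → Fin k)) (K := K) (g := g) (jj := jj) o hL2 hL0 hK2 hg hKg
    hjj hjo (fun t x => ct t (pp n g (embN n L x)))
    (fun t f x hf => by rw [pp_embN_perm n g L f hf])
    (fun t x x' hx hx' h => by rw [pp_Rw3 n g hL0 h])
    (fun t x x' a p hp hx hx' h => by rw [pp_Rw4 n g hL0 hKg hx hx' hp h])
  obtain ⟨i, hi⟩ := hball (embN n L (vtx w 0)) trivial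
  have hi2 : (i : ℕ) < N * 2 := by have := i.2; omega
  apply hw i hi2
  rw [← ggF_embN n g hL0 hKg (vtx_le hL2 w _), ← ggF_embN n g hL0 hKg (vtx_le hL2 w _)]
  let y0 : AIdx n × Bool → ℝ := fun y => (vtx w 0 y : ℝ)
  have hmem : ∀ b, embN n L (vtx w b) ∈ emb n L '' Metric.closedBall y0 1 := by
    intro b
    refine ⟨_, ?_, rfl⟩
    rw [Metric.mem_closedBall, dist_pi_le_iff zero_le_one]
    intro y
    simp only [y0]
    rw [Real.dist_eq, abs_le]
    have h1 : vtx w b y ≤ vtx w 0 y + 1 ∧ vtx w 0 y ≤ vtx w b y + 1 := by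
      simp only [vtx, oddE, evenE]
      split_ifs <;> omega
    have h2 : (vtx w b y : ℝ) ≤ vtx w 0 y + 1 := by exact_mod_cast h1.1
    have h3 : (vtx w 0 y : ℝ) ≤ vtx w b y + 1 := by exact_mod_cast h1.2
    constructor <;> linarith
  refine hct i _ (((convex_closedBall y0 1).isPreconnected).image _ (continuous_emb n L).continuousOn) ?_
    _ (hmem _) _ (hmem _)
  rintro _ ⟨y, hy, rfl⟩
  have : emb n L y ∈ Metric.ball (embN n L (vtx w 0)) δ := by
    rw [Metric.mem_ball]
    refine (dist_emb n L hL0 y y0).trans_lt ?_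
    refine lt_of_le_of_lt ?_ hm
    have : ((m : ℝ) + 1) ≤ L := by exact_mod_cast hLm
    rw [Metric.mem_closedBall] at hy
    gcongr
  have h2 := hi this
  have e : (⟨min (i : ℕ) r, by omega⟩ : Fin (r + 1)) = i := Fin.ext (by have := i.2; simp; omega)
  rw [e]
  exact h2

end geom

end

section
open Topology

lemma LScat_XX {k : ℕ} (n g : Fin k → ℕ) (hg : ∀ j, 1 ≤ g j) :
    LScat (∀ j : Fin k, SP (n j) (Ng (g j))) = ((2 * ∑ j, n j : ℕ) : ℕ∞) := by
  unfold LScat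
  apply le_antisymm
  · exact sInf_le ⟨_, upper n g hg, rfl⟩
  · refine le_sInf ?_
    rintro c ⟨r, hr, rfl⟩
    exact_mod_cast lower n g hg r hr

lemma catLE_homeo {X Y : Type} [TopologicalSpace X] [TopologicalSpace Y] (e : X ≃ₜ Y) {r : ℕ}
    (h : catLE X r) : catLE Y r := by
  obtain ⟨U, h1, h2, h3⟩ := h
  refine ⟨fun i => e.symm ⁻¹' U i, fun i => (h1 i).preimage e.symm.continuous, ?_, fun i => ?_⟩
  · rw [← Set.preimage_iUnion, h2, Set.preimage_univ]
  · let f : C(e.symm ⁻¹' U i, U i) := ⟨fun y => ⟨e.symm y, y.2⟩, by fun_prop⟩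
    have : inclMap (e.symm ⁻¹' U i) = ((e : C(X, Y)).comp (inclMap (U i))).comp f := by
      ext y
      simp [inclMap, f]
    rw [this]
    exact ((h3 i).comp_right _).comp_left _

lemma LScat_homeo {X Y : Type} [TopologicalSpace X] [TopologicalSpace Y] (e : X ≃ₜ Y) :
    LScat X = LScat Y := by
  unfold LScat
  congr 1
  ext c
  exact exists_congr fun r => and_congr_left fun _ => ⟨catLE_homeo e, catLE_homeo e.symm⟩

lemma LScat_SP (n g : ℕ) (hg : 1 ≤ g) : LScat (SP n (Ng g)) = ((2 * n : ℕ) : ℕ∞) := by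
  have h := LScat_XX (k := 1) (fun _ => n) (fun _ => g) fun _ => hg
  rw [← LScat_homeo (Homeomorph.funUnique (Fin 1) (SP n (Ng g)))]
  simpa using h

end

/-- The family `{SPⁿ(N_g)}` is LS-logarithmic; in particular
`cat((SPⁿ(N_g))ᵐ) = m·cat(SPⁿ(N_g)) = 2mn`. -/
theorem lsLogarithmic_SP_nonorientableSurfaces :
    (∀ (k : ℕ), 1 ≤ k → ∀ n g : Fin k → ℕ, (∀ j, 1 ≤ n j) → (∀ j, 1 ≤ g j) →
      LScat (∀ j : Fin k, SP (n j) (Ng (g j)))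
        = ∑ j : Fin k, LScat (SP (n j) (Ng (g j)))) ∧
    (∀ m n g : ℕ, 1 ≤ m → 1 ≤ n → 1 ≤ g →
      LScat (Fin m → SP n (Ng g)) = (m : ℕ∞) * LScat (SP n (Ng g)) ∧
      LScat (Fin m → SP n (Ng g)) = ((2 * m * n : ℕ) : ℕ∞)) := by
  refine ⟨fun k _ n g _ hg => ?_, fun m n g _ _ hg => ?_⟩
  · rw [LScat_XX n g hg, Finset.sum_congr rfl fun j _ => LScat_SP (n j) (g j) (hg j), Finset.mul_sum]
    push_cast
    rfl
  · have h := LScat_XX (k := m) (fun _ => n) (fun _ => g) fun _ => hg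
    have e : LScat (Fin m → SP n (Ng g)) = ((2 * m * n : ℕ) : ℕ∞) := by
      rw [h]
      simp [mul_assoc]
    refine ⟨?_, e⟩
    rw [e, LScat_SP n g hg]
    push_cast
    ring

end
end

section
/- Let A be a commutative ℚ-algebra, and let m ≥ 2 and n ≥ 1 be integers. Suppose x_1,…,x_{2n} ∈ A satisfy x_j² = 0 for each j and x_1x_2⋯x_{2n} ≠ 0. Then in the m-fold tensor power A^{⊗m} over ℚ, the product ∏_{j=1}^{2n} (x̄_j)^m equals ((m−1)·m!)^{2n} · (x_1x_2⋯x_{2n})^{⊗m}, and in particular this element is nonzero. -/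
open scoped unitInterval Topology
open MeasureTheory
noncomputable section

/-- The `m`-fold tensor power `A^{⊗m}` of a `ℚ`-algebra `A` over `ℚ`. -/
abbrev TPow (A : Type*) [CommRing A] [Algebra ℚ A] (m : ℕ) : Type _ :=
  PiTensorProduct ℚ (fun _ : Fin m => A)

/-- The `i`-th inclusion `ιᵢ : A → A^{⊗m}`, `a ↦ 1 ⊗ ⋯ ⊗ a ⊗ ⋯ ⊗ 1`
(with `a` in position `i`). -/
def iota {A : Type*} [CommRing A] [Algebra ℚ A] {m : ℕ} (i : Fin m) (a : A) : TPow A m :=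
  PiTensorProduct.tprod ℚ (Function.update (fun _ => (1 : A)) i a)

/-- `ā = Σ_{i=1}^{m-1} ιᵢ(a) - (m-1)·ιₘ(a) ∈ A^{⊗m}` (indices `0,…,m-1`: coefficient `1`
for `i < m-1` and `-(m-1)` for the last index). -/
def abar {A : Type*} [CommRing A] [Algebra ℚ A] {m : ℕ} (a : A) : TPow A m :=
  ∑ i : Fin m, (if (i : ℕ) = m - 1 then -((m : ℤ) - 1) else 1) • iota i a

/-- The pure tensor `a^{⊗m} = a ⊗ a ⊗ ⋯ ⊗ a ∈ A^{⊗m}`. -/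
def tpowEl {A : Type*} [CommRing A] [Algebra ℚ A] (m : ℕ) (a : A) : TPow A m :=
  PiTensorProduct.tprod ℚ (fun _ : Fin m => a)

theorem sum_pow_card_sq_zero {R ι : Type*} [CommRing R] (s : Finset ι) (y : ι → R)
    (hy : ∀ i, y i ^ 2 = 0) :
    (∑ i ∈ s, y i) ^ s.card = (s.card.factorial : R) * ∏ i ∈ s, y i := by
  classical
  induction s using Finset.induction_on with
  | empty => simp
  | insert a s ha ih =>
    have key : (∑ i ∈ s, y i) ^ (s.card + 1) = 0 := by
      rw [pow_succ, ih, mul_assoc, Finset.mul_sum, Finset.sum_eq_zero, mul_zero]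
      intro i hi
      rw [← Finset.mul_prod_erase s y hi]
      linear_combination (∏ j ∈ s.erase i, y j) * hy i
    have bin : ∀ (a b : R) (k : ℕ), a ^ 2 = 0 →
        (a + b) ^ (k + 1) = b ^ (k + 1) + (k + 1) * a * b ^ k := by
      intro a b k h
      induction k with
      | zero => simp; ring
      | succ k ih =>
        rw [pow_succ, ih]
        push_cast
        linear_combination ((k : R) + 1) * b ^ k * h
    rw [Finset.card_insert_of_notMem ha, Finset.sum_insert ha, Finset.prod_insert ha,
      bin _ _ _ (hy a), key, ih, Nat.factorial_succ]
    push_cast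
    ring

theorem tpowEl_mulHom_prod {A : Type*} [CommRing A] [Algebra ℚ A] {m : ℕ} {κ : Type*}
    (s : Finset κ) (f : κ → Fin m → A) :
    ∏ k ∈ s, (PiTensorProduct.tprod ℚ (f k) : TPow A m)
      = PiTensorProduct.tprod ℚ (∏ k ∈ s, f k) := by
  classical
  induction s using Finset.induction_on with
  | empty => simp; rfl
  | insert a s ha ih =>
    rw [Finset.prod_insert ha, Finset.prod_insert ha, ih, PiTensorProduct.tprod_mul_tprod]

theorem prod_iota {A : Type*} [CommRing A] [Algebra ℚ A] {m : ℕ} (a : A) :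
    ∏ i : Fin m, (iota i a : TPow A m) = tpowEl m a := by
  unfold iota tpowEl
  rw [tpowEl_mulHom_prod]
  congr 1
  exact Finset.univ_prod_mulSingle (fun _ : Fin m => a)

theorem iota_sq {A : Type*} [CommRing A] [Algebra ℚ A] {m : ℕ} (i : Fin m) (a : A)
    (h : a ^ 2 = 0) : (iota i a : TPow A m) ^ 2 = 0 := by
  unfold iota
  rw [sq, PiTensorProduct.tprod_mul_tprod]
  apply (PiTensorProduct.tprod ℚ).map_coord_zero i
  simp [← sq, h]

theorem abar_pow {A : Type*} [CommRing A] [Algebra ℚ A] {m : ℕ} (hm : 2 ≤ m) (a : A)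
    (h : a ^ 2 = 0) : (abar a : TPow A m) ^ m
      = - ((((m - 1) * Nat.factorial m : ℕ) : TPow A m) * tpowEl m a) := by
  have := sum_pow_card_sq_zero (R := TPow A m) Finset.univ (fun i : Fin m =>
    (if (i : ℕ) = m - 1 then -((m : ℤ) - 1) else 1) • iota i a) (by
      intro i
      rw [smul_pow, iota_sq i a h, smul_zero])
  rw [Finset.card_univ, Fintype.card_fin] at this
  unfold abar
  rw [this]
  have e : ∏ i : Fin m, ((if (i : ℕ) = m - 1 then -((m : ℤ) - 1) else 1) • (iota i a : TPow A m))
      = (-((m : ℤ) - 1)) • tpowEl m a := by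
    rw [← prod_iota, Finset.prod_smul]
    congr 1
    rw [Finset.prod_eq_single (⟨m - 1, by omega⟩ : Fin m)]
    · simp
    · intro b _ hb
      rw [if_neg]
      intro h'
      exact hb (Fin.ext h')
    · simp
  rw [e, zsmul_eq_mul]
  push_cast [Nat.cast_sub (show 1 ≤ m by omega)]
  ring

theorem tpowEl_ne_zero {A : Type*} [CommRing A] [Algebra ℚ A] (m : ℕ) (a : A)
    (h : a ≠ 0) : tpowEl m a ≠ 0 := by
  obtain ⟨f, hf⟩ : ∃ f : A →ₗ[ℚ] ℚ, f a ≠ 0 := by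
    by_contra! hc
    exact h ((Module.forall_dual_apply_eq_zero_iff ℚ a).1 hc)
  intro h0
  have := congrArg (PiTensorProduct.lift
    ((MultilinearMap.mkPiAlgebra ℚ (Fin m) ℚ).compLinearMap (fun _ => f))) h0
  unfold tpowEl at this
  rw [PiTensorProduct.lift.tprod] at this
  simp at this
  exact hf this.1

/-- If `x₁,…,x_{2n}` square to zero and have nonzero product, then in `A^{⊗m}` the
product `∏ⱼ (x̄ⱼ)ᵐ` equals `((m-1)·m!)^{2n} · (x₁⋯x_{2n})^{⊗m} ≠ 0`. -/
theorem prod_abar_pow_eq {A : Type*} [CommRing A] [Algebra ℚ A] (m n : ℕ)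
    (hm : 2 ≤ m) (hn : 1 ≤ n)
    (x : Fin (2 * n) → A) (hx : ∀ j, x j ^ 2 = 0) (hprod : (∏ j, x j) ≠ 0) :
    (∏ j, (abar (m := m) (x j)) ^ m)
        = ((((m - 1) * Nat.factorial m) ^ (2 * n) : ℕ) : TPow A m) * tpowEl m (∏ j, x j)
      ∧ (∏ j, (abar (m := m) (x j)) ^ m) ≠ 0 := by
  have key : (∏ j, (abar (m := m) (x j)) ^ m)
        = ((((m - 1) * Nat.factorial m) ^ (2 * n) : ℕ) : TPow A m) * tpowEl m (∏ j, x j) := by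
    have e : tpowEl m (∏ j, x j) = ∏ j, tpowEl m (x j) := by
      unfold tpowEl
      rw [tpowEl_mulHom_prod]
      congr 1
      ext i
      simp
    rw [e, Finset.prod_congr rfl (fun j _ => abar_pow hm (x j) (hx j))]
    rw [Finset.prod_neg, Finset.prod_mul_distrib]
    simp
  refine ⟨key, ?_⟩
  rw [key, ← nsmul_eq_mul, ← Nat.cast_smul_eq_nsmul ℚ]
  refine smul_ne_zero ?_ (tpowEl_ne_zero m _ hprod)
  have h1 : m - 1 ≠ 0 := by omega
  exact_mod_cast pow_ne_zero _ (mul_ne_zero h1 (Nat.factorial_ne_zero m))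

end
end

section
/- Let A be a commutative ℚ-algebra, and let m ≥ 2, ℓ ≥ 1 and g ≥ 0 be integers. Suppose x_1,…,x_{2g}, c ∈ A satisfy x_j² = 0 for each j; set P = x_1x_2⋯x_{2g} (with P = 1 when g = 0), and assume P·c^ℓ ≠ 0 while P·c^{ℓ+k} = 0 for every integer k ≥ 1. Then in the m-fold tensor power A^{⊗m} over ℚ, the product (∏_{j=1}^{2g} (x̄_j)^m)·(c̄)^{mℓ} equals (−1)^ℓ · (m−1)^{2g+ℓ} · (m!)^{2g} · ((mℓ)!/(ℓ!)^m) · (P·c^ℓ)^{⊗m}, and in particular this element is nonzero. -/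
open scoped unitInterval Topology
open MeasureTheory
noncomputable section

lemma gen_pow {R : Type*} [CommRing R] (m l : ℕ) (w y : Fin m → R) (Q : R)
    (h : ∀ i k, l < k → Q * y i ^ k = 0) :
    Q * (∑ i, w i * y i) ^ (m * l) =
      ((Nat.factorial (m * l) / Nat.factorial l ^ m : ℕ) : R) * (∏ i, w i) ^ l * (Q * ∏ i, y i ^ l) := by
  classical
  rw [Finset.sum_pow_eq_sum_piAntidiag, Finset.mul_sum,
    Finset.sum_eq_single (fun _ => l)]
  · simp only [Nat.multinomial, Finset.sum_const, Finset.prod_const, Finset.card_univ,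
      Fintype.card_fin, smul_eq_mul, mul_pow, Finset.prod_mul_distrib, Finset.prod_pow]
    ring
  · intro k hk hne
    rw [Finset.mem_piAntidiag] at hk
    have : ∃ i, l < k i := by
      by_contra hcon
      push Not at hcon
      apply hne
      have h1 : ∑ i, k i = ∑ i : Fin m, l := by simpa using hk.1
      have := (Finset.sum_eq_sum_iff_of_le (fun i _ => hcon i)).1 h1
      funext i
      exact this i (Finset.mem_univ i)
    obtain ⟨i, hi⟩ := this
    rw [← Finset.mul_prod_erase _ _ (Finset.mem_univ i), mul_pow]
    linear_combination ((Nat.multinomial Finset.univ k : R) * w i ^ k i *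
      ∏ x ∈ Finset.univ.erase i, (w x * y x) ^ k x) * h i (k i) hi
  · intro hk
    exact absurd (by simp [Finset.mem_piAntidiag]) hk

section
variable {A : Type*} [CommRing A] [Algebra ℚ A] {m : ℕ}

lemma iota_mul' (i : Fin m) (a b : A) : iota i (a * b) = iota i a * iota i b := by
  unfold iota
  rw [PiTensorProduct.tprod_mul_tprod]
  congr 1
  funext j
  by_cases h : j = i
  · subst h; simp
  · simp [h]

lemma iota_one' (i : Fin m) : iota i (1 : A) = 1 := by
  unfold iota
  rw [PiTensorProduct.one_def]
  congr 1
  funext j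
  by_cases h : j = i
  · subst h; simp
  · simp [h]

lemma iota_zero' (i : Fin m) : iota i (0 : A) = 0 := by
  unfold iota
  exact (PiTensorProduct.tprod ℚ).map_coord_zero i (by simp)

def iotaHom (i : Fin m) : A →* TPow A m where
  toFun := iota i
  map_one' := iota_one' i
  map_mul' := iota_mul' i

lemma tpowEl_eq (a : A) : tpowEl m a = ∏ i, iotaHom i a := by
  have h : ∀ s : Finset (Fin m), ∏ i ∈ s, iotaHom i a
      = PiTensorProduct.tprod ℚ (fun j => if j ∈ s then a else 1) := by
    classical
    intro s
    induction s using Finset.induction_on with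
    | empty => simp; rfl
    | insert i s hi ih =>
      rw [Finset.prod_insert hi, ih]
      change iota i a * _ = _
      unfold iota
      rw [PiTensorProduct.tprod_mul_tprod]
      congr 1
      funext j
      by_cases h : j = i
      · subst h; simp [hi]
      · simp [h]
  rw [h]; simp [tpowEl]

lemma tpowEl_ne (a : A) (ha : a ≠ 0) : tpowEl m a ≠ 0 := by
  intro h
  have : ∃ f : Module.Dual ℚ A, f a ≠ 0 := by
    by_contra hc
    push Not at hc
    exact ha ((Module.forall_dual_apply_eq_zero_iff ℚ a).1 hc)
  obtain ⟨f, hf⟩ := this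
  have := congrArg (PiTensorProduct.lift
    ((MultilinearMap.mkPiAlgebra ℚ (Fin m) ℚ).compLinearMap (fun _ => f))) h
  simp [tpowEl] at this
  exact hf this.1

def wt (m : ℕ) (R : Type*) [CommRing R] (i : Fin m) : R :=
  ((if (i : ℕ) = m - 1 then -((m : ℤ) - 1) else 1 : ℤ) : R)

lemma prod_wt (hm : 2 ≤ m) (R : Type*) [CommRing R] :
    ∏ i, wt m R i = - ((m - 1 : ℕ) : R) := by
  obtain ⟨n, rfl⟩ : ∃ n, m = n + 1 := ⟨m - 1, by omega⟩
  rw [Fin.prod_univ_castSucc, Finset.prod_eq_one]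
  · simp [wt]
  · intro i _
    have := i.2
    simp [wt, this.ne]

lemma abar_eq (a : A) : abar (m := m) a = ∑ i, wt m (TPow A m) i * iotaHom i a := by
  unfold abar
  refine Finset.sum_congr rfl fun i _ => ?_
  rw [zsmul_eq_mul]; rfl

end

/-- With `xⱼ² = 0`, `P = x₁⋯x_{2g}`, `P·c^ℓ ≠ 0` and `P·c^{ℓ+k} = 0` for `k ≥ 1`, one has
`(∏ⱼ (x̄ⱼ)ᵐ)·(c̄)^{mℓ} = (-1)^ℓ (m-1)^{2g+ℓ} (m!)^{2g} ((mℓ)!/(ℓ!)^m) · (P·c^ℓ)^{⊗m} ≠ 0`. -/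
theorem prod_abar_pow_mul_cbar_pow_eq {A : Type*} [CommRing A] [Algebra ℚ A]
    (m ℓ g : ℕ) (hm : 2 ≤ m) (hl : 1 ≤ ℓ)
    (x : Fin (2 * g) → A) (c : A) (hx : ∀ j, x j ^ 2 = 0)
    (hne : (∏ j, x j) * c ^ ℓ ≠ 0)
    (hvan : ∀ k : ℕ, 1 ≤ k → (∏ j, x j) * c ^ (ℓ + k) = 0) :
    (∏ j, (abar (m := m) (x j)) ^ m) * (abar (m := m) c) ^ (m * ℓ)
        = (-1 : TPow A m) ^ ℓ * (((m - 1) ^ (2 * g + ℓ) : ℕ) : TPow A m)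
            * ((Nat.factorial m ^ (2 * g) : ℕ) : TPow A m)
            * ((Nat.factorial (m * ℓ) / Nat.factorial ℓ ^ m : ℕ) : TPow A m)
            * tpowEl m ((∏ j, x j) * c ^ ℓ)
      ∧ (∏ j, (abar (m := m) (x j)) ^ m) * (abar (m := m) c) ^ (m * ℓ) ≠ 0 := by
  have key : (∏ j, (abar (m := m) (x j)) ^ m) * (abar (m := m) c) ^ (m * ℓ)
        = (-1 : TPow A m) ^ ℓ * (((m - 1) ^ (2 * g + ℓ) : ℕ) : TPow A m)
            * ((Nat.factorial m ^ (2 * g) : ℕ) : TPow A m)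
            * ((Nat.factorial (m * ℓ) / Nat.factorial ℓ ^ m : ℕ) : TPow A m)
            * tpowEl m ((∏ j, x j) * c ^ ℓ) := by
    have h1 : ∀ j, (abar (m := m) (x j)) ^ m
        = ((Nat.factorial m : ℕ) : TPow A m) * (-((m - 1 : ℕ) : TPow A m))
          * ∏ i, iotaHom i (x j) := by
      intro j
      have := gen_pow m 1 (wt m (TPow A m)) (fun i => iotaHom i (x j)) 1 (by
        intro i k hk
        obtain ⟨n, rfl⟩ : ∃ n, k = 2 + n := ⟨k - 2, by omega⟩
        rw [← map_pow, pow_add, hx, zero_mul, one_mul]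
        exact iota_zero' i)
      rw [← abar_eq, prod_wt hm] at this
      simpa using this
    have h2 : ∏ j, (abar (m := m) (x j)) ^ m
        = ((Nat.factorial m : ℕ) : TPow A m) ^ (2 * g) * (((m - 1 : ℕ) : TPow A m)) ^ (2 * g)
          * ∏ i, iotaHom i (∏ j, x j) := by
      rw [Finset.prod_congr rfl fun j _ => h1 j, Finset.prod_mul_distrib, Finset.prod_comm]
      simp only [map_prod, Finset.prod_const, Finset.card_univ, Fintype.card_fin, mul_pow]
      rw [Even.neg_pow (even_two_mul g)]
    have h3 := gen_pow m ℓ (wt m (TPow A m)) (fun i => iotaHom i c)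
      (∏ i, iotaHom i (∏ j, x j)) (by
        intro i k hk
        obtain ⟨n, rfl⟩ : ∃ n, k = ℓ + n := ⟨k - ℓ, by omega⟩
        have h0 : iotaHom (m := m) i (∏ j, x j) * iotaHom i c ^ (ℓ + n) = 0 := by
          rw [← map_pow, ← map_mul, hvan n (by omega)]
          exact iota_zero' i
        rw [← Finset.mul_prod_erase _ _ (Finset.mem_univ i), mul_right_comm, h0, zero_mul])
    rw [← abar_eq, prod_wt hm] at h3
    rw [h2, mul_assoc, h3, tpowEl_eq]
    simp only [map_mul, map_pow, Finset.prod_mul_distrib]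
    rw [neg_pow]
    push_cast
    ring
  refine ⟨key, ?_⟩
  rw [key]
  have hq : (-1 : TPow A m) ^ ℓ * (((m - 1) ^ (2 * g + ℓ) : ℕ) : TPow A m)
            * ((Nat.factorial m ^ (2 * g) : ℕ) : TPow A m)
            * ((Nat.factorial (m * ℓ) / Nat.factorial ℓ ^ m : ℕ) : TPow A m)
            * tpowEl m ((∏ j, x j) * c ^ ℓ)
      = ((-1 : ℚ) ^ ℓ * (((m - 1) ^ (2 * g + ℓ) : ℕ) : ℚ)
            * ((Nat.factorial m ^ (2 * g) : ℕ) : ℚ)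
            * ((Nat.factorial (m * ℓ) / Nat.factorial ℓ ^ m : ℕ) : ℚ))
            • tpowEl m ((∏ j, x j) * c ^ ℓ) := by
    rw [Algebra.smul_def]
    simp only [map_mul, map_pow, map_neg, map_one, map_natCast]
  rw [hq]
  refine smul_ne_zero ?_ (tpowEl_ne _ hne)
  have hdiv : Nat.factorial (m * ℓ) / Nat.factorial ℓ ^ m ≠ 0 := by
    have : Nat.factorial ℓ ^ m ∣ Nat.factorial (m * ℓ) := by
      have := Nat.prod_factorial_dvd_factorial_sum (Finset.univ : Finset (Fin m)) (fun _ => ℓ)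
      simpa using this
    exact (Nat.div_pos (Nat.le_of_dvd (Nat.factorial_pos _) this)
      (pow_pos (Nat.factorial_pos _) _)).ne'
  have hm1 : m - 1 ≠ 0 := by omega
  refine mul_ne_zero (mul_ne_zero (mul_ne_zero (by simp) ?_) ?_) (Nat.cast_ne_zero.2 hdiv)
  · exact Nat.cast_ne_zero.2 (pow_ne_zero _ hm1)
  · exact Nat.cast_ne_zero.2 (pow_ne_zero _ (Nat.factorial_ne_zero m))

end
end

section
/- Let R be a commutative ring, m ≥ 2 an integer, and x_1,…,x_m ∈ R elements with x_i² = 0 for each i. Then (x_1 + x_2 + ⋯ + x_{m−1} − (m−1)·x_m)^m = −(m−1)·m!·x_1x_2⋯x_m. -/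
theorem sqz_add_pow {R : Type*} [CommRing R] (a S : R) (ha : a ^ 2 = 0) (n : ℕ) :
    (S + a) ^ (n + 1) = S ^ (n + 1) + (n + 1) * a * S ^ n := by
  induction n with
  | zero => simp
  | succ n ih =>
    rw [pow_succ, ih]
    push_cast
    linear_combination ((n : R) + 1) * S ^ n * ha

theorem sqz_sum_pow {R : Type*} [CommRing R] (n : ℕ) (x : Fin n → R) (hx : ∀ i, x i ^ 2 = 0) :
    (∑ i, x i) ^ n = (n.factorial : R) * ∏ i, x i ∧ (∑ i, x i) ^ (n + 1) = 0 := by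
  induction n with
  | zero => simp
  | succ n ih =>
    obtain ⟨h1, h2⟩ := ih (fun i => x i.castSucc) (fun i => hx _)
    rw [Fin.sum_univ_castSucc, Fin.prod_univ_castSucc, sqz_add_pow _ _ (hx _),
      sqz_add_pow _ _ (hx _), pow_succ _ (n + 1), h2, h1, Nat.factorial_succ]
    constructor
    · push_cast
      ring
    · simp

open scoped unitInterval Topology
open MeasureTheory
noncomputable section

/-- In a commutative ring, if `xᵢ² = 0` for all `i`, then
`(x₁ + ⋯ + x_{m-1} - (m-1)xₘ)ᵐ = -(m-1)·m!·x₁x₂⋯xₘ`. -/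
theorem pow_sum_sq_zero_eq {R : Type*} [CommRing R] (m : ℕ) (hm : 2 ≤ m)
    (x : Fin m → R) (hx : ∀ i, x i ^ 2 = 0) :
    ((∑ i ∈ Finset.univ.filter (fun i : Fin m => (i : ℕ) < m - 1), x i)
        - (m - 1 : ℕ) • x (⟨m - 1, by omega⟩ : Fin m)) ^ m
      = -(((m - 1) * Nat.factorial m : ℕ) : R) * ∏ i, x i := by
  obtain ⟨n, rfl⟩ : ∃ n, m = n + 1 := ⟨m - 1, by omega⟩
  obtain ⟨h1, h2⟩ := sqz_sum_pow n (fun i => x i.castSucc) (fun i => hx _)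
  have hs : (∑ i ∈ Finset.univ.filter (fun i : Fin (n + 1) => (i : ℕ) < n + 1 - 1), x i)
      = ∑ i : Fin n, x i.castSucc := by
    rw [Finset.sum_filter, Fin.sum_univ_castSucc]
    simp
  have hl : (⟨n + 1 - 1, by omega⟩ : Fin (n + 1)) = Fin.last n := rfl
  rw [hs, hl, sub_eq_add_neg, sqz_add_pow, h2, h1, Fin.prod_univ_castSucc, Nat.factorial_succ]
  · simp only [Nat.add_sub_cancel, nsmul_eq_mul]
    push_cast
    ring
  · rw [neg_sq, nsmul_eq_mul, mul_pow, hx, mul_zero]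

end
end
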